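/- arXiv:1605.03558 — 2 statements merged into one kernel-verified Lean document; each statement's English description precedes it below -/
import Mathlib

section
/- Let n ≥ 1 and let Ω ⊂ ℝⁿ be a bounded domain. Assume the standing hypotheses on f and V, with f moreover of class C² and convex on [0,∞) and with 1 < p < p_S. Let T > 0 and let u be a nonnegative classical solution of u_t = Δu + V(x)f(u) on (0,T)×Ω with ∂_t u ≥ 0 everywhere. Let x₀ ∈ Ω satisfy V(x₀) = 0 and assume that the connected component of {x ∈ closure(Ω) : V(x) = 0} containing x₀ does not intersect ∂Ω. If x₀ is a blowup point of u, then blowup is of type I near x₀: there exist M > 0 and ρ > 0 with B(x₀,ρ) ⊆ Ω such that u(t,x) ≤ M(T−t)^{−α} for all (t,x) ∈ (0,T)×B(x₀,ρ). -/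
open Set Metric Filter

noncomputable def lap {n : ℕ} (g : EuclideanSpace ℝ (Fin n) → ℝ)
    (x : EuclideanSpace ℝ (Fin n)) : ℝ :=
  ∑ i : Fin n, fderiv ℝ (fun y => fderiv ℝ g y (EuclideanSpace.single i 1)) x
    (EuclideanSpace.single i 1)

/-- `γ` is twice differentiable at `0` with first and second derivative `a`, `b`. -/
def H2 (γ : ℝ → ℝ) (a b : ℝ) : Prop :=
  ∃ γ1 : ℝ → ℝ, (∀ᶠ r in nhds (0:ℝ), HasDerivAt γ (γ1 r) r) ∧ γ1 0 = a ∧ HasDerivAt γ1 b 0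

theorem H2.add {γ η : ℝ → ℝ} {a b c d : ℝ} (h : H2 γ a b) (k : H2 η c d) :
    H2 (fun r => γ r + η r) (a + c) (b + d) := by
  obtain ⟨g, h1, h2, h3⟩ := h
  obtain ⟨e, k1, k2, k3⟩ := k
  refine ⟨fun r => g r + e r, ?_, by simp [h2, k2], h3.add k3⟩
  filter_upwards [h1, k1] with r hr kr
  exact hr.add kr

theorem H2.const_mul {γ : ℝ → ℝ} {a b : ℝ} (c : ℝ) (h : H2 γ a b) :
    H2 (fun r => c * γ r) (c * a) (c * b) := by
  obtain ⟨g, h1, h2, h3⟩ := h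
  refine ⟨fun r => c * g r, ?_, by simp [h2], h3.const_mul c⟩
  filter_upwards [h1] with r hr
  exact hr.const_mul c

theorem H2.sub {γ η : ℝ → ℝ} {a b c d : ℝ} (h : H2 γ a b) (k : H2 η c d) :
    H2 (fun r => γ r - η r) (a - c) (b - d) := by
  obtain ⟨g, h1, h2, h3⟩ := h
  obtain ⟨e, k1, k2, k3⟩ := k
  refine ⟨fun r => g r - e r, ?_, by simp [h2, k2], h3.sub k3⟩
  filter_upwards [h1, k1] with r hr kr
  exact hr.sub kr

theorem H2.mul {γ η : ℝ → ℝ} {a b c d : ℝ} (h : H2 γ a b) (k : H2 η c d) :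
    H2 (fun r => γ r * η r) (a * η 0 + γ 0 * c) (b * η 0 + 2 * a * c + γ 0 * d) := by
  obtain ⟨g, h1, h2, h3⟩ := h
  obtain ⟨e, k1, k2, k3⟩ := k
  refine ⟨fun r => g r * η r + γ r * e r, ?_, by simp [h2, k2], ?_⟩
  · filter_upwards [h1, k1] with r hr kr
    exact hr.mul kr
  · have := (h3.mul k1.self_of_nhds).add (h1.self_of_nhds.mul k3)
    refine this.congr_deriv ?_
    rw [h2, k2]; ring

theorem H2.comp {γ : ℝ → ℝ} {a b : ℝ} (h : H2 γ a b) {F F1 : ℝ → ℝ} {F2 : ℝ}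
    (hF : ∀ᶠ s in nhds (γ 0), HasDerivAt F (F1 s) s) (hF1 : HasDerivAt F1 F2 (γ 0)) :
    H2 (fun r => F (γ r)) (F1 (γ 0) * a) (F2 * a ^ 2 + F1 (γ 0) * b) := by
  obtain ⟨g, h1, h2, h3⟩ := h
  have hc : ContinuousAt γ 0 := h1.self_of_nhds.continuousAt
  refine ⟨fun r => F1 (γ r) * g r, ?_, by simp [h2], ?_⟩
  · filter_upwards [h1, hc.eventually hF] with r hr kr
    exact kr.comp r hr
  · have := (hF1.comp (0:ℝ) h1.self_of_nhds).mul h3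
    refine this.congr_deriv ?_
    simp only [Function.comp, h2]; ring

theorem H2.congr {γ η : ℝ → ℝ} {a b : ℝ} (h : H2 γ a b) (k : η =ᶠ[nhds 0] γ) : H2 η a b := by
  obtain ⟨g, h1, h2, h3⟩ := h
  refine ⟨g, ?_, h2, h3⟩
  filter_upwards [h1, k.eventuallyEq_nhds] with r hr kr
  exact hr.congr_of_eventuallyEq kr

theorem H2.nonneg {γ : ℝ → ℝ} {a b : ℝ} (h : H2 γ a b) (hm : IsLocalMin γ 0) : 0 ≤ b := by
  obtain ⟨g, h1, h2, h3⟩ := h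
  by_contra hb
  push Not at hb
  have hd : deriv γ =ᶠ[nhds 0] g := h1.mono fun r hr => hr.deriv
  have hdd : HasDerivAt (deriv γ) b 0 := h3.congr_of_eventuallyEq hd
  have hmax : IsLocalMax γ 0 := isLocalMax_of_deriv_deriv_neg (by rw [hdd.deriv]; exact hb)
    hm.deriv_eq_zero h1.self_of_nhds.continuousAt
  have heq : γ =ᶠ[nhds 0] fun _ => γ 0 := by
    filter_upwards [hm, hmax] with r h1 h2 using le_antisymm h2 h1
  have h0 : deriv γ =ᶠ[nhds 0] fun _ => 0 := by
    filter_upwards [heq.eventuallyEq_nhds] with r hr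
    rw [hr.deriv_eq]; simp
  have := hdd.congr_of_eventuallyEq h0.symm
  have := this.unique (hasDerivAt_const (0:ℝ) (0:ℝ))
  linarith

theorem H2.of_contDiffAt {n : ℕ} {g : EuclideanSpace ℝ (Fin n) → ℝ}
    {x : EuclideanSpace ℝ (Fin n)} (hg : ContDiffAt ℝ 2 g x) (e : EuclideanSpace ℝ (Fin n)) :
    H2 (fun r : ℝ => g (x + r • e)) (fderiv ℝ g x e) (fderiv ℝ (fun y => fderiv ℝ g y e) x e) := by
  have hl : ∀ r : ℝ, HasDerivAt (fun r : ℝ => x + r • e) e r := by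
    intro r
    simpa using ((hasDerivAt_id r).smul_const e).const_add x
  have hc : Tendsto (fun r : ℝ => x + r • e) (nhds 0) (nhds x) := by
    have := (hl 0).continuousAt.tendsto
    simpa using this
  have hev : ∀ᶠ y in nhds x, DifferentiableAt ℝ g y := by
    have := hg.eventually (by simp)
    filter_upwards [this] with y hy using hy.differentiableAt (by simp)
  refine ⟨fun r => fderiv ℝ g (x + r • e) e, ?_, by simp, ?_⟩
  · filter_upwards [hc.eventually hev] with r hr
    exact hr.hasFDerivAt.comp_hasDerivAt r (hl r)
  · have h1 : ContDiffAt ℝ 1 (fderiv ℝ g) x := hg.fderiv_right (by norm_num)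
    have h2 : DifferentiableAt ℝ (fun y => fderiv ℝ g y e) x :=
      (h1.differentiableAt (by simp)).clm_apply (differentiableAt_const e)
    have h3 : HasFDerivAt (fun y => fderiv ℝ g y e) (fderiv ℝ (fun y => fderiv ℝ g y e) x)
      (x + (0:ℝ) • e) := by simpa using h2.hasFDerivAt
    exact h3.comp_hasDerivAt (0:ℝ) (hl 0)

/-- Parabolic minimum principle. -/
theorem min_principle {n : ℕ} (K : Set (EuclideanSpace ℝ (Fin n))) (hK : IsCompact K)
    (a b : ℝ) (J : ℝ → EuclideanSpace ℝ (Fin n) → ℝ) (lam : ℝ)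
    (hJ : ContinuousOn (fun z : ℝ × EuclideanSpace ℝ (Fin n) => J z.1 z.2) (Icc a b ×ˢ K))
    (hbd : ∀ t ∈ Icc a b, ∀ x ∈ K, J t x < 0 → a < t ∧ x ∈ interior K ∧
      ∃ d : ℝ, ∃ c c' : Fin n → ℝ, HasDerivAt (fun s => J s x) d t ∧
        (∀ i, H2 (fun r : ℝ => J t (x + r • EuclideanSpace.single i 1)) (c' i) (c i)) ∧
        lam * J t x < d - ∑ i, c i) :
    ∀ t ∈ Icc a b, ∀ x ∈ K, 0 ≤ J t x := by
  by_contra hcon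
  push Not at hcon
  obtain ⟨t1, ht1, x1, hx1, hneg⟩ := hcon
  have hcomp : IsCompact (Icc a b ×ˢ K) := isCompact_Icc.prod hK
  have hcont : ContinuousOn (fun z : ℝ × EuclideanSpace ℝ (Fin n) =>
      Real.exp (-lam * z.1) * J z.1 z.2) (Icc a b ×ˢ K) := by
    refine ContinuousOn.mul ?_ hJ
    fun_prop
  obtain ⟨⟨t, x⟩, ⟨ht, hx⟩, hmin⟩ := hcomp.exists_isMinOn ⟨(t1, x1), ht1, hx1⟩ hcont
  simp only at ht hx
  have hJneg : J t x < 0 := by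
    have h1 : Real.exp (-lam * t) * J t x ≤ Real.exp (-lam * t1) * J t1 x1 :=
      hmin (a := (t1, x1)) ⟨ht1, hx1⟩
    have h2 : Real.exp (-lam * t1) * J t1 x1 < 0 :=
      mul_neg_of_pos_of_neg (Real.exp_pos _) hneg
    have h3 := Real.exp_pos (-lam * t)
    by_contra h
    push Not at h
    have := mul_nonneg h3.le h
    linarith
  obtain ⟨hat, hint, d, c, c', hd, hc, hlt⟩ := hbd t ht x hx hJneg
  have hcn : ∀ i, 0 ≤ c i := by
    intro i
    refine (hc i).nonneg ?_
    have hl : Tendsto (fun r : ℝ => x + r • (EuclideanSpace.single i 1 : EuclideanSpace ℝ (Fin n)))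
        (nhds 0) (nhds x) := by
      have : Continuous (fun r : ℝ => x + r • (EuclideanSpace.single i 1 :
        EuclideanSpace ℝ (Fin n))) := by fun_prop
      simpa using this.tendsto 0
    filter_upwards [hl (mem_interior_iff_mem_nhds.1 hint)] with r hr
    have h1 : Real.exp (-lam * t) * J t x ≤ Real.exp (-lam * t) * J t (x + r • EuclideanSpace.single i 1) :=
      hmin (a := (t, x + r • EuclideanSpace.single i 1)) ⟨ht, hr⟩
    have h3 := Real.exp_pos (-lam * t)
    simpa using le_of_mul_le_mul_left h1 h3
  have hdle : d ≤ lam * J t x := by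
    have hde : HasDerivAt (fun s => Real.exp (-lam * s) * J s x)
        (Real.exp (-lam * t) * (-lam * 1) * J t x + Real.exp (-lam * t) * d) t :=
      (((hasDerivAt_id t).const_mul (-lam)).exp).mul hd
    have hle : Real.exp (-lam * t) * (-lam * 1) * J t x + Real.exp (-lam * t) * d ≤ 0 := by
      by_contra hpos
      push Not at hpos
      have hsl := (hasDerivAt_iff_tendsto_slope_left_right.1 hde).1
      have hev := hsl.eventually (lt_mem_nhds hpos)
      have hev2 : ∀ᶠ s in nhdsWithin t (Iio t), s ∈ Ioo a t := Ioo_mem_nhdsLT hat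
      obtain ⟨s, hs1, hs2⟩ := (hev.and hev2).exists
      have h1 : Real.exp (-lam * t) * J t x ≤ Real.exp (-lam * s) * J s x :=
        hmin (a := (s, x)) ⟨⟨hs2.1.le, hs2.2.le.trans ht.2⟩, hx⟩
      rw [slope_def_field] at hs1
      have : (Real.exp (-lam * s) * J s x - Real.exp (-lam * t) * J t x) / (s - t) ≤ 0 :=
        div_nonpos_of_nonneg_of_nonpos (by linarith) (by linarith [hs2.2])
      linarith
    have h3 := Real.exp_pos (-lam * t)
    have : Real.exp (-lam * t) * (d - lam * J t x) ≤ 0 := by linarith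
    by_contra h
    push Not at h
    have := mul_pos h3 (sub_pos.2 h)
    linarith
  have := Finset.sum_nonneg (s := Finset.univ) (fun i _ => hcn i)
  linarith


theorem norm_line_sq {n : ℕ} (x y : EuclideanSpace ℝ (Fin n)) (i : Fin n) (r : ℝ) :
    ‖x + r • EuclideanSpace.single i 1 - y‖ ^ 2 = ‖x - y‖ ^ 2 + 2 * r * (x i - y i) + r ^ 2 := by
  have : x + r • EuclideanSpace.single i (1:ℝ) - y = (x - y) + r • EuclideanSpace.single i (1:ℝ) := by
    abel
  rw [this, norm_add_sq_real, real_inner_smul_right, norm_smul, EuclideanSpace.inner_single_right]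
  simp
  ring

theorem barrier {n : ℕ} (y : EuclideanSpace ℝ (Fin n)) (r R β lam C c0 a b : ℝ)
    (hr : 0 < r) (hβ : 0 ≤ β) (hR : 0 < R) (hβR : r ^ 2 + β * (b - a) ≤ R ^ 2)
    (hlam : (2 * β + 4 * n + 8) ^ 2 < 32 * r ^ 2 * (lam - C)) (hc0 : 0 < c0)
    (w : ℝ → EuclideanSpace ℝ (Fin n) → ℝ)
    (hw : ContinuousOn (fun z : ℝ × EuclideanSpace ℝ (Fin n) => w z.1 z.2)
      (Icc a b ×ˢ closedBall y R))
    (hw0 : ∀ t ∈ Icc a b, ∀ x ∈ closedBall y R, 0 ≤ w t x)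
    (hwi : ∀ x ∈ closedBall y r, c0 ≤ w a x)
    (hwd : ∀ t ∈ Icc a b, ∀ x ∈ ball y R, 
      ∃ d : ℝ, ∃ c c' : Fin n → ℝ, HasDerivAt (fun s => w s x) d t ∧
        (∀ i, H2 (fun r : ℝ => w t (x + r • EuclideanSpace.single i 1)) (c' i) (c i)) ∧
        -C * w t x ≤ d - ∑ i, c i) :
    ∀ t ∈ Icc a b, ∀ x ∈ closedBall y R,
      c0 / r ^ 4 * (Real.exp (-lam * (t - a)) * (max (r ^ 2 + β * (t - a) - ‖x - y‖ ^ 2) 0) ^ 2)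
        ≤ w t x := by
  set ε := c0 / r ^ 4 with hε
  have hεp : 0 < ε := by positivity
  have key := min_principle (closedBall y R) (isCompact_closedBall y R) a b
    (fun t x => w t x - ε * (Real.exp (-lam * (t - a)) *
      (max (r ^ 2 + β * (t - a) - ‖x - y‖ ^ 2) 0) ^ 2)) (-C) ?_ ?_
  · intro t ht x hx
    have := key t ht x hx
    linarith
  · refine hw.sub (Continuous.continuousOn ?_)
    fun_prop
  · intro t ht x hx hneg
    have hwn := hw0 t ht x hx
    have hspos : 0 < r ^ 2 + β * (t - a) - ‖x - y‖ ^ 2 := by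
      by_contra h
      push Not at h
      rw [max_eq_right h] at hneg
      simp at hneg
      linarith
    rw [max_eq_left hspos.le] at hneg
    have hta : a < t := by
      rcases eq_or_lt_of_le ht.1 with h | h
      · exfalso
        subst h
        simp at hneg hspos
        have h1 : x ∈ closedBall y r := by
          rw [mem_closedBall, dist_eq_norm]
          exact (abs_le_of_sq_le_sq' (by linarith) hr.le).2
        have h2 := hwi x h1
        have h3 : (r ^ 2 - ‖x - y‖ ^ 2) ^ 2 ≤ (r ^ 2) ^ 2 := by
          apply pow_le_pow_left₀ (by linarith)
          nlinarith [norm_nonneg (x - y)]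
        have h4 : ε * (r ^ 2 - ‖x - y‖ ^ 2) ^ 2 ≤ c0 := by
          calc _ ≤ ε * (r ^ 2) ^ 2 := by gcongr
            _ = c0 := by rw [hε]; field_simp
        linarith
      · exact h
    have hxR : x ∈ ball y R := by
      rw [mem_ball, dist_eq_norm]
      apply (abs_lt_of_sq_lt_sq' _ hR.le).2
      have : β * (t - a) ≤ β * (b - a) := by gcongr; exact ht.2
      linarith
    refine ⟨hta, ?_, ?_⟩
    · exact mem_interior_iff_mem_nhds.2 (mem_of_superset (isOpen_ball.mem_nhds hxR)
        ball_subset_closedBall)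
    obtain ⟨d, c, c', hd, hc, hdc⟩ := hwd t ht x hxR
    set s := r ^ 2 + β * (t - a) - ‖x - y‖ ^ 2 with hs
    set X := Real.exp (-lam * (t - a)) with hX
    have hXp : 0 < X := Real.exp_pos _
    refine ⟨d - ε * (X * (-lam) * s ^ 2 + X * (2 * s * β)),
      fun i => c i - ε * (X * (2 * (-2 * (x i - y i)) ^ 2 + 2 * s * (-2))),
      fun i => c' i - ε * (X * (2 * s * (-2 * (x i - y i)))), ?_, ?_, ?_⟩
    · refine hd.sub ?_
      have h1 : HasDerivAt (fun q => r ^ 2 + β * (q - a) - ‖x - y‖ ^ 2) β t := by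
        simpa using ((((hasDerivAt_id t).sub_const a).const_mul β).const_add (r^2)).sub_const
          (‖x - y‖ ^ 2)
      have h2 : HasDerivAt (fun q => Real.exp (-lam * (q - a))) (X * (-lam)) t := by
        exact (((hasDerivAt_id t).sub_const a).const_mul (-lam)).exp.congr_deriv (by simp [hX])
      have h3 := ((h2.mul (h1.pow 2)).const_mul ε)
      have h4 : (fun q => ε * (Real.exp (-lam * (q - a)) *
          (max (r ^ 2 + β * (q - a) - ‖x - y‖ ^ 2) 0) ^ 2)) =ᶠ[nhds t] (fun q => ε * (Real.exp (-lam * (q - a)) *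
          (r ^ 2 + β * (q - a) - ‖x - y‖ ^ 2) ^ 2)) := by
        filter_upwards [h1.continuousAt.eventually (lt_mem_nhds hspos)] with q hq
        rw [max_eq_left hq.le]
      refine (h3.congr_of_eventuallyEq h4).congr_deriv ?_
      simp only [Pi.pow_apply, ← hs, ← hX]
      norm_num
    · intro i
      refine (hc i).sub ?_
      have hline : H2 (fun q : ℝ => s - 2 * q * (x i - y i) - q ^ 2) (-2 * (x i - y i)) (-2) := by
        refine ⟨fun q => -2 * (x i - y i) - 2 * q, Eventually.of_forall fun q => ?_, by simp, ?_⟩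
        · have := ((((hasDerivAt_id q).const_mul 2).mul_const (x i - y i)).const_sub s).sub
            ((hasDerivAt_id q).pow 2)
          refine this.congr_deriv ?_
          simp
        · have := ((hasDerivAt_id (0:ℝ)).const_mul 2).const_sub (-2 * (x i - y i))
          exact this.congr_deriv (by simp)
      have h3 := ((hline.mul hline).const_mul X).const_mul ε
      have h5 : (fun q : ℝ => s - 2 * q * (x i - y i) - q ^ 2) = fun q : ℝ => 
          r ^ 2 + β * (t - a) - ‖x + q • EuclideanSpace.single i 1 - y‖ ^ 2 := by
        funext q
        rw [norm_line_sq, hs]; ring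
      have hev : ∀ᶠ q in nhds (0:ℝ), 0 < s - 2 * q * (x i - y i) - q ^ 2 := by
        have : Continuous (fun q : ℝ => s - 2 * q * (x i - y i) - q ^ 2) := by fun_prop
        refine this.continuousAt.eventually (lt_mem_nhds ?_)
        simpa using hspos
      refine H2.congr (γ := fun q => ε * (X * ((s - 2 * q * (x i - y i) - q ^ 2) * (s - 2 * q * (x i - y i) - q ^ 2)))) ?_ ?_
      · convert h3 using 1 <;> ring
      · filter_upwards [hev] with q hq
        have h6 := congrFun h5 q
        simp only at h6
        rw [← h6, max_eq_left hq.le, sq (s - _ - _)]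
    · have hsum : ∑ i, (x i - y i) ^ 2 = ‖x - y‖ ^ 2 := by
        rw [EuclideanSpace.norm_sq_eq]
        simp
      have hS : ∑ i, (c i - ε * (X * (2 * (-2 * (x i - y i)) ^ 2 + 2 * s * (-2)))) =
          ∑ i, c i - ε * X * (8 * ‖x - y‖ ^ 2 - 4 * n * s) := by
        rw [Finset.sum_sub_distrib, ← hsum, Finset.mul_sum, ← Finset.mul_sum, ← Finset.mul_sum, Finset.sum_add_distrib]
        simp [mul_pow, ← Finset.mul_sum]
        ring
      rw [hS, max_eq_left hspos.le]
      have hnx : ‖x - y‖ ^ 2 = r ^ 2 + β * (t - a) - s := by rw [hs]; ring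
      have hbt : 0 ≤ β * (t - a) := mul_nonneg hβ (by linarith)
      have hq : (C - lam) * s ^ 2 + s * (2 * β + 4 * n + 8) - 8 * (r ^ 2 + β * (t - a)) < 0 := by
        set B := 2 * β + 4 * n + 8
        have hr2 : 0 < r ^ 2 := by positivity
        have h1 : 0 < lam - C := by
          by_contra h
          push Not at h
          nlinarith [sq_nonneg B]
        have h2 : 4 * (lam - C) * ((C - lam) * s ^ 2 + s * B - 8 * r ^ 2) < 0 := by
          nlinarith [sq_nonneg (2 * (lam - C) * s - B)]
        have h3 : (C - lam) * s ^ 2 + s * B - 8 * r ^ 2 < 0 := by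
          by_contra h
          push Not at h
          have := mul_nonneg (by linarith : 0 ≤ 4 * (lam - C)) h
          linarith
        linarith
      have hm : ε * X * ((C - lam) * s ^ 2 + s * (2 * β + 4 * n + 8) - 8 * (r ^ 2 + β * (t - a))) < 0 :=
        mul_neg_of_pos_of_neg (by positivity) hq
      rw [hnx]
      linarith


theorem Qscalar (A B C1 C2 e φ b X : ℝ) (hA : 0 ≤ A) (hB : 0 ≤ B) (hC1 : 0 ≤ C1) (hC2 : 0 ≤ C2)
    (he : 0 < e) (hφ : 0 < φ) (hφ1 : φ ≤ 1) (hb : 1 ≤ b) :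
    -(A * C1 * C2 + 2 * (A * C1 * C2) ^ 2 / e + B * C1 + 2 * B ^ 2 / e) * (φ ^ 2 * b ^ 2 + 1) ≤
    - (A * φ ^ 3 * C1 * C2 * b) - 2 * (A * C1 * C2) * φ ^ 2 * b * X - B * C1 * φ - 2 * B * X
      + e * X ^ 2 := by
  set M := A * C1 * C2
  have hM : 0 ≤ M := by positivity
  have h1 : φ ^ 3 * b ≤ φ ^ 2 * b ^ 2 := by
    have : φ * 1 ≤ 1 * b := mul_le_mul hφ1 hb zero_le_one (by norm_num)
    nlinarith [mul_le_mul_of_nonneg_left this (by positivity : 0 ≤ φ ^ 2 * b)]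
  have h2 : φ ^ 4 * b ^ 2 ≤ φ ^ 2 * b ^ 2 := by
    have : φ ^ 2 ≤ 1 := by nlinarith
    nlinarith [mul_le_mul_of_nonneg_left this (by positivity : 0 ≤ φ ^ 2 * b ^ 2)]
  have h3 : 2 * M * φ ^ 2 * b * X ≤ e / 2 * X ^ 2 + 2 * M ^ 2 / e * (φ ^ 4 * b ^ 2) := by
    have : e / 2 * X ^ 2 + 2 * M ^ 2 / e * (φ ^ 4 * b ^ 2) - 2 * M * φ ^ 2 * b * X
      = e / 2 * (X - 2 * M / e * (φ ^ 2 * b)) ^ 2 := by field_simp; ring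
    have h : 0 ≤ e / 2 * (X - 2 * M / e * (φ ^ 2 * b)) ^ 2 := by positivity
    linarith
  have h4 : 2 * B * X ≤ e / 2 * X ^ 2 + 2 * B ^ 2 / e := by
    have : e / 2 * X ^ 2 + 2 * B ^ 2 / e - 2 * B * X
      = e / 2 * (X - 2 * B / e) ^ 2 := by field_simp; ring
    have h : 0 ≤ e / 2 * (X - 2 * B / e) ^ 2 := by positivity
    linarith
  have h5 := mul_le_mul_of_nonneg_left h2 (by positivity : 0 ≤ 2 * M ^ 2 / e)
  have h6 := mul_le_mul_of_nonneg_left h1 hM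
  have h7 : B * C1 * φ ≤ B * C1 := mul_le_of_le_one_right (by positivity) hφ1
  have hp : 0 ≤ φ ^ 2 * b ^ 2 := by positivity
  have h8 : 0 ≤ (B * C1 + 2 * B ^ 2 / e) * (φ ^ 2 * b ^ 2) := by positivity
  have h9 : 0 ≤ M + 2 * M ^ 2 / e := by positivity
  have h10 : A * φ ^ 3 * C1 * C2 * b = M * (φ ^ 3 * b) := by simp only [M]; ring
  rw [h10]
  linarith

set_option maxHeartbeats 1000000 in
theorem Qbound (j : ℕ) (C1 C2 q : ℝ) (hC1 : 0 ≤ C1) (hC2 : 0 ≤ C2) (hq : 1 < q) :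
    ∃ D > 0, ∀ φ s g k y F F1 F2 b : ℝ, 0 < φ → φ ≤ 1 → 0 < s → |g| ≤ C1 → |k| ≤ C1 → 0 ≤ F →
      F ≤ C2 * s ^ q * b → |F1| ≤ C2 * s ^ (q - 1) * b → 0 ≤ F2 → 1 ≤ b →
      -D * (s ^ q * φ ^ j * (φ ^ 2 * b ^ 2 + 1)) ≤
      ((j + 4) * ((j + 3) * φ ^ (j + 2)) * g ^ 2 + (j + 4) * φ ^ (j + 3) * k) * F
      + 2 * ((j + 4) * φ ^ (j + 3) * g) * (F1 * y) + φ ^ (j + 4) * (F2 * y ^ 2)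
      + (((j + 2) * ((j + 1) * φ ^ j) * g ^ 2 + (j + 2) * φ ^ (j + 1) * k) * s ^ q
      + 2 * ((j + 2) * φ ^ (j + 1) * g) * (q * s ^ (q - 1) * y)
      + φ ^ (j + 2) * (q * ((q - 1) * s ^ (q - 2)) * y ^ 2)) := by
  set e := q * (q - 1) with he
  have hep : 0 < e := mul_pos (by linarith) (by linarith)
  refine ⟨((j + 4 : ℝ) * C1 * C2 + 2 * ((j + 4 : ℝ) * C1 * C2) ^ 2 / e
    + ((j + 2 : ℝ) * (1 + C1 * q)) * C1 + 2 * ((j + 2 : ℝ) * (1 + C1 * q)) ^ 2 / e), ?_, ?_⟩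
  · positivity
  intro φ s g k y F F1 F2 b hφ hφ1 hs hg hk hF hF2 hF1 hF22 hb
  have hqs : s ^ (q - 1) = s ^ q / s := by rw [Real.rpow_sub_one hs.ne']
  have hqs2 : s ^ (q - 2) = s ^ q / s ^ 2 := by
    rw [Real.rpow_sub hs]; norm_num
  have hap : 0 < s ^ q := Real.rpow_pos_of_pos hs q
  rw [hqs] at hF1
  rw [hqs, hqs2]
  generalize s ^ q = a at *
  obtain ⟨Y, rfl⟩ : ∃ Y, y = s * Y := ⟨y / s, by field_simp⟩
  have hjp : (0:ℝ) ≤ j := Nat.cast_nonneg j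
  have hsc := Qscalar (j + 4) ((j + 2 : ℝ) * (1 + C1 * q)) C1 C2 e φ b (φ * |Y|) (by positivity)
    (by positivity) hC1 hC2 hep hφ hφ1 hb
  have hsc2 := mul_le_mul_of_nonneg_left hsc (by positivity : 0 ≤ a * φ ^ j)
  have t1 : -((j + 4) * φ ^ (j + 3) * C1 * (C2 * a * b)) ≤
      ((j + 4) * ((j + 3) * φ ^ (j + 2)) * g ^ 2 + (j + 4) * φ ^ (j + 3) * k) * F := by
    have h1 : 0 ≤ (j + 4) * ((j + 3) * φ ^ (j + 2)) * g ^ 2 * F := by positivity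
    have h2 : -(C1 * (C2 * a * b)) ≤ k * F := by
      have h4 := mul_le_mul_of_nonneg_right (neg_le_of_abs_le hk) hF
      have h3 : C1 * F ≤ C1 * (C2 * a * b) := by gcongr
      linarith
    have h3 := mul_le_mul_of_nonneg_left h2 (by positivity : 0 ≤ (j + 4) * φ ^ (j + 3))
    linarith
  have t2 : -(2 * (j + 4) * φ ^ (j + 3) * C1 * (C2 * a * b * |Y|)) ≤
      2 * ((j + 4) * φ ^ (j + 3) * g) * (F1 * (s * Y)) := by
    have h2 : |g * (F1 * (s * Y))| ≤ C1 * (C2 * a * b * |Y|) := by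
      rw [abs_mul, abs_mul, abs_mul, abs_of_pos hs]
      calc |g| * (|F1| * (s * |Y|)) ≤ C1 * (C2 * (a / s) * b * (s * |Y|)) := by gcongr
        _ = _ := by field_simp
    have h3 := mul_le_mul_of_nonneg_left (neg_le_of_abs_le h2)
      (by positivity : 0 ≤ 2 * (j + 4) * φ ^ (j + 3))
    linarith
  have t3 : 0 ≤ φ ^ (j + 4) * (F2 * (s * Y) ^ 2) := by positivity
  have t4 : -((j + 2) * φ ^ (j + 1) * C1 * a) ≤
      ((j + 2) * ((j + 1) * φ ^ j) * g ^ 2 + (j + 2) * φ ^ (j + 1) * k) * a := by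
    have h1 : 0 ≤ (j + 2) * ((j + 1) * φ ^ j) * g ^ 2 * a := by positivity
    have h3 := mul_le_mul_of_nonneg_left (neg_le_of_abs_le hk)
      (by positivity : 0 ≤ (j + 2) * φ ^ (j + 1) * a)
    linarith
  have t5 : -(2 * (j + 2) * φ ^ (j + 1) * q * a * C1 * |Y|) ≤
      2 * ((j + 2) * φ ^ (j + 1) * g) * (q * (a / s) * (s * Y)) := by
    have h2 : |g * Y| ≤ C1 * |Y| := by
      rw [abs_mul]; gcongr
    have h3 := mul_le_mul_of_nonneg_left (neg_le_of_abs_le h2)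
      (by positivity : 0 ≤ 2 * (j + 2) * φ ^ (j + 1) * q * a)
    have h4 : q * (a / s) * (s * Y) = q * a * Y := by field_simp
    rw [h4]
    linarith
  have t6 : φ ^ (j + 2) * (q * ((q - 1) * (a / s ^ 2)) * (s * Y) ^ 2) =
      φ ^ (j + 2) * a * e * |Y| ^ 2 := by
    rw [sq_abs, he]; field_simp
  have t7 : 0 ≤ (j + 2) * φ ^ (j + 1) * C1 * C1 * q * a := by positivity
  have t8 : 0 ≤ (j + 2) * φ ^ (j + 1) * |Y| * a := by positivity
  rw [t6]
  have e1 : φ ^ (j + 1) = φ ^ j * φ := by ring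
  have e2 : φ ^ (j + 2) = φ ^ j * φ ^ 2 := by ring
  have e3 : φ ^ (j + 3) = φ ^ j * φ ^ 3 := by ring
  rw [e1] at t7 t8 t4 t5 ⊢
  rw [e2] at t1 ⊢
  rw [e3] at t1 t2 ⊢
  linarith

theorem f_facts (f : ℝ → ℝ)
    (hf_C2 : ContDiffOn ℝ 2 f (Ici 0)) (hf_conv : ConvexOn ℝ (Ici 0) f) :
    (∀ s > 0, HasDerivAt f (deriv f s) s) ∧
    (∀ s > 0, HasDerivAt (deriv f) (deriv (deriv f) s) s) ∧
    (∀ s > 0, 0 ≤ deriv (deriv f) s) ∧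
    (∃ C ≥ 0, ∀ a b, 0 ≤ a → a ≤ b → -C * (b - a) ≤ f b - f a) ∧
    (∀ a b, 0 < a → a ≤ b → deriv f a * (b - a) ≤ f b - f a) := by
  have hat : ∀ s > 0, ContDiffAt ℝ 2 f s := fun s hs => hf_C2.contDiffAt (Ici_mem_nhds hs)
  have h1 : ∀ s > 0, HasDerivAt f (deriv f s) s := fun s hs =>
    ((hat s hs).differentiableAt (by simp)).hasDerivAt
  have h2 : ∀ s > 0, HasDerivAt (deriv f) (deriv (deriv f) s) s := by
    intro s hs
    have : ContDiffOn ℝ 2 f (Ioi 0) := hf_C2.mono Ioi_subset_Ici_self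
    have := (this.deriv_of_isOpen isOpen_Ioi (m := 1) (by norm_num))
    exact ((this.contDiffAt (Ioi_mem_nhds hs)).differentiableAt (by simp)).hasDerivAt
  have h5 : ∀ a b, 0 < a → a ≤ b → deriv f a * (b - a) ≤ f b - f a := by
    intro a b ha hab
    rcases eq_or_lt_of_le hab with h | h
    · subst h; simp
    · have := hf_conv.le_slope_of_hasDerivAt (mem_Ici.2 ha.le) (mem_Ici.2 (ha.le.trans hab)) h (h1 a ha)
      rw [slope_def_field, le_div_iff₀ (by linarith)] at this
      exact this
  refine ⟨h1, h2, ?_, ?_, h5⟩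
  · intro s hs
    have hm : MonotoneOn (deriv f) (Ioi 0) := by
      have hc : ConvexOn ℝ (Ioi 0) f := hf_conv.subset Ioi_subset_Ici_self (convex_Ioi 0)
      exact hc.monotoneOn_deriv (fun x hx => (h1 x hx).differentiableAt)
    have := hm.derivWithin_nonneg (x := s)
    rwa [derivWithin_of_isOpen isOpen_Ioi hs] at this
  · have hd : DifferentiableWithinAt ℝ f (Ici 0) 0 :=
      (hf_C2.differentiableOn (by simp)) 0 self_mem_Ici
    set f0 := derivWithin f (Ici 0) 0
    refine ⟨|f0|, abs_nonneg _, ?_⟩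
    intro a b ha hab
    rcases eq_or_lt_of_le hab with h | h
    · subst h; simp
    have hb : 0 < b := lt_of_le_of_lt ha h
    have k1 : f0 ≤ slope f 0 b := hf_conv.le_slope_of_hasDerivWithinAt self_mem_Ici
      (mem_Ici.2 hb.le) hb hd.hasDerivWithinAt
    have k2 : f0 * (b - a) ≤ f b - f a := by
      rcases eq_or_lt_of_le ha with h' | h'
      · subst h'
        rw [slope_def_field, le_div_iff₀ (by linarith)] at k1
        exact k1
      · have := hf_conv.secant_mono_aux3 self_mem_Ici (mem_Ici.2 hb.le) h' h
        rw [slope_def_field] at k1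
        have := k1.trans this
        rw [le_div_iff₀ (by linarith)] at this
        exact this
    nlinarith [neg_abs_le f0]

theorem f_growth (p q : ℝ) (hp : 1 < p) (hq1 : 1 < q) (hq : q < p) (f : ℝ → ℝ)
    (hf_C2 : ContDiffOn ℝ 2 f (Ici 0)) (hf_conv : ConvexOn ℝ (Ici 0) f)
    (hf_lim : Tendsto (fun s : ℝ => s ^ (-p) * f s) atTop (nhds 1))
    (hf_deriv : ∃ C₀ > 0, ∀ s ≥ (0:ℝ), |deriv f s| ≤ C₀ * (1 + s ^ (p - 1))) :
    ∃ S0 ≥ 1, ∃ c1 > 0, ∃ C2 > 0, ∀ s ≥ S0, s ^ p / 2 ≤ f s ∧ f s ≤ C2 * s ^ p ∧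
      |deriv f s| ≤ C2 * s ^ (p - 1) ∧
      c1 * s ^ (p + q - 1) ≤ deriv f s * s ^ q - q * s ^ (q - 1) * f s := by
  obtain ⟨h1, -⟩ := f_facts f hf_C2 hf_conv
  obtain ⟨C0, hC0, hder⟩ := hf_deriv
  -- choose theta
  obtain ⟨θ, hθ0, hθ1, hθ⟩ : ∃ θ : ℝ, 0 < θ ∧ θ < 1 ∧ (p + q) / 2 < (1 - θ ^ p) / (1 - θ) := by
    have hd : HasDerivAt (fun x : ℝ => x ^ p) (p * 1 ^ (p - 1)) 1 :=
      Real.hasDerivAt_rpow_const (Or.inl one_ne_zero)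
    simp only [Real.one_rpow, mul_one] at hd
    have hsl := (hasDerivAt_iff_tendsto_slope_left_right.1 hd).1
    have hev := hsl.eventually (lt_mem_nhds (show (p + q) / 2 < p by linarith))
    have hev2 : ∀ᶠ s in nhdsWithin (1:ℝ) (Iio 1), s ∈ Ioo (0:ℝ) 1 := Ioo_mem_nhdsLT one_pos
    obtain ⟨θ, ha, hb⟩ := (hev.and hev2).exists
    refine ⟨θ, hb.1, hb.2, ?_⟩
    rw [slope_def_field, Real.one_rpow] at ha
    rwa [← neg_div_neg_eq (1 - θ ^ p), neg_sub, neg_sub]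
  have hlimθ : Tendsto (fun s : ℝ => (s ^ (-p) * f s - θ ^ p * ((θ * s) ^ (-p) * f (θ * s))) / (1 - θ))
      atTop (nhds ((1 - θ ^ p * 1) / (1 - θ))) := by
    refine (hf_lim.sub (Tendsto.const_mul _ (hf_lim.comp ?_))).div_const _
    exact tendsto_id.const_mul_atTop hθ0
  rw [mul_one] at hlimθ
  have e1 := hlimθ.eventually (lt_mem_nhds hθ)
  have e2 := hf_lim.eventually (lt_mem_nhds (show (1/2 : ℝ) < 1 by norm_num))
  have e3 := hf_lim.eventually (gt_mem_nhds (show (1 : ℝ) < 2 by norm_num))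
  have e4 := (hf_lim.const_mul q).eventually (gt_mem_nhds (show q * 1 < (p + 3 * q) / 4 by linarith))
  obtain ⟨S, hS⟩ := eventually_atTop.1 (e1.and (e2.and (e3.and e4)))
  refine ⟨max S 1, le_max_right _ _, (p - q) / 4, by linarith, 2 * C0 + 2, by linarith, ?_⟩
  intro s hs
  obtain ⟨a1, a2, a3, a4⟩ := hS s ((le_max_left _ _).trans hs)
  have hs1 : 1 ≤ s := (le_max_right _ _).trans hs
  have hs0 : 0 < s := by linarith
  have hsp : 0 < s ^ p := Real.rpow_pos_of_pos hs0 p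
  have hfe : f s = s ^ p * (s ^ (-p) * f s) := by
    rw [← mul_assoc, ← Real.rpow_add hs0]; simp
  have hs1p : 1 ≤ s ^ (p - 1) := Real.one_le_rpow hs1 (by linarith)
  refine ⟨?_, ?_, ?_, ?_⟩
  · rw [hfe]; nlinarith
  · rw [hfe]; nlinarith
  · refine (hder s hs0.le).trans ?_
    nlinarith
  · have hsl := hf_conv.slope_le_of_hasDerivAt (x := θ * s) (y := s) (mem_Ici.2 (by positivity))
      (mem_Ici.2 hs0.le) (by nlinarith) (h1 s hs0)
    rw [slope_def_field] at hsl
    have hkey : (p + q) / 2 * s ^ (p - 1) ≤ deriv f s := by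
      refine le_trans ?_ hsl
      have : (f s - f (θ * s)) / (s - θ * s) = 
        (s ^ (-p) * f s - θ ^ p * ((θ * s) ^ (-p) * f (θ * s))) / (1 - θ) * s ^ (p - 1) := by
        rw [Real.mul_rpow hθ0.le hs0.le, Real.rpow_neg hs0.le, Real.rpow_neg hθ0.le,
          Real.rpow_sub_one hs0.ne']
        have := Real.rpow_pos_of_pos hθ0 p
        have h1θ : 1 - θ ≠ 0 := by linarith
        have h2θ : s - θ * s ≠ 0 := by
          have : 0 < s * (1 - θ) := mul_pos hs0 (by linarith)
          intro h; linarith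
        rw [div_eq_iff h2θ]
        field_simp
      rw [this]
      gcongr
    have hx1 : s ^ (p + q - 1) = s ^ (p - 1) * s ^ q := by
      rw [← Real.rpow_add hs0]; ring_nf
    have hx2 : q * s ^ (q - 1) * f s = (q * (s ^ (-p) * f s)) * (s ^ (p - 1) * s ^ q) := by
      have : s ^ (q - 1) = s ^ (-p) * (s ^ (p - 1) * s ^ q) := by
        rw [← Real.rpow_add hs0, ← Real.rpow_add hs0]; ring_nf
      rw [this]; ring
    rw [hx1, hx2]
    have hpos : 0 < s ^ (p - 1) * s ^ q := mul_pos (by linarith) (Real.rpow_pos_of_pos hs0 q)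
    have hsq : 0 < s ^ q := Real.rpow_pos_of_pos hs0 q
    have m1 := mul_le_mul_of_nonneg_right hkey hsq.le
    have m2 := mul_le_mul_of_nonneg_right a4.le hpos.le
    linarith


open scoped Manifold in
theorem cutoff_exists {n : ℕ} (Ω : Set (EuclideanSpace ℝ (Fin n)))
    (hΩ_open : IsOpen Ω) (hΩ_bdd : Bornology.IsBounded Ω)
    (V : EuclideanSpace ℝ (Fin n) → ℝ) (hV : ContinuousOn V (closure Ω))
    (hV_nonneg : ∀ x ∈ closure Ω, 0 ≤ V x)
    (x₀ : EuclideanSpace ℝ (Fin n)) (hx₀ : x₀ ∈ Ω) (hVx₀ : V x₀ = 0)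
    (hcomp : connectedComponentIn {x ∈ closure Ω | V x = 0} x₀ ∩ frontier Ω = ∅) :
    ∃ φ : EuclideanSpace ℝ (Fin n) → ℝ, ContDiff ℝ 2 φ ∧ HasCompactSupport φ ∧ tsupport φ ⊆ Ω ∧
      (∀ x, 0 ≤ φ x ∧ φ x ≤ 1) ∧ (∀ᶠ x in nhds x₀, φ x = 1) ∧
      ∃ v0 > 0, ∀ x, φ x ≠ 0 → v0 ≤ V x ∨ φ =ᶠ[nhds x] fun _ => 1 := by
  set Z := {x ∈ closure Ω | V x = 0} with hZ
  have hZclosed : IsClosed Z := by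
    have : Z = closure Ω ∩ V ⁻¹' {0} := by ext x; simp [hZ]
    rw [this]
    exact hV.preimage_isClosed_of_isClosed isClosed_closure isClosed_singleton
  have hZcomp : IsCompact Z := hΩ_bdd.isCompact_closure.of_isClosed_subset hZclosed (fun x hx => hx.1)
  have hx₀Z : x₀ ∈ Z := ⟨subset_closure hx₀, hVx₀⟩
  haveI : CompactSpace Z := isCompact_iff_compactSpace.1 hZcomp
  rw [connectedComponentIn_eq_image hx₀Z, connectedComponent_eq_iInter_isClopen] at hcomp
  set Fr : Set Z := {z | (z : EuclideanSpace ℝ (Fin n)) ∈ frontier Ω} with hFr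
  have hFrc : IsCompact Fr := (isClosed_frontier.preimage continuous_subtype_val).isCompact
  have hdis : Fr ∩ ⋂ s : { s : Set Z // IsClopen s ∧ (⟨x₀, hx₀Z⟩ : Z) ∈ s }, (s : Set Z) = ∅ := by
    rw [eq_empty_iff_forall_notMem] at hcomp ⊢
    rintro z ⟨h1, h2⟩
    exact hcomp z ⟨⟨z, h2, rfl⟩, h1⟩
  obtain ⟨F, hF⟩ := hFrc.elim_finite_subfamily_closed _ (fun s => s.2.1.1) hdis
  set A : Set Z := ⋂ s ∈ F, (s : Set Z) with hA
  have hAclopen : IsClopen A := isClopen_biInter_finset fun s _ => s.2.1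
  have hxA : (⟨x₀, hx₀Z⟩ : Z) ∈ A := by
    simp only [hA, mem_iInter]
    exact fun s _ => s.2.2
  set K : Set (EuclideanSpace ℝ (Fin n)) := (↑) '' A with hK
  set L : Set (EuclideanSpace ℝ (Fin n)) := (↑) '' Aᶜ with hL
  have hKc : IsCompact K := hAclopen.1.isCompact.image continuous_subtype_val
  have hLc : IsCompact L := hAclopen.compl.1.isCompact.image continuous_subtype_val
  have hU : IsOpen (Ω \ L) := hΩ_open.sdiff hLc.isClosed
  have hKU : K ⊆ Ω \ L := by
    rintro _ ⟨z, hz, rfl⟩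
    refine ⟨?_, ?_⟩
    · by_contra h
      have : z ∈ Fr := by
        simp only [hFr, mem_setOf_eq, hΩ_open.frontier_eq]
        exact ⟨z.2.1, h⟩
      exact (eq_empty_iff_forall_notMem.1 hF) z ⟨this, hz⟩
    · rintro ⟨z', hz', h⟩
      exact hz' (Subtype.ext h ▸ hz)
  obtain ⟨K', hK'c, hKK', hK'U⟩ := exists_compact_between hKc hU hKU
  obtain ⟨φ, h1, h0, h01⟩ := exists_contMDiffMap_one_nhds_of_subset_interior (n := 2)
    (𝓘(ℝ, EuclideanSpace ℝ (Fin n))) hKc.isClosed hKK'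
  have hts : tsupport φ ⊆ K' := closure_minimal (fun x hx => by
    by_contra h; exact hx (h0 x h)) hK'c.isClosed
  have h1' : ∀ x ∈ K, ∀ᶠ y in nhds x, φ y = 1 := eventually_nhdsSet_iff_forall.1 h1
  have hS : IsCompact (K' \ interior {x | φ x = 1}) := hK'c.diff isOpen_interior
  have hSV : ∀ x ∈ K' \ interior {x | φ x = 1}, 0 < V x := by
    intro x hx
    have hxU := hK'U hx.1
    have hxc : x ∈ closure Ω := subset_closure hxU.1
    refine lt_of_le_of_ne (hV_nonneg x hxc) ?_
    intro h
    apply hx.2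
    rw [mem_interior_iff_mem_nhds]
    apply h1'
    by_contra hxK
    apply hxU.2
    refine ⟨⟨x, hxc, h.symm⟩, ?_, rfl⟩
    intro hxA
    exact hxK ⟨_, hxA, rfl⟩
  obtain ⟨v0, hv0, hv0le⟩ := hS.exists_forall_le' (hV.mono (fun x hx =>
    subset_closure (hK'U hx.1).1)) hSV
  refine ⟨φ, φ.contMDiff.contDiff, ?_, ?_, fun x => h01 x, h1' x₀ ⟨_, hxA, rfl⟩, v0, hv0, ?_⟩
  · exact HasCompactSupport.of_support_subset_isCompact hK'c (subset_closure.trans hts)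
  · exact fun x hx => (hK'U (hts hx)).1
  · intro x hx
    by_cases h : x ∈ interior {x | φ x = 1}
    · exact Or.inr (mem_interior_iff_mem_nhds.1 h)
    · exact Or.inl (hv0le x ⟨hts (subset_closure hx), h⟩)

theorem cutoff_bounds {n : ℕ} (φ : EuclideanSpace ℝ (Fin n) → ℝ) (hφ : ContDiff ℝ 2 φ)
    (hc : HasCompactSupport φ) : ∃ C1 ≥ 0, ∀ x, ∀ i : Fin n,
      |fderiv ℝ φ x (EuclideanSpace.single i 1)| ≤ C1 ∧
      |fderiv ℝ (fun y => fderiv ℝ φ y (EuclideanSpace.single i 1)) x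
        (EuclideanSpace.single i 1)| ≤ C1 := by
  have h1 : ContDiff ℝ 1 (fderiv ℝ φ) := hφ.fderiv_right (by norm_num)
  have key : ∀ i : Fin n, ∃ C, ∀ x, 
      |fderiv ℝ φ x (EuclideanSpace.single i 1)| ≤ C ∧
      |fderiv ℝ (fun y => fderiv ℝ φ y (EuclideanSpace.single i 1)) x
        (EuclideanSpace.single i 1)| ≤ C := by
    intro i
    set e : EuclideanSpace ℝ (Fin n) := EuclideanSpace.single i 1
    have g1 : ContDiff ℝ 1 (fun y => fderiv ℝ φ y e) := h1.clm_apply contDiff_const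
    have c1 : HasCompactSupport (fun y => fderiv ℝ φ y e) := hc.fderiv_apply ℝ e
    have c2 : HasCompactSupport (fun x => fderiv ℝ (fun y => fderiv ℝ φ y e) x e) :=
      c1.fderiv_apply ℝ e
    have g2 : Continuous (fun x => fderiv ℝ (fun y => fderiv ℝ φ y e) x e) :=
      (g1.continuous_fderiv (by simp)).clm_apply continuous_const
    obtain ⟨A, hA⟩ := c1.exists_bound_of_continuous g1.continuous
    obtain ⟨B, hB⟩ := c2.exists_bound_of_continuous g2
    exact ⟨max A B, fun x => ⟨(hA x).trans (le_max_left _ _), (hB x).trans (le_max_right _ _)⟩⟩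
  choose C hC using key
  refine ⟨∑ i, |C i|, Finset.sum_nonneg fun i _ => abs_nonneg _, fun x i => ?_⟩
  have : C i ≤ ∑ i, |C i| := (le_abs_self _).trans
    (Finset.single_le_sum (f := fun i => |C i|) (fun i _ => abs_nonneg _) (Finset.mem_univ i))
  exact ⟨((hC i x).1).trans this, ((hC i x).2).trans this⟩


structure Sol {n : ℕ} (Ω : Set (EuclideanSpace ℝ (Fin n))) (f : ℝ → ℝ)
    (V : EuclideanSpace ℝ (Fin n) → ℝ) (T : ℝ) (u : ℝ → EuclideanSpace ℝ (Fin n) → ℝ) : Prop where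
  hΩ : IsOpen Ω
  nonneg : ∀ t ∈ Ioo 0 T, ∀ x ∈ Ω, 0 ≤ u t x
  dt : ∀ t ∈ Ioo 0 T, ∀ x ∈ Ω, DifferentiableAt ℝ (fun s => u s x) t
  dx : ∀ t ∈ Ioo 0 T, ∀ x ∈ Ω, ContDiffAt ℝ 2 (fun y => u t y) x
  heq : ∀ t ∈ Ioo 0 T, ∀ x ∈ Ω,
      deriv (fun s => u s x) t = lap (fun y => u t y) x + V x * f (u t x)
  hmono : ∀ t ∈ Ioo 0 T, ∀ x ∈ Ω, 0 ≤ deriv (fun s => u s x) t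

/-- time difference quotient -/
noncomputable def Wq {n : ℕ} (u : ℝ → EuclideanSpace ℝ (Fin n) → ℝ) (τ t : ℝ)
    (x : EuclideanSpace ℝ (Fin n)) : ℝ := τ⁻¹ * (u (t + τ) x - u t x)

section
variable {n : ℕ} {Ω : Set (EuclideanSpace ℝ (Fin n))} {f : ℝ → ℝ}
    {V : EuclideanSpace ℝ (Fin n) → ℝ} {T : ℝ} {u : ℝ → EuclideanSpace ℝ (Fin n) → ℝ}

theorem Sol.mono (S : Sol Ω f V T u) {s t : ℝ} (hs : 0 < s) (hst : s ≤ t) (ht : t < T)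
    {x : EuclideanSpace ℝ (Fin n)} (hx : x ∈ Ω) : u s x ≤ u t x := by
  have : MonotoneOn (fun s => u s x) (Ioo 0 T) := by
    apply monotoneOn_of_deriv_nonneg (convex_Ioo 0 T)
    · exact fun r hr => (S.dt r hr x hx).continuousAt.continuousWithinAt
    · rw [interior_Ioo]
      exact fun r hr => (S.dt r hr x hx).differentiableWithinAt
    · rw [interior_Ioo]
      exact fun r hr => S.hmono r hr x hx
  exact this ⟨hs, hst.trans_lt ht⟩ ⟨hs.trans_le hst, ht⟩ hst

theorem Sol.cont_x (S : Sol Ω f V T u) {t : ℝ} (ht : t ∈ Ioo 0 T)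
    {x : EuclideanSpace ℝ (Fin n)} (hx : x ∈ Ω) : ContinuousAt (fun y => u t y) x :=
  (S.dx t ht x hx).continuousAt

theorem Sol.cont (S : Sol Ω f V T u) :
    ContinuousOn (fun z : ℝ × EuclideanSpace ℝ (Fin n) => u z.1 z.2) (Ioo 0 T ×ˢ Ω) := by
  rintro ⟨t, x⟩ ⟨ht, hx⟩
  simp only at ht hx
  apply ContinuousAt.continuousWithinAt
  rw [Metric.continuousAt_iff]
  intro ε hε
  have hct := (S.dt t ht x hx).continuousAt
  have hev : ∀ᶠ s in nhds t, u s x ∈ ball (u t x) (ε / 2) := hct (ball_mem_nhds _ (by positivity))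
  have hev2 : ∀ᶠ s in nhds t, s ∈ Ioo 0 T := isOpen_Ioo.mem_nhds ht
  obtain ⟨η, hη, hηb⟩ := Metric.eventually_nhds_iff_ball.1 (hev.and hev2)
  have hm1 : t - η / 2 ∈ ball t η := by
    rw [mem_ball, Real.dist_eq]; rw [abs_lt]; constructor <;> linarith
  have hm2 : t + η / 2 ∈ ball t η := by
    rw [mem_ball, Real.dist_eq]; rw [abs_lt]; constructor <;> linarith
  obtain ⟨a1, a2⟩ := hηb _ hm1
  obtain ⟨b1, b2⟩ := hηb _ hm2
  have c1 : ∀ᶠ y in nhds x, u (t - η / 2) y ∈ ball (u (t - η / 2) x) (ε / 2) :=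
    (S.cont_x a2 hx) (ball_mem_nhds _ (by positivity))
  have c2 : ∀ᶠ y in nhds x, u (t + η / 2) y ∈ ball (u (t + η / 2) x) (ε / 2) :=
    (S.cont_x b2 hx) (ball_mem_nhds _ (by positivity))
  have c3 : ∀ᶠ y in nhds x, y ∈ Ω := S.hΩ.mem_nhds hx
  obtain ⟨ρ, hρ, hρb⟩ := Metric.eventually_nhds_iff_ball.1 (c1.and (c2.and c3))
  refine ⟨min (η / 2) ρ, lt_min (by positivity) hρ, ?_⟩
  rintro ⟨s, y⟩ hsy
  rw [Prod.dist_eq, max_lt_iff] at hsy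
  simp only at hsy
  obtain ⟨d1, d2, d3⟩ := hρb y (lt_of_lt_of_le hsy.2 (min_le_right _ _))
  have hs := lt_of_lt_of_le hsy.1 (min_le_left _ _)
  rw [Real.dist_eq, abs_lt] at hs
  simp only [mem_ball, Real.dist_eq, abs_lt] at a1 b1 d1 d2 ⊢
  have m1 := S.mono a2.1 (by linarith : t - η / 2 ≤ s) (by linarith [b2.2]) d3
  have m2 := S.mono (by linarith [a2.1] : 0 < s) (by linarith : s ≤ t + η / 2) b2.2 d3
  constructor <;> linarith

theorem Sol.W_nonneg (S : Sol Ω f V T u) {τ t : ℝ} (hτ : 0 < τ) (ht : 0 < t) (htT : t + τ < T)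
    {x : EuclideanSpace ℝ (Fin n)} (hx : x ∈ Ω) : 0 ≤ Wq u τ t x := by
  have := S.mono ht (by linarith : t ≤ t + τ) htT hx
  unfold Wq
  have : 0 ≤ u (t + τ) x - u t x := by linarith
  positivity

theorem Sol.W_cont (S : Sol Ω f V T u) {τ a b : ℝ} (hτ : 0 < τ) (ha : 0 < a) (hb : b + τ < T)
    {K : Set (EuclideanSpace ℝ (Fin n))} (hK : K ⊆ Ω) :
    ContinuousOn (fun z : ℝ × EuclideanSpace ℝ (Fin n) => Wq u τ z.1 z.2) (Icc a b ×ˢ K) := by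
  unfold Wq
  refine continuousOn_const.mul (ContinuousOn.sub ?_ ?_)
  · have hm : ContinuousOn (fun z : ℝ × EuclideanSpace ℝ (Fin n) => (z.1 + τ, z.2)) (Icc a b ×ˢ K) := by
      fun_prop
    refine S.cont.comp hm ?_
    rintro ⟨t, x⟩ ⟨ht, hx⟩
    simp only at ht hx
    exact ⟨⟨by simp only; linarith [ht.1], by simp only; linarith [ht.2]⟩, hK hx⟩
  · refine S.cont.mono ?_
    rintro ⟨t, x⟩ ⟨ht, hx⟩
    simp only at ht hx
    exact ⟨⟨by simp only; linarith [ht.1], by simp only; linarith [ht.2]⟩, hK hx⟩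

theorem Sol.W_dt (S : Sol Ω f V T u) {τ t : ℝ} (hτ : 0 < τ) (ht : 0 < t) (htT : t + τ < T)
    {x : EuclideanSpace ℝ (Fin n)} (hx : x ∈ Ω) :
    HasDerivAt (fun s => Wq u τ s x) (τ⁻¹ * (deriv (fun s => u s x) (t + τ) - deriv (fun s => u s x) t)) t := by
  have h1 := (S.dt (t + τ) ⟨by linarith, htT⟩ x hx).hasDerivAt
  have h2 := (S.dt t ⟨ht, by linarith⟩ x hx).hasDerivAt
  exact ((h1.comp_add_const t τ).sub h2).const_mul τ⁻¹

theorem Sol.W_dx (S : Sol Ω f V T u) {τ t : ℝ} (hτ : 0 < τ) (ht : 0 < t) (htT : t + τ < T)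
    {x : EuclideanSpace ℝ (Fin n)} (hx : x ∈ Ω) (e : EuclideanSpace ℝ (Fin n)) :
    H2 (fun r : ℝ => Wq u τ t (x + r • e))
      (τ⁻¹ * (fderiv ℝ (u (t + τ)) x e - fderiv ℝ (u t) x e))
      (τ⁻¹ * (fderiv ℝ (fun y => fderiv ℝ (u (t + τ)) y e) x e
        - fderiv ℝ (fun y => fderiv ℝ (u t) y e) x e)) := by
  have h1 := H2.of_contDiffAt (S.dx (t + τ) ⟨by linarith, htT⟩ x hx) e
  have h2 := H2.of_contDiffAt (S.dx t ⟨ht, by linarith⟩ x hx) e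
  exact (h1.sub h2).const_mul τ⁻¹

theorem Sol.W_eq (S : Sol Ω f V T u) {τ t : ℝ} (hτ : 0 < τ) (ht : 0 < t) (htT : t + τ < T)
    {x : EuclideanSpace ℝ (Fin n)} (hx : x ∈ Ω) :
    (τ⁻¹ * (deriv (fun s => u s x) (t + τ) - deriv (fun s => u s x) t)) -
    ∑ i : Fin n, (τ⁻¹ * (fderiv ℝ (fun y => fderiv ℝ (u (t + τ)) y (EuclideanSpace.single i 1)) x
      (EuclideanSpace.single i 1)
        - fderiv ℝ (fun y => fderiv ℝ (u t) y (EuclideanSpace.single i 1)) x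
        (EuclideanSpace.single i 1))) = V x * (τ⁻¹ * (f (u (t + τ) x) - f (u t x))) := by
  rw [S.heq (t + τ) ⟨by linarith, htT⟩ x hx, S.heq t ⟨ht, by linarith⟩ x hx,
    ← Finset.mul_sum, Finset.sum_sub_distrib]
  unfold lap
  ring

theorem Sol.step (S : Sol Ω f V T u) {Cf Vm : ℝ} (hCf : 0 ≤ Cf)
    (hf : ∀ a b, 0 ≤ a → a ≤ b → -Cf * (b - a) ≤ f b - f a)
    (hV0 : ∀ x ∈ Ω, 0 ≤ V x) (hVm : ∀ x ∈ Ω, V x ≤ Vm)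
    {y : EuclideanSpace ℝ (Fin n)} {r R R' a c τ0 t2 : ℝ} (hr : 0 < r) (hrR : r ≤ R)
    (hR : closedBall y R ⊆ Ω) (ha : 0 < a) (hc : 0 < c)
    (hW : ∀ τ, 0 < τ → τ < τ0 → a + τ < T → ∀ x ∈ closedBall y r, c ≤ Wq u τ a x)
    (hR'0 : 0 < R') (hR' : R' < R) (hat : a < t2) :
    ∃ c' > 0, ∀ τ, 0 < τ → τ < τ0 → ∀ t, t2 ≤ t → t + τ < T → ∀ x ∈ closedBall y R',
      c' ≤ Wq u τ t x := by
  have hyΩ : y ∈ Ω := hR (mem_closedBall_self (by linarith))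
  have hVm0 : 0 ≤ Vm := (hV0 y hyΩ).trans (hVm y hyΩ)
  set C := Vm * Cf with hC
  have hC0 : 0 ≤ C := by positivity
  set β0 := (R ^ 2 - r ^ 2) / (t2 - a) with hβ0
  have hRr : 0 ≤ R ^ 2 - r ^ 2 := by nlinarith
  have hβ00 : 0 ≤ β0 := div_nonneg hRr (by linarith)
  set lam := C + (2 * β0 + 4 * n + 8) ^ 2 / (16 * r ^ 2) with hlam
  have hlam0 : 0 ≤ lam := by positivity
  have hRR : 0 < R ^ 2 - R' ^ 2 := by nlinarith
  refine ⟨c / r ^ 4 * (Real.exp (-lam * T) * (R ^ 2 - R' ^ 2) ^ 2), by positivity, ?_⟩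
  intro τ hτ hτ0 t ht htT x hx
  have htpos : 0 < t - a := by linarith
  set β := (R ^ 2 - r ^ 2) / (t - a) with hβ
  have hβ1 : 0 ≤ β := div_nonneg hRr htpos.le
  have hββ : β ≤ β0 := div_le_div_of_nonneg_left hRr (by linarith) (by linarith)
  have hβe : β * (t - a) = R ^ 2 - r ^ 2 := by rw [hβ]; field_simp
  have key := barrier y r R β lam C c a t hr hβ1 (by linarith) (by linarith) ?_ hc (Wq u τ)
    (S.W_cont hτ ha htT hR) ?_ ?_ ?_ t ⟨by linarith, le_rfl⟩ x
    (closedBall_subset_closedBall hR'.le hx)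
  · refine le_trans ?_ key
    rw [mem_closedBall, dist_eq_norm] at hx
    have h1 : R ^ 2 - R' ^ 2 ≤ max (r ^ 2 + β * (t - a) - ‖x - y‖ ^ 2) 0 := by
      refine le_trans ?_ (le_max_left _ _)
      have : ‖x - y‖ ^ 2 ≤ R' ^ 2 := pow_le_pow_left₀ (norm_nonneg _) hx 2
      linarith
    have h2 : -lam * T ≤ -lam * (t - a) := by nlinarith
    gcongr
  · have h1 : (2 * β + 4 * n + 8) ^ 2 ≤ (2 * β0 + 4 * n + 8) ^ 2 := by gcongr
    have h2 : 32 * r ^ 2 * (lam - C) = 2 * (2 * β0 + 4 * n + 8) ^ 2 := by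
      rw [hlam]; field_simp; ring
    have h3 : 0 < (2 * β0 + 4 * n + 8) ^ 2 := by positivity
    rw [h2]; linarith
  · intro s hs z hz
    exact S.W_nonneg hτ (by linarith [hs.1]) (by linarith [hs.2]) (hR hz)
  · intro z hz
    exact hW τ hτ hτ0 (by linarith) z hz
  · intro s hs z hz
    have hzΩ := hR (ball_subset_closedBall hz)
    have hs0 : 0 < s := by linarith [hs.1]
    have hsT : s + τ < T := by linarith [hs.2]
    refine ⟨_, _, _, S.W_dt hτ hs0 hsT hzΩ, fun i => S.W_dx hτ hs0 hsT hzΩ _, ?_⟩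
    rw [S.W_eq hτ hs0 hsT hzΩ]
    have h1 := hf _ _ (S.nonneg s ⟨hs0, by linarith⟩ z hzΩ) (S.mono hs0 (by linarith : s ≤ s + τ) hsT hzΩ)
    have h2 := S.W_nonneg hτ hs0 hsT hzΩ
    have h3 : -Cf * Wq u τ s z ≤ τ⁻¹ * (f (u (s + τ) z) - f (u s z)) := by
      unfold Wq
      have := mul_le_mul_of_nonneg_left h1 (inv_nonneg.2 hτ.le)
      linarith
    have h4 := mul_le_mul_of_nonneg_left h3 (hV0 z hzΩ)
    have h5 := mul_le_mul_of_nonneg_right (hVm z hzΩ) (mul_nonneg hCf h2)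
    rw [hC]
    linarith

/-- uniform positivity of the difference quotients on compact sets -/
theorem Sol.chain (S : Sol Ω f V T u) (hconn : IsPreconnected Ω) {Cf Vm : ℝ} (hCf : 0 ≤ Cf)
    (hf : ∀ a b, 0 ≤ a → a ≤ b → -Cf * (b - a) ≤ f b - f a)
    (hV0 : ∀ x ∈ Ω, 0 ≤ V x) (hVm : ∀ x ∈ Ω, V x ≤ Vm)
    {y : EuclideanSpace ℝ (Fin n)} {r t1 c τ0 : ℝ} (hr : 0 < r) (hτ0 : 0 < τ0)
    (hR : closedBall y r ⊆ Ω) (ht1 : 0 < t1) (hc : 0 < c)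
    (hW : ∀ τ, 0 < τ → τ < τ0 → t1 + τ < T → ∀ x ∈ closedBall y r, c ≤ Wq u τ t1 x)
    (t2 : ℝ) (ht2 : t1 < t2) (K : Set (EuclideanSpace ℝ (Fin n))) (hK : IsCompact K) (hKΩ : K ⊆ Ω) :
    ∃ c' > 0, ∃ τ1 > 0, ∀ τ, 0 < τ → τ < τ1 → ∀ t, t2 ≤ t → t + τ < T → ∀ x ∈ K,
      c' ≤ Wq u τ t x := by
  set G : Set (EuclideanSpace ℝ (Fin n)) := {y | ∃ r > 0, ∀ t2 > t1, ∃ c > 0, ∃ τ0 > 0,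
    ∀ τ, 0 < τ → τ < τ0 → ∀ t, t2 ≤ t → t + τ < T → ∀ x ∈ ball y r, c ≤ Wq u τ t x} with hG
  have hGo : IsOpen G := by
    rw [Metric.isOpen_iff]
    rintro y ⟨r, hr, h⟩
    refine ⟨r / 2, by positivity, fun z hz => ⟨r / 2, by positivity, fun t2 ht2 => ?_⟩⟩
    obtain ⟨c, hc, τ0, hτ0, h⟩ := h t2 ht2
    refine ⟨c, hc, τ0, hτ0, fun τ h1 h2 t h3 h4 x hx => h τ h1 h2 t h3 h4 x ?_⟩
    rw [mem_ball] at hz hx ⊢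
    linarith [dist_triangle x z y]
  have hyG : y ∈ G := by
    refine ⟨r / 2, by positivity, fun t2 ht2 => ?_⟩
    obtain ⟨c', hc', h⟩ := S.step hCf hf hV0 hVm hr le_rfl hR ht1 hc hW
      (by positivity : 0 < r / 2) (by linarith) ht2
    exact ⟨c', hc', τ0, hτ0, fun τ h1 h2 t h3 h4 x hx => h τ h1 h2 t h3 h4 x (ball_subset_closedBall hx)⟩
  have hΩG : Ω ⊆ G := by
    refine hconn.subset_of_closure_inter_subset hGo ⟨y, hR (mem_closedBall_self hr.le), hyG⟩ ?_
    rintro z ⟨hz, hzΩ⟩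
    obtain ⟨ρ, hρ, hρΩ⟩ := Metric.isOpen_iff.1 S.hΩ z hzΩ
    obtain ⟨w, hwG, hwz⟩ := Metric.mem_closure_iff.1 hz (ρ / 4) (by positivity)
    obtain ⟨r', hr', hg⟩ := hwG
    refine ⟨ρ / 8, by positivity, fun t2 ht2 => ?_⟩
    obtain ⟨c, hc, τ0, hτ0, h⟩ := hg ((t1 + t2) / 2) (by linarith)
    have hsub : closedBall w (ρ / 2) ⊆ Ω := by
      intro v hv
      apply hρΩ
      rw [mem_closedBall] at hv
      rw [mem_ball]
      linarith [dist_triangle v w z, dist_comm z w]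
    obtain ⟨c', hc', h'⟩ := S.step hCf hf hV0 hVm (y := w) (r := min (r' / 2) (ρ / 2)) (R := ρ / 2)
      (R' := 3 * ρ / 8) (a := (t1 + t2) / 2) (τ0 := τ0) (t2 := t2)
      (by positivity) (min_le_right _ _) hsub (by linarith) hc
      (fun τ h1 h2 h3 x hx => h τ h1 h2 _ le_rfl h3 x (by
        rw [mem_closedBall] at hx
        rw [mem_ball]
        linarith [min_le_left (r' / 2) (ρ / 2)])) (by positivity) (by linarith) (by linarith)
    refine ⟨c', hc', τ0, hτ0, fun τ h1 h2 t h3 h4 x hx => h' τ h1 h2 t h3 h4 x ?_⟩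
    rw [mem_ball] at hx
    rw [mem_closedBall]
    linarith [dist_triangle x z w]
  refine hK.induction_on (p := fun K => ∃ c' > 0, ∃ τ1 > 0, ∀ τ, 0 < τ → τ < τ1 → ∀ t, t2 ≤ t →
    t + τ < T → ∀ x ∈ K, c' ≤ Wq u τ t x) ?_ ?_ ?_ ?_
  · exact ⟨1, one_pos, 1, one_pos, by simp⟩
  · rintro s t hst ⟨c, hc, τ1, hτ1, h⟩
    exact ⟨c, hc, τ1, hτ1, fun τ h1 h2 t h3 h4 x hx => h τ h1 h2 t h3 h4 x (hst hx)⟩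
  · rintro s t ⟨c, hc, τ1, hτ1, h⟩ ⟨c', hc', τ1', hτ1', h'⟩
    refine ⟨min c c', lt_min hc hc', min τ1 τ1', lt_min hτ1 hτ1', ?_⟩
    rintro τ h1 h2 t h3 h4 x (hx | hx)
    · exact (min_le_left _ _).trans (h τ h1 (h2.trans_le (min_le_left _ _)) t h3 h4 x hx)
    · exact (min_le_right _ _).trans (h' τ h1 (h2.trans_le (min_le_right _ _)) t h3 h4 x hx)
  · intro x hx
    obtain ⟨r, hr, h⟩ := hΩG (hKΩ hx)
    exact ⟨ball x r, mem_nhdsWithin_of_mem_nhds (ball_mem_nhds x hr), h t2 ht2⟩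

/-- Baire category: start of the positivity -/
theorem Sol.base (S : Sol Ω f V T u) (hfc : ContinuousOn f (Ici 0)) (hVc : ContinuousOn V Ω)
    {t1 : ℝ} (ht1 : t1 ∈ Ioo 0 T) {x1 : EuclideanSpace ℝ (Fin n)} (hx1 : x1 ∈ Ω)
    (hpos : 0 < deriv (fun s => u s x1) t1) :
    ∃ y, ∃ r > 0, ∃ c > 0, ∃ τ0 > 0, closedBall y r ⊆ Ω ∧
      ∀ τ, 0 < τ → τ < τ0 → t1 + τ < T → ∀ x ∈ closedBall y r, c ≤ Wq u τ t1 x := by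
  have hgc : ContinuousAt (fun x => deriv (fun s => u s x) t1) x1 := by
    have h1 : ContinuousAt (fun x => lap (fun y => u t1 y) x + V x * f (u t1 x)) x1 := by
      have hd := S.dx t1 ht1 x1 hx1
      refine ContinuousAt.add ?_ (ContinuousAt.mul (hVc.continuousAt (S.hΩ.mem_nhds hx1)) ?_)
      · unfold lap
        refine tendsto_finsetSum _ fun i _ => ?_
        set e : EuclideanSpace ℝ (Fin n) := EuclideanSpace.single i 1
        have h1 : ContDiffAt ℝ 1 (fderiv ℝ (fun y => u t1 y)) x1 := hd.fderiv_right (by norm_num)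
        have h2 : ContDiffAt ℝ 1 (fun y => fderiv ℝ (fun y => u t1 y) y e) x1 :=
          h1.clm_apply contDiffAt_const
        have h3 : ContDiffAt ℝ 0 (fderiv ℝ (fun y => fderiv ℝ (fun y => u t1 y) y e)) x1 :=
          h2.fderiv_right (by norm_num)
        exact (h3.clm_apply contDiffAt_const).continuousAt
      · have := hfc (u t1 x1) (S.nonneg t1 ht1 x1 hx1)
        refine this.tendsto.comp ?_
        refine tendsto_nhdsWithin_iff.2 ⟨S.cont_x ht1 hx1, ?_⟩
        filter_upwards [S.hΩ.mem_nhds hx1] with x hx using S.nonneg t1 ht1 x hx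
    refine h1.congr ?_
    filter_upwards [S.hΩ.mem_nhds hx1] with x hx using (S.heq t1 ht1 x hx).symm
  set g := fun x => deriv (fun s => u s x) t1 with hg
  set c := g x1 / 2 with hc
  have hc0 : 0 < c := half_pos hpos
  have hev : ∀ᶠ x in nhds x1, c < g x := hgc.eventually (lt_mem_nhds (half_lt_self hpos))
  obtain ⟨ρ0, hρ0, hρb⟩ := Metric.eventually_nhds_iff_ball.1 (hev.and (S.hΩ.mem_nhds hx1))
  set ρ := ρ0 / 2
  have hρ : 0 < ρ := half_pos hρ0
  have hρs : closedBall x1 ρ ⊆ ball x1 ρ0 := closedBall_subset_ball (half_lt_self hρ0)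
  set F : ℕ → Set (EuclideanSpace ℝ (Fin n)) := fun N => {x ∈ closedBall x1 ρ |
    ∀ τ, 0 < τ → τ < 1 / ((N:ℝ) + 1) → t1 + τ < T → c ≤ Wq u τ t1 x} with hF
  have hFc : ∀ N, IsClosed (F N) := by
    intro N
    have hWc : ∀ τ, 0 < τ → t1 + τ < T → ContinuousOn (fun x => Wq u τ t1 x) (closedBall x1 ρ) := by
      intro τ h1 h3 x hx
      have hxΩ := (hρb x (hρs hx)).2
      have a1 := S.cont_x ht1 hxΩ
      have a2 := S.cont_x (t := t1 + τ) ⟨by linarith [ht1.1], h3⟩ hxΩ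
      exact ((a2.sub a1).const_mul τ⁻¹).continuousWithinAt
    have : F N = closedBall x1 ρ ∩ ⋂ τ : {τ : ℝ // 0 < τ ∧ τ < 1 / ((N:ℝ) + 1) ∧ t1 + τ < T},
        (closedBall x1 ρ ∩ (fun x => Wq u τ t1 x) ⁻¹' Ici c) := by
      ext x
      simp only [hF, mem_setOf_eq, mem_inter_iff, mem_iInter, mem_preimage, mem_Ici, Subtype.forall]
      constructor
      · rintro ⟨h1, h2⟩
        exact ⟨h1, fun τ h => ⟨h1, h2 τ h.1 h.2.1 h.2.2⟩⟩
      · rintro ⟨h1, h2⟩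
        exact ⟨h1, fun τ a1 a2 a3 => (h2 τ ⟨a1, a2, a3⟩).2⟩
    rw [this]
    refine isClosed_closedBall.inter (isClosed_iInter fun τ => ?_)
    exact (hWc τ τ.2.1 τ.2.2.2).preimage_isClosed_of_isClosed isClosed_closedBall isClosed_Ici
  have hcov : ⋃ N, (F N ∪ (ball x1 ρ)ᶜ) = univ := by
    rw [eq_univ_iff_forall]
    intro x
    rw [mem_iUnion]
    by_cases hx : x ∈ ball x1 ρ
    · have hxb := hρs (ball_subset_closedBall hx)
      obtain ⟨hgx, hxΩ⟩ := hρb x hxb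
      have hd := (S.dt t1 ht1 x hxΩ).hasDerivAt
      have hsl := hd.tendsto_slope_zero_right.eventually (lt_mem_nhds hgx)
      obtain ⟨ε, hε, hεs⟩ := mem_nhdsGT_iff_exists_Ioo_subset.1 hsl
      obtain ⟨N, hN⟩ := exists_nat_one_div_lt (show (0:ℝ) < ε from hε)
      refine ⟨N, Or.inl ⟨ball_subset_closedBall hx, fun τ h1 h2 _ => ?_⟩⟩
      have := hεs ⟨h1, h2.trans hN⟩
      simp only [mem_setOf_eq, smul_eq_mul] at this
      exact this.le
    · exact ⟨0, Or.inr hx⟩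
  have hdense := dense_iUnion_interior_of_closed
    (fun N => (hFc N).union isOpen_ball.isClosed_compl) hcov
  obtain ⟨y, hyb, hyi⟩ := hdense.inter_open_nonempty _ isOpen_ball ⟨x1, mem_ball_self hρ⟩
  obtain ⟨N, hN⟩ := mem_iUnion.1 hyi
  have hnb : ball x1 ρ ∩ interior (F N ∪ (ball x1 ρ)ᶜ) ∈ nhds y :=
    (isOpen_ball.inter isOpen_interior).mem_nhds ⟨hyb, hN⟩
  obtain ⟨r, hr, hrs⟩ := Metric.nhds_basis_closedBall.mem_iff.1 hnb
  refine ⟨y, r, hr, c, hc0, 1 / ((N:ℝ) + 1), by positivity, ?_, ?_⟩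
  · intro x hx
    exact (hρb x (hρs (ball_subset_closedBall (hrs hx).1))).2
  · intro τ h1 h2 h3 x hx
    rcases interior_subset (hrs hx).2 with h | h
    · exact h.2 τ h1 h2 h3
    · exact absurd (hrs hx).1 h

end


noncomputable def Qe (j : ℕ) (q φ s g k y F F1 F2 : ℝ) : ℝ :=
  ((j+4)*((j+3)*φ^(j+2))*g^2+(j+4)*φ^(j+3)*k)*F + 2*((j+4)*φ^(j+3)*g)*(F1*y) + φ^(j+4)*(F2*y^2)
    + (((j+2)*((j+1)*φ^j)*g^2+(j+2)*φ^(j+1)*k)*s^q + 2*((j+2)*φ^(j+1)*g)*(q*s^(q-1)*y)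
      + φ^(j+2)*(q*((q-1)*s^(q-2))*y^2))

theorem Qe_nonneg (j : ℕ) (q φ s y F F1 F2 : ℝ) (hq : 1 < q) (hφ : 0 ≤ φ) (hs : 0 < s)
    (hF2 : 0 ≤ F2) : 0 ≤ Qe j q φ s 0 0 y F F1 F2 := by
  unfold Qe
  have h1 : 0 ≤ φ^(j+4)*(F2*y^2) := by positivity
  have h2 : 0 ≤ q - 1 := by linarith
  have h3 : 0 ≤ φ^(j+2)*(q*((q-1)*s^(q-2))*y^2) := by positivity
  simp only [ne_eq, OfNat.ofNat_ne_zero, not_false_eq_true, zero_pow, mul_zero, zero_mul, add_zero,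
    zero_add]
  linarith

noncomputable def Hf (f : ℝ → ℝ) (j : ℕ) (q φ s : ℝ) : ℝ := φ^(j+4) * f s + φ^(j+2) * s^q

theorem H2.pow {γ : ℝ → ℝ} {a b : ℝ} (h : H2 γ a b) (m : ℕ) :
    H2 (fun r => γ r ^ (m+2)) ((m+2) * (γ 0)^(m+1) * a)
      ((m+2)*((m+1)*(γ 0)^m)*a^2 + (m+2)*(γ 0)^(m+1)*b) := by
  have h1 : ∀ s : ℝ, HasDerivAt (fun s : ℝ => s^(m+2)) ((m+2) * s^(m+1)) s := by
    intro s
    have := hasDerivAt_pow (m+2) s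
    push_cast at this
    exact this
  have h2 : HasDerivAt (fun s : ℝ => ((m:ℝ)+2) * s^(m+1)) ((m+2)*((m+1)*(γ 0)^m)) (γ 0) := by
    have := (hasDerivAt_pow (m+1) (γ 0)).const_mul ((m:ℝ)+2)
    push_cast at this
    exact this
  exact h.comp (F := fun s : ℝ => s^(m+2)) (F1 := fun s : ℝ => ((m:ℝ)+2) * s^(m+1))
    (Eventually.of_forall h1) h2

theorem H2.cast {γ : ℝ → ℝ} {a b a' b' : ℝ} (h : H2 γ a b) (ha : a = a') (hb : b = b') :
    H2 γ a' b' := by subst ha hb; exact h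

theorem H2.Hf {f : ℝ → ℝ} (j : ℕ) (q : ℝ) {γ σ : ℝ → ℝ} {g k y z : ℝ} (hγ : H2 γ g k) (hσ : H2 σ y z)
    (hs : 0 < σ 0)
    (hf1 : ∀ s > 0, HasDerivAt f (deriv f s) s)
    (hf2 : ∀ s > 0, HasDerivAt (deriv f) (deriv (deriv f) s) s) :
    ∃ a, H2 (fun r => Hf f j q (γ r) (σ r)) a
      (Qe j q (γ 0) (σ 0) g k y (f (σ 0)) (deriv f (σ 0)) (deriv (deriv f) (σ 0))
        + ((γ 0)^(j+4) * deriv f (σ 0) + (γ 0)^(j+2) * (q * (σ 0)^(q-1))) * z) := by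
  have e1 := hσ.comp (F := f) (F1 := deriv f)
    ((lt_mem_nhds hs).mono fun s hs => hf1 s hs) (hf2 _ hs)
  have e2 := hσ.comp (F := fun s => s^q) (F1 := fun s => q * s^(q-1)) (F2 := q*((q-1)*(σ 0)^(q-2)))
    ((lt_mem_nhds hs).mono fun s hs => Real.hasDerivAt_rpow_const (Or.inl (ne_of_gt hs)))
    (by
      have := (Real.hasDerivAt_rpow_const (x := σ 0) (p := q-1) (Or.inl hs.ne')).const_mul q
      rw [show q - 2 = q - 1 - 1 by ring]
      exact this)
  have e3 := ((hγ.pow (j+2)).mul e1).add ((hγ.pow j).mul e2)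
  refine ⟨_, e3.cast rfl ?_⟩
  unfold Qe
  push_cast
  ring

theorem scalar_key (n : ℕ) (p C1 v0 : ℝ) (hp : 1 < p) (hC1 : 0 ≤ C1) (hv0 : 0 < v0) (f : ℝ → ℝ)
    (hf_nonneg : ∀ s ≥ (0:ℝ), 0 ≤ f s)
    (hf_C2 : ContDiffOn ℝ 2 f (Ici 0))
    (hf_conv : ConvexOn ℝ (Ici 0) f)
    (hf_lim : Tendsto (fun s : ℝ => s ^ (-p) * f s) atTop (nhds 1))
    (hf_deriv : ∃ C₀ > 0, ∀ s ≥ (0:ℝ), |deriv f s| ≤ C₀ * (1 + s ^ (p - 1))) :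
    ∃ (j : ℕ) (q CH : ℝ), 1 < q ∧ 0 < CH ∧ ∀ φ s, 0 < φ → φ ≤ 1 → 0 ≤ s →
      Hf f j q φ s ≤ CH ∨ (0 < s ∧ 0 ≤ deriv f s * s^q - q * s^(q-1) * f s ∧
        ∀ W, v0 ≤ W → ∀ g k y : Fin n → ℝ, (∀ i, |g i| ≤ C1) → (∀ i, |k i| ≤ C1) →
          0 ≤ W * (φ^(j+2) * (deriv f s * s^q - q * s^(q-1) * f s)) +
            ∑ i, Qe j q φ s (g i) (k i) (y i) (f s) (deriv f s) (deriv (deriv f) s)) := by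
  obtain ⟨l, hl⟩ := exists_nat_ge (p / (p-1))
  have hp1 : 0 < p - 1 := by linarith
  have hlp : p ≤ (p-1) * ((l:ℝ)+1) := by
    rw [div_le_iff₀ hp1] at hl
    linarith
  obtain ⟨κ, hκ⟩ : ∃ κ, κ = (p-1)/4 := ⟨_, rfl⟩
  have hκ0 : 0 < κ := by rw [hκ]; linarith
  obtain ⟨q, hq⟩ : ∃ q, q = 1 + 3*κ := ⟨_, rfl⟩
  have hq1 : 1 < q := by linarith
  have hqp : q < p := by linarith
  obtain ⟨S0, hS0, c1, hc1, C2, hC2, hgr⟩ := f_growth p q hp hq1 hqp f hf_C2 hf_conv hf_lim hf_deriv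
  obtain ⟨-, -, hf2, -, -⟩ := f_facts f hf_C2 hf_conv
  obtain ⟨D, hD, hQ⟩ := Qbound (2*l) C1 C2 q hC1 hC2.le hq1
  obtain ⟨Λ, hΛ1, hΛ⟩ : ∃ Λ : ℝ, 1 ≤ Λ ∧ n * D * 2 ≤ v0 * c1 * Λ := by
    refine ⟨max 1 (n*D*2/(v0*c1)), le_max_left _ _, ?_⟩
    have := le_max_right 1 (n*D*2/(v0*c1))
    rw [div_le_iff₀ (by positivity)] at this
    linarith
  have hΛ0 : 0 < Λ := by linarith
  obtain ⟨S1, hS1⟩ : ∃ S1 : ℝ, ∀ s ≥ S1, S0 ≤ s ∧ Λ ≤ s^κ := by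
    have h := (tendsto_rpow_atTop hκ0).eventually_ge_atTop Λ
    have := (eventually_ge_atTop S0).and h
    exact eventually_atTop.1 this
  have hfc : ContinuousOn (fun s => f s + s^q) (Icc 0 S1) := by
    refine (hf_C2.continuousOn.mono Icc_subset_Ici_self).add ?_
    exact (Real.continuous_rpow_const (by linarith)).continuousOn
  obtain ⟨B, hB⟩ := (isCompact_Icc.bddAbove_image hfc)
  have hB : ∀ s, 0 ≤ s → s ≤ S1 → f s + s^q ≤ B := fun s h1 h2 => hB ⟨s, ⟨h1, h2⟩, rfl⟩
  refine ⟨2*l, q, max B ((C2+1) * Λ^(l+1)), hq1, lt_max_of_lt_right (by positivity), ?_⟩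
  intro φ s hφ hφ1 hs
  by_cases hsS : s ≤ S1
  · left
    refine le_trans ?_ ((hB s hs hsS).trans (le_max_left _ _))
    unfold Hf
    have h1 : φ^(2*l+4) ≤ 1 := pow_le_one₀ hφ.le hφ1
    have h2 : φ^(2*l+2) ≤ 1 := pow_le_one₀ hφ.le hφ1
    have h3 := hf_nonneg s hs
    have h4 : 0 ≤ s^q := by positivity
    nlinarith
  push Not at hsS
  obtain ⟨hsS0, hbΛ⟩ := hS1 s hsS.le
  obtain ⟨g1, g2, g3, g4⟩ := hgr s hsS0
  have hs1 : 1 ≤ s := by linarith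
  have hs0 : 0 < s := by linarith
  set b := s^κ with hb
  have hb1 : 1 ≤ b := by linarith
  have ep : s^p = s^q * b := by rw [hb, ← Real.rpow_add hs0]; congr 1; linarith
  have ep1 : s^(p-1) = s^(q-1) * b := by rw [hb, ← Real.rpow_add hs0]; congr 1; linarith
  have ebn : ∀ m : ℕ, b^m = s^(κ * m) := fun m => by rw [hb, ← Real.rpow_natCast, ← Real.rpow_mul hs]
  have epq : s^(p+q-1) = s^q * b^4 := by
    rw [ebn, ← Real.rpow_add hs0]; congr 1; push_cast; linarith
  have hsq : 0 < s^q := by positivity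
  have hspq : s^q ≤ s^p := Real.rpow_le_rpow_of_exponent_le hs1 hqp.le
  by_cases hG : φ^2 * b^4 < Λ
  · left
    refine le_trans ?_ (le_max_right _ _)
    have h1 : s^p ≤ (b^4)^(l+1) := by
      rw [← pow_mul, ebn]
      apply Real.rpow_le_rpow_of_exponent_le hs1
      push_cast
      rw [hκ]; linarith
    have h2 : φ^(2*l+2) * s^p ≤ Λ^(l+1) := by
      calc φ^(2*l+2) * s^p ≤ φ^(2*l+2) * (b^4)^(l+1) := by gcongr
        _ = (φ^2*b^4)^(l+1) := by rw [mul_pow, ← pow_mul]; ring_nf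
        _ ≤ Λ^(l+1) := by gcongr
    have h3 : φ^(2*l+4) ≤ φ^(2*l+2) := pow_le_pow_of_le_one hφ.le hφ1 (by omega)
    unfold Hf
    calc φ^(2*l+4) * f s + φ^(2*l+2) * s^q ≤ φ^(2*l+2) * (C2 * s^p) + φ^(2*l+2) * s^p := by
          have := hf_nonneg s hs
          gcongr
      _ = (C2+1) * (φ^(2*l+2) * s^p) := by ring
      _ ≤ _ := by gcongr
  push Not at hG
  right
  rw [epq] at g4
  have hpos : 0 ≤ deriv f s * s^q - q * s^(q-1) * f s := le_trans (by positivity) g4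
  refine ⟨hs0, hpos, ?_⟩
  intro W hW g k y hg hk
  have hQi : ∀ i, -D*(s^q*φ^(2*l)*(φ^2*b^2+1)) ≤
      Qe (2*l) q φ s (g i) (k i) (y i) (f s) (deriv f s) (deriv (deriv f) s) := by
    intro i
    refine hQ φ s (g i) (k i) (y i) (f s) (deriv f s) (deriv (deriv f) s) b hφ hφ1 hs0 (hg i) (hk i)
      (hf_nonneg s hs) ?_ ?_ (hf2 s hs0) hb1
    · rw [mul_assoc, ← ep]; exact g2
    · rw [mul_assoc, ← ep1]; exact g3
  have hsum : ∑ i : Fin n, (-D*(s^q*φ^(2*l)*(φ^2*b^2+1))) ≤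
      ∑ i, Qe (2*l) q φ s (g i) (k i) (y i) (f s) (deriv f s) (deriv (deriv f) s) :=
    Finset.sum_le_sum fun i _ => hQi i
  rw [Finset.sum_const, Finset.card_univ, Fintype.card_fin, nsmul_eq_mul] at hsum
  have h1 : v0 * (φ^(2*l+2) * (c1 * (s^q*b^4))) ≤
      W * (φ^(2*l+2) * (deriv f s * s^q - q * s^(q-1) * f s)) := by
    have hW0 : 0 ≤ W := hv0.le.trans hW
    gcongr
  have hX : 0 < s^q*φ^(2*l) := by positivity
  have h2 : Λ * (φ^2*b^2+1) ≤ 2 * (φ^2 * b^4) := by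
    have : Λ * (φ^2*b^2) ≤ φ^2*b^4 := by
      have : Λ ≤ b^2 := by nlinarith
      calc Λ * (φ^2*b^2) ≤ b^2 * (φ^2*b^2) := by gcongr
        _ = _ := by ring
    linarith
  have h3 : n * D * (φ^2*b^2+1) ≤ v0 * c1 * (φ^2*b^4) := by
    have a1 : n * D * 2 * (φ^2*b^2+1) ≤ v0 * c1 * Λ * (φ^2*b^2+1) := by gcongr
    have a2 : v0 * c1 * (Λ * (φ^2*b^2+1)) ≤ v0 * c1 * (2 * (φ^2 * b^4)) := by gcongr
    linarith
  have h4 := mul_le_mul_of_nonneg_left h3 hX.le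
  have h5 : v0 * (φ^(2*l+2) * (c1 * (s^q*b^4))) = s^q*φ^(2*l) * (v0 * c1 * (φ^2*b^4)) := by ring
  have h6 : (n:ℝ) * (-D*(s^q*φ^(2*l)*(φ^2*b^2+1))) = -(s^q*φ^(2*l) * (n * D * (φ^2*b^2+1))) := by ring
  linarith


section
variable {n : ℕ} {Ω : Set (EuclideanSpace ℝ (Fin n))} {f : ℝ → ℝ}
    {V : EuclideanSpace ℝ (Fin n) → ℝ} {T : ℝ} {u : ℝ → EuclideanSpace ℝ (Fin n) → ℝ}

theorem Sol.Hf_cont (S : Sol Ω f V T u) (hfc : ContinuousOn f (Ici 0)) {j : ℕ} {q : ℝ} (hq : 1 < q)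
    {φ : EuclideanSpace ℝ (Fin n) → ℝ} (hφ : Continuous φ) :
    ContinuousOn (fun z : ℝ × EuclideanSpace ℝ (Fin n) => Hf f j q (φ z.2) (u z.1 z.2))
      (Ioo 0 T ×ˢ Ω) := by
  unfold Hf
  have hφ2 : ContinuousOn (fun z : ℝ × EuclideanSpace ℝ (Fin n) => φ z.2) (Ioo 0 T ×ˢ Ω) :=
    (hφ.comp continuous_snd).continuousOn
  refine ((hφ2.pow _).mul ?_).add ((hφ2.pow _).mul ?_)
  · exact hfc.comp S.cont fun z hz => S.nonneg z.1 hz.1 z.2 hz.2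
  · exact (Real.continuous_rpow_const (by linarith)).comp_continuousOn S.cont

theorem Sol.main (S : Sol Ω f V T u) (hfc : ContinuousOn f (Ici 0))
    (hf1 : ∀ s > 0, HasDerivAt f (deriv f s) s)
    (hf2 : ∀ s > 0, HasDerivAt (deriv f) (deriv (deriv f) s) s)
    (hf3 : ∀ s > 0, 0 ≤ deriv (deriv f) s)
    (hf4 : ∀ a b, 0 < a → a ≤ b → deriv f a * (b - a) ≤ f b - f a)
    {C0 p Vm : ℝ} (hp : 1 < p) (hC0 : 0 < C0) (hf5 : ∀ s ≥ (0:ℝ), |deriv f s| ≤ C0 * (1 + s ^ (p - 1)))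
    (hV0 : ∀ x ∈ Ω, 0 ≤ V x) (hVm : ∀ x ∈ Ω, V x ≤ Vm)
    {φ : EuclideanSpace ℝ (Fin n) → ℝ} (hφ : ContDiff ℝ 2 φ) (hφc : HasCompactSupport φ)
    (hφΩ : tsupport φ ⊆ Ω) (hφ01 : ∀ x, 0 ≤ φ x ∧ φ x ≤ 1)
    {v0 C1 : ℝ} (hφV : ∀ x, φ x ≠ 0 → v0 ≤ V x ∨ φ =ᶠ[nhds x] fun _ => 1)
    (hC1 : ∀ x i, |fderiv ℝ φ x (EuclideanSpace.single i 1)| ≤ C1 ∧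
      |fderiv ℝ (fun y => fderiv ℝ φ y (EuclideanSpace.single i 1)) x (EuclideanSpace.single i 1)| ≤ C1)
    {j : ℕ} {q CH : ℝ} (hq : 1 < q) (hCH : 0 < CH)
    (hkey : ∀ φ s, 0 < φ → φ ≤ 1 → 0 ≤ s →
      Hf f j q φ s ≤ CH ∨ (0 < s ∧ 0 ≤ deriv f s * s^q - q * s^(q-1) * f s ∧
        ∀ W, v0 ≤ W → ∀ g k y : Fin n → ℝ, (∀ i, |g i| ≤ C1) → (∀ i, |k i| ≤ C1) →
          0 ≤ W * (φ^(j+2) * (deriv f s * s^q - q * s^(q-1) * f s)) +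
            ∑ i, Qe j q φ s (g i) (k i) (y i) (f s) (deriv f s) (deriv (deriv f) s)))
    {c t0 τ1 : ℝ} (hc : 0 < c) (ht0 : t0 ∈ Ioo 0 T)
    (hW : ∀ τ, 0 < τ → τ < τ1 → ∀ t, t0 ≤ t → t + τ < T → ∀ x ∈ tsupport φ, c ≤ Wq u τ t x) :
    ∃ δ > 0, ∀ τ, 0 < τ → τ < τ1 → ∀ t, t0 ≤ t → t + τ < T → ∀ x ∈ tsupport φ,
      δ * Hf f j q (φ x) (u t x) ≤ Wq u τ t x := by
  have hK : IsCompact (tsupport φ) := hφc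
  have hHc := S.Hf_cont hfc (j := j) hq hφ.continuous
  obtain ⟨B, hB⟩ : ∃ B, ∀ x ∈ tsupport φ, Hf f j q (φ x) (u t0 x) ≤ B := by
    have : ContinuousOn (fun x => Hf f j q (φ x) (u t0 x)) (tsupport φ) :=
      hHc.comp (f := fun x => (t0, x)) (by fun_prop) fun x hx => ⟨ht0, hφΩ hx⟩
    obtain ⟨B, hB⟩ := hK.bddAbove_image this
    exact ⟨B, fun x hx => hB ⟨x, hx, rfl⟩⟩
  set δ := c / max CH B with hδ
  have hmx : 0 < max CH B := lt_max_of_lt_left hCH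
  have hδ0 : 0 < δ := by positivity
  have hδH : ∀ h, h ≤ max CH B → δ * h ≤ c := by
    intro h hh
    calc δ * h ≤ δ * max CH B := by gcongr
      _ = c := by rw [hδ]; field_simp
  refine ⟨δ, hδ0, ?_⟩
  intro τ hτ hτ1 t ht htT x hx
  -- bound for `u` on the cylinder
  have htI : t ∈ Ioo 0 T := ⟨by linarith [ht0.1], by linarith⟩
  obtain ⟨U, hU⟩ : ∃ U, ∀ x ∈ tsupport φ, u t x ≤ U := by
    have : ContinuousOn (fun x => u t x) (tsupport φ) :=
      fun x hx => (S.cont_x htI (hφΩ hx)).continuousWithinAt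
    obtain ⟨B, hB⟩ := hK.bddAbove_image this
    exact ⟨B, fun x hx => hB ⟨x, hx, rfl⟩⟩
  have hVm0 : 0 ≤ Vm := (hV0 x (hφΩ hx)).trans (hVm x (hφΩ hx))
  have hJ := min_principle (tsupport φ) hK t0 t
    (fun t x => Wq u τ t x - δ * Hf f j q (φ x) (u t x)) (Vm * (C0 * (1 + U^(p-1))) + 1) ?_ ?_ t
    ⟨ht, le_rfl⟩ x hx
  · linarith
  · refine (S.W_cont hτ ht0.1 htT hφΩ).sub (continuousOn_const.mul (hHc.mono ?_))
    rintro ⟨s, y⟩ ⟨hs, hy⟩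
    simp only at hs hy
    exact ⟨⟨by simp only; linarith [hs.1, ht0.1], by simp only; linarith [hs.2]⟩, hφΩ hy⟩
  intro s hs y hy hneg
  have hyΩ := hφΩ hy
  have hs0 : 0 < s := by linarith [hs.1, ht0.1]
  have hsT : s + τ < T := by linarith [hs.2]
  have hsI : s ∈ Ioo 0 T := ⟨hs0, by linarith⟩
  have hWc := hW τ hτ hτ1 s hs.1 hsT y hy
  have hHbig : max CH B < Hf f j q (φ y) (u s y) := by
    by_contra hcon
    push Not at hcon
    have := hδH _ hcon
    linarith
  have hts : t0 < s := by
    rcases hs.1.lt_or_eq with h | h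
    · exact h
    · subst h
      exact absurd ((hB y hy).trans (le_max_right CH B)) (not_le.2 hHbig)
  have hφy : φ y ≠ 0 := by
    intro h
    have : Hf f j q (φ y) (u s y) = 0 := by unfold Hf; rw [h]; simp
    rw [this] at hHbig
    linarith
  have hφy0 : 0 < φ y := lt_of_le_of_ne (hφ01 y).1 hφy.symm
  have hint : y ∈ interior (tsupport φ) := by
    refine interior_maximal subset_closure ?_ (show y ∈ Function.support φ from hφy)
    exact hφ.continuous.isOpen_support
  have hk := (hkey (φ y) (u s y) hφy0 (hφ01 y).2 (S.nonneg s hsI y hyΩ)).resolve_left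
    (fun h => absurd (h.trans (le_max_left CH B)) (not_le.2 hHbig))
  obtain ⟨hu0, hpos, hQ⟩ := hk
  have hd1 := S.W_dt hτ hs0 hsT hyΩ
  have hud := (S.dt s hsI y hyΩ).hasDerivAt
  set ut := deriv (fun s => u s y) s with hut
  set Hs := (φ y)^(j+4) * deriv f (u s y) + (φ y)^(j+2) * (q * (u s y)^(q-1)) with hHs
  have hd2 : HasDerivAt (fun s => Hf f j q (φ y) (u s y)) (Hs * ut) s := by
    unfold Hf
    have a1 := (HasDerivAt.comp s (hf1 (u s y) hu0) hud).const_mul ((φ y)^(j+4))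
    have a2 := (HasDerivAt.comp s (Real.hasDerivAt_rpow_const (x := u s y) (p := q) (Or.inl hu0.ne')) hud).const_mul ((φ y)^(j+2))
    have a3 := a1.add a2
    have e : Hs * ut = (φ y)^(j+4) * (deriv f (u s y) * ut) +
      (φ y)^(j+2) * ((q * (u s y)^(q-1)) * ut) := by rw [hHs]; ring
    rw [e]
    exact a3
  have hx2 : ∀ i : Fin n, ∃ a, H2 (fun r : ℝ => Hf f j q (φ (y + r • EuclideanSpace.single i 1))
      (u s (y + r • EuclideanSpace.single i 1))) a
      (Qe j q (φ y) (u s y) (fderiv ℝ φ y (EuclideanSpace.single i 1))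
        (fderiv ℝ (fun y => fderiv ℝ φ y (EuclideanSpace.single i 1)) y (EuclideanSpace.single i 1))
        (fderiv ℝ (u s) y (EuclideanSpace.single i 1))
        (f (u s y)) (deriv f (u s y)) (deriv (deriv f) (u s y))
        + Hs * (fderiv ℝ (fun y => fderiv ℝ (u s) y (EuclideanSpace.single i 1)) y
          (EuclideanSpace.single i 1))) := by
    intro i
    have a1 := H2.of_contDiffAt (hφ.contDiffAt (x := y)) (EuclideanSpace.single i 1)
    have a2 := H2.of_contDiffAt (S.dx s hsI y hyΩ) (EuclideanSpace.single i 1)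
    have a3 := H2.Hf (f := f) j q a1 a2 (by simpa using hu0) hf1 hf2
    simpa using a3
  choose a ha using hx2
  refine ⟨hts, hint, _, _, _, hd1.sub (hd2.const_mul δ), fun i => (S.W_dx hτ hs0 hsT hyΩ _).sub
    ((ha i).const_mul δ), ?_⟩
  rw [Finset.sum_sub_distrib, ← Finset.mul_sum, ← Finset.mul_sum, Finset.sum_add_distrib, ← Finset.mul_sum]
  have hWe := S.W_eq hτ hs0 hsT hyΩ
  rw [← Finset.mul_sum] at hWe
  have hue := S.heq s hsI y hyΩ
  unfold lap at hue
  rw [← hut] at hue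
  set sQ := ∑ i : Fin n, Qe j q (φ y) (u s y) (fderiv ℝ φ y (EuclideanSpace.single i 1))
        (fderiv ℝ (fun y => fderiv ℝ φ y (EuclideanSpace.single i 1)) y (EuclideanSpace.single i 1))
        (fderiv ℝ (u s) y (EuclideanSpace.single i 1))
        (f (u s y)) (deriv f (u s y)) (deriv (deriv f) (u s y)) with hsQ
  have hQpos : 0 ≤ V y * ((φ y)^(j+2) * (deriv f (u s y) * (u s y)^q - q * (u s y)^(q-1) * f (u s y))) + sQ := by
    rcases hφV y hφy with hv | hv
    · exact hQ (V y) hv _ _ _ (fun i => (hC1 y i).1) (fun i => (hC1 y i).2)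
    · have h1 : ∀ i : Fin n, (fun z => fderiv ℝ φ z (EuclideanSpace.single i 1)) =ᶠ[nhds y] fun _ => 0 := by
        intro i
        filter_upwards [hv.fderiv (𝕜 := ℝ)] with z hz
        rw [hz]; simp
      have h2 : ∀ i : Fin n, fderiv ℝ φ y (EuclideanSpace.single i 1) = 0 := fun i => (h1 i).self_of_nhds
      have h3 : ∀ i : Fin n, fderiv ℝ (fun z => fderiv ℝ φ z (EuclideanSpace.single i 1)) y
          (EuclideanSpace.single i 1) = 0 := fun i => by rw [(h1 i).fderiv_eq]; simp
      have h4 : 0 ≤ sQ := by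
        rw [hsQ]
        refine Finset.sum_nonneg fun i _ => ?_
        rw [h2, h3]
        exact Qe_nonneg j q _ _ _ _ _ _ hq hφy0.le hu0 (hf3 _ hu0)
      have h5 := hV0 y hyΩ
      have : 0 ≤ V y * ((φ y)^(j+2) * (deriv f (u s y) * (u s y)^q - q * (u s y)^(q-1) * f (u s y))) := by
        positivity
      linarith
  have hmn := S.mono hs0 (by linarith : s ≤ s + τ) hsT hyΩ
  have hcv : deriv f (u s y) * Wq u τ s y ≤ τ⁻¹ * (f (u (s + τ) y) - f (u s y)) := by
    have := mul_le_mul_of_nonneg_left (hf4 _ _ hu0 hmn) (inv_nonneg.2 hτ.le)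
    unfold Wq
    linarith
  have hcv2 := mul_le_mul_of_nonneg_left hcv (hV0 y hyΩ)
  set J := Wq u τ s y - δ * Hf f j q (φ y) (u s y) with hJ
  have hbd : V y * deriv f (u s y) < Vm * (C0 * (1 + U^(p-1))) + 1 := by
    have b1 : u s y ≤ U := (S.mono hs0 hs.2 htI.2 hyΩ).trans (hU y hy)
    have b2 : (u s y)^(p-1) ≤ U^(p-1) := Real.rpow_le_rpow hu0.le b1 (by linarith)
    have b3 : deriv f (u s y) ≤ C0 * (1 + U^(p-1)) :=
      (le_abs_self _).trans ((hf5 _ hu0.le).trans (by gcongr))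
    have b4 : 0 ≤ C0 * (1 + U^(p-1)) := (abs_nonneg _).trans ((hf5 _ hu0.le).trans (by gcongr))
    have b5 : V y * deriv f (u s y) ≤ V y * (C0 * (1 + U^(p-1))) :=
      mul_le_mul_of_nonneg_left b3 (hV0 y hyΩ)
    have b6 := mul_le_mul_of_nonneg_right (hVm y hyΩ) b4
    linarith
  have hJlt := mul_lt_mul_of_neg_right hbd hneg
  refine hJlt.trans_le ?_
  have hδQ := mul_nonneg hδ0.le hQpos
  have hid : Wq u τ s y = J + δ * Hf f j q (φ y) (u s y) := by rw [hJ]; ring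
  rw [hid] at hcv2
  set Δ := ∑ i : Fin n, fderiv ℝ (fun y => fderiv ℝ (u s) y (EuclideanSpace.single i 1)) y
          (EuclideanSpace.single i 1) with hΔ
  have hueq : ut - Δ = V y * f (u s y) := by rw [hue]; ring
  have e1 : δ * (Hs * ut) - δ * (sQ + Hs * Δ) = δ * Hs * (ut - Δ) - δ * sQ := by ring
  rw [hueq] at e1
  have e2 : V y * (deriv f (u s y) * (J + δ * Hf f j q (φ y) (u s y))) - δ * Hs * (V y * f (u s y)) + δ * sQ
      = V y * deriv f (u s y) * J + δ * (V y * ((φ y)^(j+2) * (deriv f (u s y) * (u s y)^q - q * (u s y)^(q-1) * f (u s y))) + sQ) := by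
    rw [hHs]; unfold Hf; ring
  linarith

end


theorem ode_bound {p δ S0 t T : ℝ} (hp : 1 < p) (hδ : 0 < δ) (hS0 : 1 ≤ S0) (htT : t < T)
    (f w : ℝ → ℝ) (hf : ∀ s ≥ S0, s^p/2 ≤ f s)
    (hw : ∀ s ∈ Ico t T, DifferentiableAt ℝ w s ∧ δ * f (w s) ≤ deriv w s ∧ S0 ≤ w s) :
    w t ≤ ((p-1)*(δ/2))^(-(1/(p-1))) * (T - t)^(-(1/(p-1))) := by
  have hp1 : 0 < p - 1 := by linarith
  set c := (p-1)*(δ/2) with hc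
  have hc0 : 0 < c := by positivity
  have hd : ∀ s ∈ Ico t T, HasDerivAt (fun s => (w s)^(-(p-1)) + c * s)
      (deriv w s * (-(p-1)) * (w s)^(-(p-1) - 1) + c) s := by
    intro s hs
    obtain ⟨h1, -, h3⟩ := hw s hs
    have := (h1.hasDerivAt.rpow_const (p := -(p-1)) (Or.inl (by linarith))).add ((hasDerivAt_id s).const_mul c)
    rw [mul_one] at this
    exact this
  have hanti : AntitoneOn (fun s => (w s)^(-(p-1)) + c * s) (Ico t T) := by
    apply antitoneOn_of_deriv_nonpos (convex_Ico t T)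
    · exact fun s hs => (hd s hs).continuousAt.continuousWithinAt
    · exact fun s hs => (hd s (interior_subset hs)).differentiableAt.differentiableWithinAt
    · intro s hs
      have hs := interior_subset hs
      rw [(hd s hs).deriv]
      obtain ⟨-, h2, h3⟩ := hw s hs
      have hw0 : 0 < w s := by linarith
      have h4 := hf _ h3
      have h5 : δ/2 * (w s)^p ≤ deriv w s := by nlinarith
      have h6 : (w s)^p * (w s)^(-(p-1) - 1) = 1 := by
        rw [← Real.rpow_add hw0]; ring_nf; simp
      have h7 : 0 < (w s)^(-(p-1) - 1) := by positivity
      have h8 := mul_le_mul_of_nonneg_right h5 h7.le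
      rw [mul_assoc, h6] at h8
      have h9 := mul_le_mul_of_nonneg_left h8 hp1.le
      rw [hc]; linarith
  obtain ⟨-, -, hwt⟩ := hw t ⟨le_rfl, htT⟩
  have hw0 : 0 < w t := by linarith
  have hle : c * (T - t) ≤ (w t)^(-(p-1)) := by
    have hev : ∀ s ∈ Ioo t T, c * (s - t) ≤ (w t)^(-(p-1)) := by
      intro s hs
      have h1 := hanti ⟨le_rfl, htT⟩ ⟨hs.1.le, hs.2⟩ hs.1.le
      simp only at h1
      obtain ⟨-, -, h3⟩ := hw s ⟨hs.1.le, hs.2⟩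
      have : 0 < (w s)^(-(p-1)) := Real.rpow_pos_of_pos (by linarith) _
      linarith
    have hcl : IsClosed {s : ℝ | c * (s - t) ≤ (w t)^(-(p-1))} :=
      isClosed_le (by fun_prop) continuous_const
    have : closure (Ioo t T) ⊆ {s : ℝ | c * (s - t) ≤ (w t)^(-(p-1))} := closure_minimal hev hcl
    rw [closure_Ioo htT.ne] at this
    exact this ⟨htT.le, le_rfl⟩
  have hTt : 0 < T - t := by linarith
  rw [← Real.mul_rpow hc0.le hTt.le]
  have h1 := Real.rpow_le_rpow_of_nonpos (by positivity : 0 < c * (T - t)) hle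
    (by have : 0 < 1/(p-1) := by positivity
        linarith : -(1/(p-1)) ≤ 0)
  rw [← Real.rpow_mul hw0.le] at h1
  have : -(p-1) * -(1/(p-1)) = 1 := by field_simp
  rwa [this, Real.rpow_one] at h1

theorem stmt13
    (n : ℕ) (hn : 1 ≤ n)
    (Ω : Set (EuclideanSpace ℝ (Fin n)))
    (hΩ_open : IsOpen Ω) (hΩ_conn : IsConnected Ω) (hΩ_bdd : Bornology.IsBounded Ω)
    (p : ℝ) (hp : 1 < p)
    (hpS : 3 ≤ n → p < ((n : ℝ) + 2) / ((n : ℝ) - 2))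
    (f : ℝ → ℝ)
    (hf_nonneg : ∀ s ≥ (0:ℝ), 0 ≤ f s)
    (hf_C1 : ContDiffOn ℝ 1 f (Ici 0))
    (hf_C2 : ContDiffOn ℝ 2 f (Ici 0))
    (hf_conv : ConvexOn ℝ (Ici 0) f)
    (hf_lim : Tendsto (fun s : ℝ => s ^ (-p) * f s) atTop (nhds 1))
    (hf_deriv : ∃ C₀ > 0, ∀ s ≥ (0:ℝ), |deriv f s| ≤ C₀ * (1 + s ^ (p - 1)))
    (V : EuclideanSpace ℝ (Fin n) → ℝ)
    (hV_nonneg : ∀ x ∈ closure Ω, 0 ≤ V x)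
    (hV_holder : ∃ C β : ℝ, 0 < β ∧ β ≤ 1 ∧ 0 ≤ C ∧
      ∀ x ∈ closure Ω, ∀ y ∈ closure Ω, |V x - V y| ≤ C * ‖x - y‖ ^ β)
    (T : ℝ) (hT : 0 < T)
    (u : ℝ → EuclideanSpace ℝ (Fin n) → ℝ)
    (hu_nonneg : ∀ t ∈ Ioo 0 T, ∀ x ∈ Ω, 0 ≤ u t x)
    (hu_t : ∀ t ∈ Ioo 0 T, ∀ x ∈ Ω, DifferentiableAt ℝ (fun s => u s x) t)
    (hu_x : ∀ t ∈ Ioo 0 T, ∀ x ∈ Ω, ContDiffAt ℝ 2 (fun y => u t y) x)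
    (heq : ∀ t ∈ Ioo 0 T, ∀ x ∈ Ω,
      deriv (fun s => u s x) t = lap (fun y => u t y) x + V x * f (u t x))
    (hmono : ∀ t ∈ Ioo 0 T, ∀ x ∈ Ω, 0 ≤ deriv (fun s => u s x) t)
    (x₀ : EuclideanSpace ℝ (Fin n)) (hx₀ : x₀ ∈ Ω) (hVx₀ : V x₀ = 0)
    (hcomp : connectedComponentIn {x ∈ closure Ω | V x = 0} x₀ ∩ frontier Ω = ∅)
    (hblow : ∀ M : ℝ, ∀ ε > 0, ∃ t, T - ε < t ∧ t < T ∧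
      ∃ x ∈ Ω, ‖x - x₀‖ < ε ∧ M < u t x) :
    ∃ M > 0, ∃ ρ > 0, ball x₀ ρ ⊆ Ω ∧
      ∀ t ∈ Ioo 0 T, ∀ x ∈ ball x₀ ρ, u t x ≤ M * (T - t) ^ (-(1 / (p - 1))) := by
  have S : Sol Ω f V T u := ⟨hΩ_open, hu_nonneg, hu_t, hu_x, heq, hmono⟩
  have hVc : ContinuousOn V (closure Ω) := by
    obtain ⟨C, β, hβ, -, hC, h⟩ := hV_holder
    intro x hx
    have h1 : Tendsto (fun y => C * ‖y - x‖ ^ β) (nhdsWithin x (closure Ω)) (nhds 0) := by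
      have : Continuous fun y : EuclideanSpace ℝ (Fin n) => C * ‖y - x‖ ^ β :=
        continuous_const.mul ((Real.continuous_rpow_const hβ.le).comp (by fun_prop))
      have h2 := (this.tendsto x).mono_left (nhdsWithin_le_nhds (s := closure Ω))
      simpa [Real.zero_rpow hβ.ne'] using h2
    rw [ContinuousWithinAt, tendsto_iff_dist_tendsto_zero]
    refine squeeze_zero' (Eventually.of_forall fun _ => dist_nonneg) ?_ h1
    filter_upwards [self_mem_nhdsWithin] with y hy
    rw [Real.dist_eq]
    exact h y hy x hx
  have hV0 : ∀ x ∈ Ω, 0 ≤ V x := fun x hx => hV_nonneg x (subset_closure hx)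
  obtain ⟨Vm, hVm⟩ : ∃ Vm, ∀ x ∈ Ω, V x ≤ Vm := by
    obtain ⟨B, hB⟩ := hΩ_bdd.isCompact_closure.bddAbove_image hVc
    exact ⟨B, fun x hx => hB ⟨x, subset_closure hx, rfl⟩⟩
  have hfc := hf_C2.continuousOn
  obtain ⟨hf1, hf2, hf3, ⟨Cf, hCf, hfl⟩, hf4⟩ := f_facts f hf_C2 hf_conv
  obtain ⟨C0, hC0, hf5⟩ := id hf_deriv
  obtain ⟨S0, hS0, _, _, _, _, hgr⟩ := f_growth p ((1+p)/2) hp (by linarith) (by linarith) f hf_C2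
    hf_conv hf_lim hf_deriv
  obtain ⟨φ, hφ, hφc, hφΩ, hφ01, hφ1, v0, hv0, hφV⟩ := cutoff_exists Ω hΩ_open hΩ_bdd V hVc hV_nonneg
    x₀ hx₀ hVx₀ hcomp
  obtain ⟨C1, hC1, hφb⟩ := cutoff_bounds φ hφ hφc
  obtain ⟨j, q, CH, hq, hCH, hkey⟩ := scalar_key n p C1 v0 hp hC1 hv0 f hf_nonneg hf_C2 hf_conv hf_lim
    hf_deriv
  -- strict monotonicity somewhere
  obtain ⟨t1, ht1, x1, hx1, hpos⟩ : ∃ t1 ∈ Ioo 0 T, ∃ x1 ∈ Ω, 0 < deriv (fun s => u s x1) t1 := by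
    by_contra hcon
    push Not at hcon
    have hT2 : T/2 ∈ Ioo 0 T := ⟨by linarith, by linarith⟩
    have hev : ∀ᶠ x in nhds x₀, u (T/2) x < u (T/2) x₀ + 1 :=
      (S.cont_x hT2 hx₀).eventually (gt_mem_nhds (by linarith))
    obtain ⟨ε, hε, hεb⟩ := Metric.eventually_nhds_iff_ball.1 hev
    obtain ⟨t, h1, h2, x, hxΩ, h3, h4⟩ := hblow (u (T/2) x₀ + 1) (min ε (T/2)) (lt_min hε (by linarith))
    have hanti : AntitoneOn (fun s => u s x) (Ioo 0 T) := by
      apply antitoneOn_of_deriv_nonpos (convex_Ioo 0 T)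
      · exact fun r hr => (S.dt r hr x hxΩ).continuousAt.continuousWithinAt
      · rw [interior_Ioo]
        exact fun r hr => (S.dt r hr x hxΩ).differentiableWithinAt
      · rw [interior_Ioo]
        exact fun r hr => hcon r hr x hxΩ
    have ht2 : T/2 ≤ t := by linarith [min_le_right ε (T/2)]
    have h5 := hanti hT2 ⟨by linarith, h2⟩ ht2
    simp only at h5
    have h6 := hεb x (by rw [mem_ball, dist_eq_norm]; exact h3.trans_le (min_le_left _ _))
    linarith
  obtain ⟨y, r, hr, c0, hc0, τ0, hτ0, hyr, hbase⟩ := S.base hfc (hVc.mono subset_closure) ht1 hx1 hpos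
  obtain ⟨t0, ht10, ht0T⟩ := exists_between ht1.2
  have ht0 : t0 ∈ Ioo 0 T := ⟨ht1.1.trans ht10, ht0T⟩
  obtain ⟨c, hc, τ1, hτ1, hW⟩ := S.chain hΩ_conn.isPreconnected hCf hfl hV0 hVm hr hτ0 hyr ht1.1 hc0 hbase
    t0 ht10 (tsupport φ) hφc hφΩ
  obtain ⟨δ, hδ, hmain⟩ := S.main hfc hf1 hf2 hf3 hf4 hp hC0 hf5 hV0 hVm hφ hφc hφΩ hφ01 hφV hφb hq hCH
    hkey hc ht0 hW
  obtain ⟨ρ, hρ, hρb⟩ := Metric.eventually_nhds_iff_ball.1 hφ1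
  have hsub : ball x₀ ρ ⊆ tsupport φ := fun x hx =>
    subset_closure (show φ x ≠ 0 by rw [hρb x hx]; exact one_ne_zero)
  have hode : ∀ t, t0 ≤ t → t < T → ∀ x ∈ ball x₀ ρ, δ * f (u t x) ≤ deriv (fun s => u s x) t := by
    intro t ht htT x hx
    have htI : t ∈ Ioo 0 T := ⟨by linarith [ht0.1], htT⟩
    have hd := (S.dt t htI x (hφΩ (hsub hx))).hasDerivAt.tendsto_slope_zero_right
    refine ge_of_tendsto hd ?_
    have hm : Ioo 0 (min τ1 (T - t)) ∈ nhdsWithin (0:ℝ) (Ioi 0) :=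
      Ioo_mem_nhdsGT (lt_min hτ1 (by linarith))
    filter_upwards [hm] with τ hτ
    have h1 := hmain τ hτ.1 (hτ.2.trans_le (min_le_left _ _)) t ht
      (by linarith [hτ.2, min_le_right τ1 (T - t)]) x (hsub hx)
    rw [smul_eq_mul]
    refine le_trans ?_ h1
    unfold Hf
    rw [hρb x hx]
    have : 0 ≤ (u t x)^q := Real.rpow_nonneg (S.nonneg t htI x (hφΩ (hsub hx))) _
    simp only [one_pow, one_mul]
    nlinarith
  obtain ⟨U, hU⟩ : ∃ U, ∀ x ∈ tsupport φ, u t0 x ≤ U := by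
    have : ContinuousOn (fun x => u t0 x) (tsupport φ) :=
      fun x hx => (S.cont_x ht0 (hφΩ hx)).continuousWithinAt
    obtain ⟨B, hB⟩ := (show IsCompact (tsupport φ) from hφc).bddAbove_image this
    exact ⟨B, fun x hx => hB ⟨x, hx, rfl⟩⟩
  have hα : 0 < 1/(p-1) := by
    have : 0 < p - 1 := by linarith
    positivity
  have hp1 : 0 < p - 1 := by linarith
  set A := ((p-1)*(δ/2))^(-(1/(p-1))) with hA
  have hA0 : 0 < A := by positivity
  set B := max S0 U with hB
  have hB0 : 0 < B := lt_max_of_lt_left (by linarith)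
  have hTα : 0 < T^(1/(p-1)) := by positivity
  refine ⟨A + B * T^(1/(p-1)), by positivity, ρ, hρ, hsub.trans hφΩ, ?_⟩
  intro t ht x hx
  have hxΩ := hφΩ (hsub hx)
  have hTt : 0 < T - t := by linarith [ht.2]
  have hpow : 0 < (T - t)^(-(1/(p-1))) := by positivity
  have hBb : u t x ≤ B → u t x ≤ (A + B * T^(1/(p-1))) * (T - t)^(-(1/(p-1))) := by
    intro h
    have h1 : 1 ≤ T^(1/(p-1)) * (T - t)^(-(1/(p-1))) := by
      rw [Real.rpow_neg hTt.le, ← div_eq_mul_inv, one_le_div (by positivity)]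
      exact Real.rpow_le_rpow hTt.le (by linarith [ht.1]) hα.le
    have h2 := mul_le_mul_of_nonneg_left h1 hB0.le
    have h3 : 0 < A * (T - t)^(-(1/(p-1))) := by positivity
    nlinarith
  by_cases htt : t < t0
  · exact hBb (((S.mono ht.1 htt.le ht0.2 hxΩ).trans (hU x (hsub hx))).trans (le_max_right _ _))
  push Not at htt
  by_cases hus : u t x ≤ S0
  · exact hBb (hus.trans (le_max_left _ _))
  push Not at hus
  have := ode_bound hp hδ hS0 ht.2 f (fun s => u s x) (fun s hs => (hgr s hs).1) (by
    intro s hs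
    have hsI : s ∈ Ioo 0 T := ⟨ht.1.trans_le hs.1, hs.2⟩
    exact ⟨S.dt s hsI x hxΩ, hode s (htt.trans hs.1) hs.2 x hx,
      hus.le.trans (S.mono ht.1 hs.1 hs.2 hxΩ)⟩)
  refine this.trans ?_
  have h3 : 0 < B * T^(1/(p-1)) := by positivity
  gcongr
  linarith
end

section
/- Let p > 1, C > 0, ρ > 0, x₀ ∈ ℝⁿ, and let V be a nonnegative continuous function on B(x₀,ρ). Let T > 0 and let u ≥ 0 be a classical solution of the differential inequality u_t ≤ Δu + C·V(x)·(1+u)^p on (0,T)×B(x₀,ρ), and assume the type I estimate u(t,x) ≤ M(T−t)^{−α} on (0,T)×B(x₀,ρ) for some M > 0. If V(x₀) = 0, then x₀ is not a blowup point: there exist r ∈ (0,ρ) and a constant K > 0 such that u(t,x) ≤ K for all (t,x) ∈ (T/2,T)×B(x₀,r). -/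
open Set Metric Filter

namespace S14

abbrev Ed (n : ℕ) := EuclideanSpace ℝ (Fin n)

open Topology

section basic
variable {n : ℕ}


lemma ev_diff {E : Type*} [NormedAddCommGroup E] [NormedSpace ℝ E] {g : E → ℝ} {x : E} (h : ContDiffAt ℝ 2 g x) :
    ∀ᶠ y in 𝓝 x, DifferentiableAt ℝ g y := by
  filter_upwards [h.eventually (by simp)] with y hy
  exact hy.differentiableAt (by simp)

lemma fd1 {E : Type*} [NormedAddCommGroup E] [NormedSpace ℝ E] {g : E → ℝ} {x : E} (h : ContDiffAt ℝ 2 g x) (e : E) :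
    ContDiffAt ℝ 1 (fun y => fderiv ℝ g y e) x := by
  have := h.fderiv_right (m := 1) (by norm_num)
  exact this.clm_apply contDiffAt_const

lemma fd1d {E : Type*} [NormedAddCommGroup E] [NormedSpace ℝ E] {g : E → ℝ} {x : E} (h : ContDiffAt ℝ 2 g x) (e : E) :
    DifferentiableAt ℝ (fun y => fderiv ℝ g y e) x := (fd1 h e).differentiableAt (by simp)

lemma lap_congr {f g : (Ed n) → ℝ} {x : (Ed n)} (h : f =ᶠ[𝓝 x] g) : lap f x = lap g x := by
  unfold lap
  refine Finset.sum_congr rfl fun i _ => ?_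
  have : (fun y => fderiv ℝ f y (EuclideanSpace.single i 1)) =ᶠ[𝓝 x]
      (fun y => fderiv ℝ g y (EuclideanSpace.single i 1)) := by
    filter_upwards [h.fderiv (𝕜 := ℝ)] with y hy
    rw [hy]
  rw [this.fderiv_eq]

lemma lap_add {f g : (Ed n) → ℝ} {x : (Ed n)} (hf : ContDiffAt ℝ 2 f x) (hg : ContDiffAt ℝ 2 g x) :
    lap (fun y => f y + g y) x = lap f x + lap g x := by
  unfold lap
  rw [← Finset.sum_add_distrib]
  refine Finset.sum_congr rfl fun i _ => ?_
  have : (fun y => fderiv ℝ (fun y => f y + g y) y (EuclideanSpace.single i 1)) =ᶠ[𝓝 x]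
      (fun y => fderiv ℝ f y (EuclideanSpace.single i 1) + fderiv ℝ g y (EuclideanSpace.single i 1)) := by
    filter_upwards [ev_diff hf, ev_diff hg] with y h1 h2
    rw [fderiv_fun_add h1 h2]; rfl
  rw [this.fderiv_eq, fderiv_fun_add (fd1d hf _) (fd1d hg _)]; rfl

lemma lap_const_mul {f : (Ed n) → ℝ} {x : (Ed n)} (c : ℝ) (hf : ContDiffAt ℝ 2 f x) :
    lap (fun y => c * f y) x = c * lap f x := by
  unfold lap
  rw [Finset.mul_sum]
  refine Finset.sum_congr rfl fun i _ => ?_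
  have : (fun y => fderiv ℝ (fun y => c * f y) y (EuclideanSpace.single i 1)) =ᶠ[𝓝 x]
      (fun y => c * fderiv ℝ f y (EuclideanSpace.single i 1)) := by
    filter_upwards [ev_diff hf] with y h1
    rw [fderiv_const_mul h1]; rfl
  rw [this.fderiv_eq, fderiv_const_mul (fd1d hf _)]; rfl

lemma lap_const (c : ℝ) (x : (Ed n)) : lap (fun _ => c) x = 0 := by
  unfold lap
  simp

lemma lap_sub {f g : (Ed n) → ℝ} {x : (Ed n)} (hf : ContDiffAt ℝ 2 f x) (hg : ContDiffAt ℝ 2 g x) :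
    lap (fun y => f y - g y) x = lap f x - lap g x := by
  have h1 : (fun y => f y - g y) = fun y => f y + (-1) * g y := by ext y; ring
  rw [h1, lap_add hf (contDiffAt_const.mul hg), lap_const_mul _ hg]; ring

lemma lap_cont {f : (Ed n) → ℝ} {x : (Ed n)} (hf : ContDiffAt ℝ 2 f x) : ContinuousAt (lap f) x := by
  unfold lap
  refine tendsto_finsetSum _ fun i _ => ?_
  have h := (fd1 hf (EuclideanSpace.single i 1)).fderiv_right (m := 0) (by norm_num)
  exact (h.clm_apply contDiffAt_const).continuousAt

lemma lap_nonpos_of_isLocalMax {g : (Ed n) → ℝ} {x : (Ed n)} (h : ContDiffAt ℝ 2 g x)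
    (hm : IsLocalMax g x) : lap g x ≤ 0 := by
  unfold lap
  refine Finset.sum_nonpos fun i _ => ?_
  set e : (Ed n) := EuclideanSpace.single i 1
  by_contra hcon
  push Not at hcon
  have hl : ∀ s : ℝ, HasDerivAt (fun s : ℝ => x + s • e) e s := fun s => by
    simpa using ((hasDerivAt_id s).smul_const e).const_add x
  have hc : Tendsto (fun s : ℝ => x + s • e) (𝓝 0) (𝓝 x) := by
    have := (hl 0).continuousAt.tendsto
    simpa using this
  have hd1 : deriv (fun s : ℝ => g (x + s • e)) =ᶠ[𝓝 0] fun s => fderiv ℝ g (x + s • e) e := by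
    filter_upwards [hc.eventually (ev_diff h)] with s hs
    exact (hs.hasFDerivAt.comp_hasDerivAt s (hl s)).deriv
  have hd2 : deriv (deriv (fun s : ℝ => g (x + s • e))) 0 = fderiv ℝ (fun y => fderiv ℝ g y e) x e := by
    rw [hd1.deriv_eq]
    have h3 : HasFDerivAt (fun y => fderiv ℝ g y e) (fderiv ℝ (fun y => fderiv ℝ g y e) x) (x + (0:ℝ) • e) := by
      simpa using (fd1d h e).hasFDerivAt
    exact (h3.comp_hasDerivAt (0:ℝ) (hl 0)).deriv
  have hmax : IsLocalMax (fun s : ℝ => g (x + s • e)) 0 := by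
    have := hc.eventually hm
    simpa [IsLocalMax, IsMaxFilter] using this
  have hmin : IsLocalMin (fun s : ℝ => g (x + s • e)) 0 := by
    refine isLocalMin_of_deriv_deriv_pos (by rw [hd2]; exact hcon) hmax.deriv_eq_zero ?_
    have : ContinuousAt g (x + (0:ℝ) • e) := by simpa using h.continuousAt
    exact ContinuousAt.comp (f := fun s : ℝ => x + s • e) this (hl 0).continuousAt
  have hconst : (fun s : ℝ => g (x + s • e)) =ᶠ[𝓝 0] fun _ => g x := by
    filter_upwards [hmax, hmin] with s h1 h2
    simp at h1 h2
    exact le_antisymm h1 h2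
  have := hconst.deriv.deriv_eq
  rw [hd2] at this
  simp at this
  linarith

lemma lap_radial {f f' : ℝ → ℝ} {f'' : ℝ} {x₀ x : (Ed n)}
    (h1 : ∀ᶠ q in 𝓝 (‖x - x₀‖^2), HasDerivAt f (f' q) q)
    (h2 : HasDerivAt f' f'' (‖x - x₀‖^2)) :
    lap (fun y => f (‖y - x₀‖^2)) x = 4 * ‖x - x₀‖^2 * f'' + 2 * n * f' (‖x - x₀‖^2) := by
  have hq : ∀ y : (Ed n), HasFDerivAt (fun y : (Ed n) => ‖y - x₀‖^2) (2 • innerSL ℝ (y - x₀)) y := fun y => by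
    have := ((hasFDerivAt_id y).sub_const x₀).norm_sq
    simpa using this
  have hcont : Tendsto (fun y : (Ed n) => ‖y - x₀‖^2) (𝓝 x) (𝓝 (‖x - x₀‖^2)) := (hq x).continuousAt.tendsto
  have key : ∀ i : Fin n, fderiv ℝ (fun y => fderiv ℝ (fun y => f (‖y - x₀‖^2)) y (EuclideanSpace.single i 1)) x
    (EuclideanSpace.single i 1) = 4 * (x i - x₀ i)^2 * f'' + 2 * f' (‖x - x₀‖^2) := by
    intro i
    have e1 : (fun y => fderiv ℝ (fun y => f (‖y - x₀‖^2)) y (EuclideanSpace.single i 1)) =ᶠ[𝓝 x]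
        fun y => f' (‖y - x₀‖^2) * (2 * (y i - x₀ i)) := by
      filter_upwards [hcont.eventually h1] with y hy
      have hy2 : HasFDerivAt (fun y : (Ed n) => f (‖y - x₀‖^2)) _ y := hy.comp_hasFDerivAt y (hq y)
      rw [hy2.fderiv]
      simp [EuclideanSpace.inner_single_right]
    rw [e1.fderiv_eq]
    have e2 : HasFDerivAt (fun y : (Ed n) => 2 * (y i - x₀ i)) ((2:ℝ) • (EuclideanSpace.proj i : (Ed n) →L[ℝ] ℝ)) x := by
      have := (((EuclideanSpace.proj i : (Ed n) →L[ℝ] ℝ).hasFDerivAt (x := x)).sub_const (x₀ i)).const_mul (2:ℝ)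
      simpa using this
    have e3 := (h2.comp_hasFDerivAt x (hq x)).mul e2
    have e4 : HasFDerivAt (fun y : (Ed n) => f' (‖y - x₀‖^2) * (2 * (y i - x₀ i))) _ x := e3
    rw [e4.fderiv]
    simp [EuclideanSpace.inner_single_right]
    ring
  unfold lap
  rw [Finset.sum_congr rfl fun i _ => key i, Finset.sum_add_distrib, ← Finset.sum_mul, ← Finset.mul_sum,
    EuclideanSpace.norm_sq_eq]
  simp
  ring

end basic
end S14

namespace S14
open Topology MeasureTheory

section maxp
variable {n : ℕ}


/-- Maximum principle for jointly continuous functions with a left Dini inequality. -/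
lemma max_principle {v w : ℝ → (Ed n) → ℝ} {t1 t2 d : ℝ} {y : (Ed n)}
    (hv : ContinuousOn (fun q : ℝ × (Ed n) => v q.1 q.2) (Icc t1 t2 ×ˢ closedBall y d))
    (hw : ContinuousOn (fun q : ℝ × (Ed n) => w q.1 q.2) (Icc t1 t2 ×ˢ closedBall y d))
    (hv2 : ∀ t ∈ Ioc t1 t2, ∀ x ∈ ball y d, ContDiffAt ℝ 2 (v t) x)
    (hw2 : ∀ t ∈ Ioc t1 t2, ∀ x ∈ ball y d, ContDiffAt ℝ 2 (w t) x)
    (hsub : ∀ t ∈ Ioc t1 t2, ∀ x ∈ ball y d, ∀ c, lap (v t) x < c →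
      ∀ᶠ s in 𝓝[<] t, v t x - v s x ≤ c * (t - s))
    (hsup : ∀ t ∈ Ioc t1 t2, ∀ x ∈ ball y d, ∃ w', HasDerivAt (fun s => w s x) w' t ∧ lap (w t) x < w')
    (hinit : ∀ x ∈ closedBall y d, v t1 x ≤ w t1 x)
    (hlat : ∀ t ∈ Icc t1 t2, ∀ x ∈ sphere y d, v t x ≤ w t x) :
    ∀ t ∈ Icc t1 t2, ∀ x ∈ closedBall y d, v t x ≤ w t x := by
  intro t ht x hx
  have hK : IsCompact (Icc t1 t2 ×ˢ closedBall y d) := isCompact_Icc.prod (isCompact_closedBall y d)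
  obtain ⟨⟨t', x'⟩, ⟨ht', hx'⟩, hmax⟩ := hK.exists_isMaxOn ⟨(t, x), ht, hx⟩ (hv.sub hw)
  have hmax' : ∀ s ∈ Icc t1 t2, ∀ z ∈ closedBall y d, v s z - w s z ≤ v t' x' - w t' x' :=
    fun s hs z hz => hmax (show (s, z) ∈ _ from ⟨hs, hz⟩)
  simp only at ht' hx'
  suffices v t' x' - w t' x' ≤ 0 by linarith [hmax' t ht x hx]
  rcases eq_or_lt_of_le ht'.1 with h1 | h1
  · rw [← h1]; linarith [hinit x' hx']
  rcases eq_or_lt_of_le (mem_closedBall.1 hx') with h2 | h2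
  · linarith [hlat t' ht' x' h2]
  exfalso
  have htI : t' ∈ Ioc t1 t2 := ⟨h1, ht'.2⟩
  have hxb : x' ∈ ball y d := h2
  obtain ⟨w', hw', hlt⟩ := hsup t' htI x' hxb
  have hlm : IsLocalMax (fun z => v t' z - w t' z) x' := by
    filter_upwards [isOpen_ball.mem_nhds hxb] with z hz
    exact hmax' t' ht' z (ball_subset_closedBall hz)
  have hl := lap_nonpos_of_isLocalMax ((hv2 t' htI x' hxb).sub (hw2 t' htI x' hxb)) hlm
  rw [lap_sub (hv2 t' htI x' hxb) (hw2 t' htI x' hxb)] at hl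
  obtain ⟨c, hc1, hc2⟩ := exists_between hlt
  have e1 := hsub t' htI x' hxb c (by linarith)
  have e2 : ∀ᶠ s in 𝓝[<] t', c < slope (fun s => w s x') t' s := by
    have := hasDerivAt_iff_tendsto_slope.1 hw'
    exact (this.mono_left (nhdsWithin_mono _ (fun s hs => ne_of_lt hs))).eventually (lt_mem_nhds hc2)
  have e3 : ∀ᶠ s in 𝓝[<] t', s ∈ Ioo t1 t' := Ioo_mem_nhdsLT h1
  obtain ⟨s, hs1, hs2, hs3⟩ := (e1.and (e2.and e3)).exists
  have hm := hmax' s ⟨hs3.1.le, hs3.2.le.trans ht'.2⟩ x' hx'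
  rw [slope_def_field, lt_div_iff_of_neg (by linarith [hs3.2])] at hs2
  nlinarith

end maxp

section mol
variable {n : ℕ}


/-- separately regular bounded subsolution -/
structure Reg (a T : ℝ) (x₀ : (Ed n)) (R N : ℝ) (u : ℝ → (Ed n) → ℝ) : Prop where
  zero : ∀ t, ∀ x ∉ ball x₀ R, u t x = 0
  bd : ∀ t ∈ Ioo a T, ∀ x, |u t x| ≤ N
  dt : ∀ t ∈ Ioo a T, ∀ x ∈ ball x₀ R, DifferentiableAt ℝ (fun s => u s x) t
  cx : ∀ t ∈ Ioo a T, ∀ x ∈ ball x₀ R, ContDiffAt ℝ 2 (u t) x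
  ineq : ∀ t ∈ Ioo a T, ∀ x ∈ ball x₀ R, deriv (fun s => u s x) t ≤ lap (u t) x

structure Tst (B : Set (Ed n)) (ψ : (Ed n) → ℝ) : Prop where
  cd : ContDiff ℝ 2 ψ
  cs : HasCompactSupport ψ
  sub : tsupport ψ ⊆ B
  nn : ∀ x, 0 ≤ ψ x

structure Mol (ε : ℝ) (η : (Ed n) → ℝ) : Prop where
  cd : ContDiff ℝ 2 η
  cs : HasCompactSupport η
  sub : tsupport η ⊆ closedBall 0 ε
  nn : ∀ x, 0 ≤ η x
  int : ∫ x, η x = 1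

lemma exists_mol {ε : ℝ} (hε : 0 < ε) : ∃ η : (Ed n) → ℝ, Mol ε η := by
  let φ : ContDiffBump (0 : (Ed n)) := ⟨ε / 2, ε, by positivity, by linarith⟩
  refine ⟨φ.normed volume, ?_, ?_, ?_, ?_, ?_⟩
  · exact φ.contDiff_normed (n := 2)
  · exact φ.hasCompactSupport_normed
  · rw [φ.tsupport_normed_eq]
  · exact fun x => φ.nonneg_normed x
  · exact φ.integral_normed

variable {a T R N : ℝ} {x₀ : (Ed n)} {u : ℝ → (Ed n) → ℝ}

lemma Reg.contT (h : Reg a T x₀ R N u) {t : ℝ} (ht : t ∈ Ioo a T) (x : (Ed n)) :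
    ContinuousAt (fun s => u s x) t := by
  by_cases hx : x ∈ ball x₀ R
  · exact (h.dt t ht x hx).continuousAt
  · have : (fun s => u s x) = fun _ => 0 := by ext s; exact h.zero s x hx
    rw [this]; exact continuousAt_const

lemma Reg.contX (h : Reg a T x₀ R N u) {t : ℝ} (ht : t ∈ Ioo a T) : ContinuousOn (u t) (ball x₀ R) :=
  fun x hx => (h.cx t ht x hx).continuousAt.continuousWithinAt

lemma Reg.meas (h : Reg a T x₀ R N u) {t : ℝ} (ht : t ∈ Ioo a T) : Measurable (u t) := by
  classical
  have : u t = (ball x₀ R).piecewise (u t) (fun _ => 0) := by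
    ext x
    by_cases hx : x ∈ ball x₀ R
    · simp [hx]
    · rw [piecewise_eq_of_notMem _ _ _ hx]; exact h.zero t x hx
  rw [this]
  exact (h.contX ht).measurable_piecewise continuousOn_const measurableSet_ball

lemma Reg.integrable (h : Reg a T x₀ R N u) {t : ℝ} (ht : t ∈ Ioo a T) : Integrable (u t) := by
  have h1 : IntegrableOn (u t) (ball x₀ R) := by
    refine Measure.integrableOn_of_bounded (M := N) measure_ball_lt_top.ne (h.meas ht).aestronglyMeasurable ?_
    exact Eventually.of_forall fun x => h.bd t ht x
  refine (integrableOn_iff_integrable_of_support_subset ?_).1 h1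
  intro x hx
  by_contra hx'
  exact hx (h.zero t x hx')

lemma Reg.jcont (h : Reg a T x₀ R N u) {g : (Ed n) → ℝ} (hg : Continuous g) (hgc : HasCompactSupport g) :
    ContinuousOn (fun q : ℝ × (Ed n) => ∫ y, u q.1 y * g (q.2 - y)) (Ioo a T ×ˢ univ) := by
  obtain ⟨G, hG⟩ := hgc.exists_bound_of_continuous hg
  refine continuousOn_of_dominated (bound := (ball x₀ R).indicator (fun _ => N * G)) ?_ ?_ ?_ ?_
  · intro q hq
    exact ((h.meas hq.1).mul (hg.measurable.comp (measurable_const.sub measurable_id))).aestronglyMeasurable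
  · intro q hq
    refine Eventually.of_forall fun y => ?_
    by_cases hy : y ∈ ball x₀ R
    · rw [indicator_of_mem hy, norm_mul]
      exact mul_le_mul (h.bd _ hq.1 y) (hG _) (norm_nonneg _) ((abs_nonneg _).trans (h.bd _ hq.1 y))
    · rw [indicator_of_notMem hy, h.zero _ y hy]; simp
  · exact (integrableOn_const (measure_ball_lt_top.ne)).integrable_indicator measurableSet_ball
  · refine Eventually.of_forall fun y => ?_
    intro q hq
    refine ContinuousAt.continuousWithinAt ?_
    refine ContinuousAt.mul ?_ ?_
    · exact ContinuousAt.comp (f := fun q : ℝ × (Ed n) => q.1) (g := fun s => u s y) (h.contT hq.1 y) continuousAt_fst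
    · exact (hg.comp (continuous_snd.sub continuous_const)).continuousAt

/-- continuity of pairing in time -/
lemma Reg.tcont (h : Reg a T x₀ R N u) {g : (Ed n) → ℝ} (hg : Continuous g) (hgc : HasCompactSupport g) :
    ContinuousOn (fun t => ∫ y, u t y * g y) (Ioo a T) := by
  have h1 := h.jcont (g := fun y => g (-y)) (hg.comp continuous_neg) 
    (hgc.comp_homeomorph (Homeomorph.neg (Ed n)))
  have h2 : ContinuousOn (fun t : ℝ => (t, (0 : (Ed n)))) (Ioo a T) := by fun_prop
  have := h1.comp h2 (fun t ht => ⟨ht, mem_univ _⟩)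
  simpa [Function.comp_def] using this

lemma mol_fderiv {f g : (Ed n) → ℝ} (hf : Integrable f) (hg : ContDiff ℝ 1 g) (hgc : HasCompactSupport g)
    (x e : (Ed n)) : fderiv ℝ (fun x => ∫ y, f y * g (x - y)) x e = ∫ y, f y * (fderiv ℝ g (x - y) e) := by
  have h1 := hgc.hasFDerivAt_convolution_right (ContinuousLinearMap.mul ℝ ℝ) hf.locallyIntegrable hg x
  have h2 := convolution_precompR_apply (ContinuousLinearMap.mul ℝ ℝ) hf.locallyIntegrable
    (hgc.fderiv ℝ) (hg.continuous_fderiv (by simp)) x e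
  have h3 : HasFDerivAt (fun x => ∫ y, f y * g (x - y)) _ x := h1
  rw [h3.fderiv, h2]
  rfl

lemma mol_contDiff {f g : (Ed n) → ℝ} (hf : Integrable f) (hg : ContDiff ℝ 2 g) (hgc : HasCompactSupport g) :
    ContDiff ℝ 2 (fun x => ∫ y, f y * g (x - y)) :=
  hgc.contDiff_convolution_right (n := 2) (ContinuousLinearMap.mul ℝ ℝ) hf.locallyIntegrable hg

lemma fd_contDiff {g : (Ed n) → ℝ} (hg : ContDiff ℝ 2 g) (e : (Ed n)) : ContDiff ℝ 1 (fun y => fderiv ℝ g y e) :=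
  contDiff_iff_contDiffAt.2 fun _ => fd1 hg.contDiffAt e

lemma fd_cs {g : (Ed n) → ℝ} (hgc : HasCompactSupport g) (e : (Ed n)) : HasCompactSupport (fun y => fderiv ℝ g y e) :=
  hgc.fderiv_apply ℝ e

lemma lap_continuous {g : (Ed n) → ℝ} (hg : ContDiff ℝ 2 g) : Continuous (lap g) :=
  continuous_iff_continuousAt.2 fun _ => lap_cont hg.contDiffAt

lemma lap_tsupport {g : (Ed n) → ℝ} : Function.support (lap g) ⊆ tsupport g := by
  intro x hx
  by_contra hx'
  apply hx
  have : g =ᶠ[𝓝 x] fun _ => 0 := notMem_tsupport_iff_eventuallyEq.1 hx'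
  rw [lap_congr this, lap_const]

lemma lap_cs {g : (Ed n) → ℝ} (hgc : HasCompactSupport g) : HasCompactSupport (lap g) :=
  hgc.mono' lap_tsupport

lemma int_mul {f g : (Ed n) → ℝ} (hf : Integrable f) (hg : Continuous g) (hgc : HasCompactSupport g) :
    Integrable (fun y => f y * g y) := by
  obtain ⟨G, hG⟩ := hgc.exists_bound_of_continuous hg
  exact hf.mul_bdd hg.aestronglyMeasurable (Eventually.of_forall hG)

lemma cs_refl {g : (Ed n) → ℝ} (hgc : HasCompactSupport g) (x : (Ed n)) : HasCompactSupport (fun y => g (x - y)) :=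
  hgc.comp_homeomorph (Homeomorph.subLeft x)

lemma mol_lap {f g : (Ed n) → ℝ} (hf : Integrable f) (hg : ContDiff ℝ 2 g) (hgc : HasCompactSupport g)
    (x : (Ed n)) : lap (fun x => ∫ y, f y * g (x - y)) x = ∫ y, f y * lap g (x - y) := by
  unfold lap
  simp_rw [Finset.mul_sum]
  rw [integral_finsetSum]
  · refine Finset.sum_congr rfl fun i _ => ?_
    have : (fun y => (fderiv ℝ (fun x => ∫ y, f y * g (x - y)) y) (EuclideanSpace.single i 1)) =
      fun x => ∫ y, f y * (fderiv ℝ g (x - y) (EuclideanSpace.single i 1)) := by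
      ext z
      rw [mol_fderiv hf (hg.of_le (by norm_num)) hgc]
    rw [this]
    exact mol_fderiv hf (fd_contDiff hg _) (fd_cs hgc _) x _
  · intro i _
    refine int_mul (g := fun y => fderiv ℝ (fun y => fderiv ℝ g y (EuclideanSpace.single i 1)) (x - y)
    (EuclideanSpace.single i 1)) hf ?_ ?_
    · have h1 := ((fd_contDiff hg (EuclideanSpace.single i 1)).continuous_fderiv (by simp)).clm_apply
        (continuous_const (y := (EuclideanSpace.single i 1 : (Ed n))))
      exact h1.comp (continuous_const.sub continuous_id)
    · exact cs_refl (fd_cs (fd_cs hgc _) _) x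

lemma lap_refl {g : (Ed n) → ℝ} (hg : ContDiff ℝ 2 g) (x y : (Ed n)) :
    lap (fun y => g (x - y)) y = lap g (x - y) := by
  unfold lap
  refine Finset.sum_congr rfl fun i _ => ?_
  have hs : ∀ z : (Ed n), HasFDerivAt (fun y => x - y) (-(ContinuousLinearMap.id ℝ (Ed n))) z := fun z =>
    (hasFDerivAt_id z).const_sub x
  have h1 : (fun y => fderiv ℝ (fun y => g (x - y)) y (EuclideanSpace.single i 1)) =
      fun y => - fderiv ℝ g (x - y) (EuclideanSpace.single i 1) := by
    ext z
    have h2 : HasFDerivAt (fun y => g (x - y)) _ z :=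
      ((hg.differentiable (by simp)) (x - z)).hasFDerivAt.comp z (hs z)
    rw [h2.fderiv]; simp
  rw [h1]
  have h3 : HasFDerivAt (fun y => - fderiv ℝ g (x - y) (EuclideanSpace.single i 1)) _ y :=
    (((fd_contDiff hg (EuclideanSpace.single i 1)).differentiable (by simp) (x - y)).hasFDerivAt.comp y (hs y)).neg
  rw [h3.fderiv]; simp

lemma Mol.tst {ε : ℝ} {η : (Ed n) → ℝ} (h : Mol ε η) {B : Set (Ed n)} {x : (Ed n)} (hx : closedBall x ε ⊆ B) :
    Tst B (fun y => η (x - y)) where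
  cd := h.cd.comp (contDiff_const.sub contDiff_id)
  cs := cs_refl h.cs x
  nn := fun y => h.nn _
  sub := by
    refine Subset.trans ?_ hx
    refine closure_minimal ?_ isClosed_closedBall
    intro y hy
    have : x - y ∈ closedBall (0 : (Ed n)) ε := h.sub (subset_tsupport _ hy)
    rw [mem_closedBall, dist_comm, dist_eq_norm]
    simpa using this

lemma Mol.intr {ε : ℝ} {η : (Ed n) → ℝ} (h : Mol ε η) (x : (Ed n)) : ∫ y, η (x - y) = 1 := by
  rw [integral_sub_left_eq_self (fun y => η y) volume x]; exact h.int

lemma Mol.le {ε : ℝ} {η : (Ed n) → ℝ} (h : Mol ε η) {f : (Ed n) → ℝ} (hf : Integrable f) {x : (Ed n)} {c : ℝ}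
    (hc : ∀ y ∈ closedBall x ε, f y ≤ c) : ∫ y, f y * η (x - y) ≤ c := by
  have hη := (h.tst (Subset.refl (closedBall x ε)))
  calc ∫ y, f y * η (x - y) ≤ ∫ y, c * η (x - y) := by
        refine integral_mono (int_mul hf hη.cd.continuous hη.cs) 
          ((hη.cd.continuous.integrable_of_hasCompactSupport hη.cs).const_mul c) fun y => ?_
        simp only
        by_cases hy : y ∈ closedBall x ε
        · exact mul_le_mul_of_nonneg_right (hc y hy) (h.nn _)
        · have : η (x - y) = 0 := by
            by_contra hne
            exact hy (hη.sub (subset_tsupport _ hne))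
          rw [this]; simp
    _ = c := by rw [integral_const_mul, h.intr, mul_one]

lemma Mol.ge {ε : ℝ} {η : (Ed n) → ℝ} (h : Mol ε η) {f : (Ed n) → ℝ} (hf : Integrable f) {x : (Ed n)} {c : ℝ}
    (hc : ∀ y ∈ closedBall x ε, c ≤ f y) : c ≤ ∫ y, f y * η (x - y) := by
  have := h.le (x := x) (c := -c) hf.neg (fun y hy => neg_le_neg (hc y hy))
  simp only [Pi.neg_apply, neg_mul] at this
  rw [integral_neg] at this
  linarith

/-- integration by parts -/
lemma ibp {f ψ : (Ed n) → ℝ} {B : Set (Ed n)} (hB : ∀ x ∈ B, ContDiffAt ℝ 2 f x) (hψ : Tst B ψ) :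
    ∫ x, f x * lap ψ x = ∫ x, lap f x * ψ x := by
  -- continuity of products with functions supported in `tsupport ψ`
  have hc : ∀ F G : (Ed n) → ℝ, (∀ x ∈ B, ContinuousAt F x) → Continuous G → Function.support G ⊆ tsupport ψ →
      Integrable (fun x => F x * G x) := by
    intro F G hF hG hs
    have hcl : closure (Function.support G) ⊆ tsupport ψ := closure_minimal hs (isClosed_tsupport _)
    have hcs : HasCompactSupport G := HasCompactSupport.of_support_subset_isCompact hψ.cs hs
    refine Continuous.integrable_of_hasCompactSupport ?_ hcs.mul_left
    rw [continuous_iff_continuousAt]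
    intro x
    by_cases hx : x ∈ tsupport ψ
    · exact (hF x (hψ.sub hx)).mul hG.continuousAt
    · have h0 : G =ᶠ[𝓝 x] fun _ => 0 := notMem_tsupport_iff_eventuallyEq.1 (fun h => hx (hcl h))
      have : (fun x => F x * G x) =ᶠ[𝓝 x] fun _ => 0 := by
        filter_upwards [h0] with z hz
        rw [hz, mul_zero]
      exact (continuousAt_const (y := (0:ℝ))).congr this.symm
  have hsf : ∀ e : (Ed n), tsupport (fun y => fderiv ℝ ψ y e) ⊆ tsupport ψ := fun e => by
    exact tsupport_fderiv_apply_subset ℝ e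
  have key : ∀ e : (Ed n), ∫ x, f x * fderiv ℝ (fun y => fderiv ℝ ψ y e) x e =
      ∫ x, fderiv ℝ (fun y => fderiv ℝ f y e) x e * ψ x := by
    intro e
    have c0 : ∀ x ∈ B, ContinuousAt f x := fun x hx => (hB x hx).continuousAt
    have c1 : ∀ x ∈ B, ContinuousAt (fun y => fderiv ℝ f y e) x := fun x hx => (fd1d (hB x hx) e).continuousAt
    have c2 : ∀ x ∈ B, ContinuousAt (fun y => fderiv ℝ (fun y => fderiv ℝ f y e) y e) x := fun x hx => by
      have h := (fd1 (hB x hx) e).fderiv_right (m := 0) (by norm_num)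
      exact (h.clm_apply contDiffAt_const).continuousAt
    have p0 : Continuous ψ := hψ.cd.continuous
    have p1 : Continuous (fun y => fderiv ℝ ψ y e) := (fd_contDiff hψ.cd e).continuous
    have p2 : Continuous (fun y => fderiv ℝ (fun y => fderiv ℝ ψ y e) y e) :=
      ((fd_contDiff hψ.cd e).continuous_fderiv (by simp)).clm_apply continuous_const
    have s0 : Function.support ψ ⊆ tsupport ψ := subset_tsupport _
    have s1 : Function.support (fun y => fderiv ℝ ψ y e) ⊆ tsupport ψ := (subset_tsupport _).trans (hsf e)
    have s2 : Function.support (fun y => fderiv ℝ (fun y => fderiv ℝ ψ y e) y e) ⊆ tsupport ψ :=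
      (subset_tsupport _).trans ((tsupport_fderiv_apply_subset ℝ e).trans (hsf e))
    rw [integral_mul_fderiv_eq_neg_fderiv_mul_of_integrable (hc _ _ c1 p1 s1) (hc _ _ c0 p2 s2) (hc _ _ c0 p1 s1)
      (fun x hx => (hB x (hψ.sub (hsf e hx))).differentiableAt (by simp))
      (fun x _ => fd1d hψ.cd.contDiffAt e)]
    rw [integral_mul_fderiv_eq_neg_fderiv_mul_of_integrable (hc _ _ c2 p0 s0) (hc _ _ c1 p1 s1) (hc _ _ c1 p0 s0)
      (fun x hx => fd1d (hB x (hψ.sub hx)) e)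
      (fun x _ => hψ.cd.differentiable (by simp) x)]
    simp
  have i1 : ∀ e : (Ed n), Integrable (fun x => f x * fderiv ℝ (fun y => fderiv ℝ ψ y e) x e) := fun e =>
    hc _ _ (fun x hx => (hB x hx).continuousAt)
      (((fd_contDiff hψ.cd e).continuous_fderiv (by simp)).clm_apply continuous_const)
      ((subset_tsupport _).trans ((tsupport_fderiv_apply_subset ℝ e).trans (hsf e)))
  have i2 : ∀ e : (Ed n), Integrable (fun x => fderiv ℝ (fun y => fderiv ℝ f y e) x e * ψ x) := fun e =>
    hc _ _ (fun x hx => by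
      have h := (fd1 (hB x hx) e).fderiv_right (m := 0) (by norm_num)
      exact (h.clm_apply contDiffAt_const).continuousAt) hψ.cd.continuous (subset_tsupport _)
  unfold lap
  simp_rw [Finset.mul_sum, Finset.sum_mul]
  rw [integral_finsetSum _ (fun i _ => i1 _), integral_finsetSum _ (fun i _ => i2 _)]
  exact Finset.sum_congr rfl fun i _ => key _

end mol
end S14

namespace S14
open Topology MeasureTheory

section weak
variable {n : ℕ}
variable {a T R N : ℝ} {x₀ : Ed n} {u : ℝ → (Ed n) → ℝ}

/-- right Dini inequality of the weak formulation at time `t` -/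
def RD (u : ℝ → Ed n → ℝ) (B : Set (Ed n)) (t : ℝ) : Prop :=
  ∀ ψ : Ed n → ℝ, Tst B ψ → ∀ c, ∫ x, u t x * lap ψ x < c →
    ∀ᶠ z in 𝓝[>] t, (∫ x, u z x * ψ x) - (∫ x, u t x * ψ x) ≤ c * (z - t)

lemma incr (h : Reg a T x₀ R N u) {B : Set (Ed n)} {s t c : ℝ} (hst : s ≤ t)
    (hI : Icc s t ⊆ Ioo a T) (hRD : ∀ τ ∈ Ico s t, RD u B τ) {ψ : Ed n → ℝ} (hψ : Tst B ψ)
    (hc : ∀ τ ∈ Ico s t, ∫ x, u τ x * lap ψ x < c) :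
    (∫ x, u t x * ψ x) - (∫ x, u s x * ψ x) ≤ c * (t - s) := by
  have h1 := image_le_of_liminf_slope_right_le_deriv_boundary
    (f := fun τ => ∫ x, u τ x * ψ x) (a := s) (b := t)
    (B := fun τ => (∫ x, u s x * ψ x) + c * (τ - s)) (B' := fun _ => c)
    ((h.tcont hψ.cd.continuous hψ.cs).mono hI) (by simp) (by fun_prop)
    (fun τ _ => by
      have := (((hasDerivAt_id τ).sub_const s).const_mul c).const_add (∫ x, u s x * ψ x)
      simpa using this.hasDerivWithinAt)
    (fun τ hτ r hr => by
      refine Eventually.frequently ?_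
      filter_upwards [hRD τ hτ ψ hψ c (hc τ hτ), self_mem_nhdsWithin] with z hz hz'
      have hz' : τ < z := hz'
      rw [slope_def_field]
      refine lt_of_le_of_lt ?_ hr
      rw [div_le_iff₀ (by linarith)]
      exact hz)
  have := h1 (right_mem_Icc.2 hst)
  linarith

lemma left_dini (h : Reg a T x₀ R N u) {B : Set (Ed n)} {σ t c : ℝ} (hσ : σ < t) (ha : a ≤ σ) (hT : t < T)
    (hRD : ∀ τ ∈ Ioo σ t, RD u B τ) {ψ : Ed n → ℝ} (hψ : Tst B ψ)
    (hc : ∫ x, u t x * lap ψ x < c) :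
    ∀ᶠ s in 𝓝[<] t, (∫ x, u t x * ψ x) - (∫ x, u s x * ψ x) ≤ c * (t - s) := by
  have htI : t ∈ Ioo a T := ⟨by linarith, hT⟩
  have hJ : ContinuousAt (fun τ => ∫ x, u τ x * lap ψ x) t :=
    (h.tcont (lap_continuous hψ.cd) (lap_cs hψ.cs)).continuousAt (isOpen_Ioo.mem_nhds htI)
  have hev := hJ.eventually (gt_mem_nhds hc)
  rw [Metric.eventually_nhds_iff_ball] at hev
  obtain ⟨δ, hδ, hb⟩ := hev
  filter_upwards [Ioo_mem_nhdsLT hσ, Ioo_mem_nhdsLT (show t - δ < t by linarith)] with s hs1 hs2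
  refine incr h hs2.2.le (fun τ hτ => ⟨by linarith [hτ.1, hs1.1], by linarith [hτ.2]⟩)
    (fun τ hτ => hRD τ ⟨by linarith [hτ.1, hs1.1], hτ.2⟩) hψ (fun τ hτ => hb τ ?_)
  rw [mem_ball, Real.dist_eq, abs_lt]
  constructor <;> linarith [hτ.1, hτ.2, hs2.1]

lemma gap (h : Reg a T x₀ R N u) {B : Set (Ed n)} (hBR : B ⊆ ball x₀ R) {k σ b d : ℝ} (hσ : σ ∈ Ioo a T) (hb : b ≤ T) (hk0 : 0 ≤ k)
    (hk : ∀ ψ, Tst B ψ → ∫ x, u σ x * lap ψ x ≤ k * ∫ x, ψ x)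
    (hRD : ∀ τ ∈ Ioo σ b, RD u B τ) {y : Ed n} (hd : 0 < d) (hy : closedBall y (2 * d) ⊆ B)
    {t : ℝ} (ht : t ∈ Ioo σ b) :
    u t y ≤ u σ y + (k + 1 + 4 * n * N / d ^ 2) * (t - σ) := by
  have htI : t ∈ Ioo a T := ⟨hσ.1.trans ht.1, ht.2.trans_le hb⟩
  have hyR : y ∈ ball x₀ R := hBR (hy (mem_closedBall_self (by linarith)))
  have hN : 0 ≤ N := (abs_nonneg _).trans (h.bd σ hσ y)
  refine le_of_forall_pos_le_add fun κ hκ => ?_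
  have c1 : ∀ᶠ z in 𝓝 y, u t y - κ / 2 < u t z :=
    (h.cx t htI y hyR).continuousAt.eventually (lt_mem_nhds (by linarith))
  have c2 : ∀ᶠ z in 𝓝 y, u σ z < u σ y + κ / 2 :=
    (h.cx σ hσ y hyR).continuousAt.eventually (gt_mem_nhds (by linarith))
  obtain ⟨ε', hε', hball⟩ := Metric.eventually_nhds_iff_ball.1 (c1.and c2)
  set ε := min (ε' / 2) d with hεdef
  have hε : 0 < ε := lt_min (by linarith) hd
  have hεd : ε ≤ d := min_le_right _ _
  have hεε : ε < ε' := lt_of_le_of_lt (min_le_left _ _) (by linarith)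
  have hsubball : closedBall y ε ⊆ ball y ε' := closedBall_subset_ball hεε
  obtain ⟨η, hη⟩ := exists_mol (n := n) hε
  let v : ℝ → Ed n → ℝ := fun s x => ∫ z, u s z * η (x - z)
  have hv2 : ∀ s ∈ Ioo a T, ContDiff ℝ 2 (v s) := fun s hs => mol_contDiff (h.integrable hs) hη.cd hη.cs
  have hvl : ∀ s ∈ Ioo a T, ∀ x, lap (v s) x = ∫ z, u s z * lap (fun z => η (x - z)) z := fun s hs x => by
    simp_rw [lap_refl hη.cd]
    exact mol_lap (h.integrable hs) hη.cd hη.cs x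
  have htst : ∀ x ∈ ball y d, Tst B (fun z => η (x - z)) := fun x hx => hη.tst (by
    refine Subset.trans ?_ hy
    refine closedBall_subset_closedBall' ?_
    have := mem_ball.1 hx
    linarith)
  have hvb : ∀ s ∈ Ioo a T, ∀ x, |v s x| ≤ N := fun s hs x => abs_le.2
    ⟨hη.ge (h.integrable hs) (fun z _ => (abs_le.1 (h.bd s hs z)).1),
     hη.le (h.integrable hs) (fun z _ => (abs_le.1 (h.bd s hs z)).2)⟩
  have hIcc : Icc σ t ⊆ Ioo a T := fun s hs => ⟨hσ.1.trans_le hs.1, hs.2.trans_lt htI.2⟩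
  let w : ℝ → Ed n → ℝ := fun s x => v σ x + ((k + 1) * (s - σ) + 2 * N / d ^ 2 * (‖x - y‖ ^ 2 + 2 * n * (s - σ)))
  have hlapw : ∀ s x, lap (w s) x = lap (v σ) x + 2 * n * (2 * N / d ^ 2) := by
    intro s x
    have hc2 : ContDiffAt ℝ 2 (fun x : Ed n => (k + 1) * (s - σ) + 2 * N / d ^ 2 * (‖x - y‖ ^ 2 + 2 * n * (s - σ))) x := by
      have : ContDiffAt ℝ 2 (fun x : Ed n => ‖x - y‖ ^ 2) x := (contDiffAt_id.sub contDiffAt_const).norm_sq ℝ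
      exact contDiffAt_const.add (contDiffAt_const.mul (this.add contDiffAt_const))
    have := lap_add (hv2 σ hσ).contDiffAt hc2
    rw [this, lap_radial (f := fun q => (k + 1) * (s - σ) + 2 * N / d ^ 2 * (q + 2 * n * (s - σ)))
      (f' := fun _ => 2 * N / d ^ 2) (f'' := 0)]
    · simp
    · refine Eventually.of_forall fun q => ?_
      simpa using (((hasDerivAt_id q).add_const (2 * n * (s - σ))).const_mul (2 * N / d ^ 2)).const_add ((k + 1) * (s - σ))
    · exact hasDerivAt_const _ _
  have hmp := max_principle (v := v) (w := w) (t1 := σ) (t2 := t) (d := d) (y := y)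
    ((h.jcont hη.cd.continuous hη.cs).mono (fun q hq => ⟨hIcc hq.1, mem_univ _⟩))
    (by
      have := (hv2 σ hσ).continuous
      refine Continuous.continuousOn ?_
      fun_prop)
    (fun s hs x _ => (hv2 s (hIcc ⟨hs.1.le, hs.2⟩)).contDiffAt)
    (fun s hs x _ => by
      have : ContDiffAt ℝ 2 (fun x : Ed n => ‖x - y‖ ^ 2) x := (contDiffAt_id.sub contDiffAt_const).norm_sq ℝ
      exact (hv2 σ hσ).contDiffAt.add (contDiffAt_const.add (contDiffAt_const.mul (this.add contDiffAt_const))))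
    (fun s hs x hx c hc => by
      have hsI := hIcc ⟨hs.1.le, hs.2⟩
      rw [hvl s hsI x] at hc
      exact left_dini h hs.1 hσ.1.le hsI.2 (fun τ hτ => hRD τ ⟨hτ.1, by linarith [hτ.2, hs.2, ht.2]⟩) (htst x hx) hc)
    (fun s hs x hx => by
      refine ⟨(k + 1) * 1 + 2 * N / d ^ 2 * (2 * n * 1), ?_, ?_⟩
      · have h1 := ((hasDerivAt_id s).sub_const σ)
        exact ((h1.const_mul (k + 1)).add (((h1.const_mul (2 * (n:ℝ))).const_add (‖x - y‖ ^ 2)).const_mul (2 * N / d ^ 2))).const_add (v σ x)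
      · rw [hlapw, hvl σ hσ x]
        have h1 := hk _ (htst x hx)
        rw [hη.intr] at h1
        linarith)
    (fun x _ => by
      have : 0 ≤ 2 * N / d ^ 2 * (‖x - y‖ ^ 2 + 2 * n * (σ - σ)) := by
        rw [sub_self]; positivity
      show v σ x ≤ v σ x + ((k + 1) * (σ - σ) + 2 * N / d ^ 2 * (‖x - y‖ ^ 2 + 2 * n * (σ - σ)))
      rw [sub_self] at *
      linarith)
    (fun s hs x hx => by
      have hsI := hIcc hs
      have hx' : ‖x - y‖ = d := by rw [← dist_eq_norm]; exact hx
      show v s x ≤ v σ x + ((k + 1) * (s - σ) + 2 * N / d ^ 2 * (‖x - y‖ ^ 2 + 2 * n * (s - σ)))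
      rw [hx']
      have h1 := (abs_le.1 (hvb s hsI x)).2
      have h2 := (abs_le.1 (hvb σ hσ x)).1
      have h3 : 2 * N / d ^ 2 * (d ^ 2 + 2 * n * (s - σ)) = 2 * N + 2 * N / d ^ 2 * (2 * n * (s - σ)) := by
        field_simp
      have h4 : 0 ≤ s - σ := by linarith [hs.1]
      have h5 : 0 ≤ 2 * N / d ^ 2 * (2 * n * (s - σ)) := by positivity
      have h6 : 0 ≤ (k + 1) * (s - σ) := by positivity
      rw [h3]
      linarith)
  have hfin : v t y ≤ v σ y + ((k + 1) * (t - σ) + 2 * N / d ^ 2 * (‖y - y‖ ^ 2 + 2 * n * (t - σ))) :=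
    hmp t ⟨ht.1.le, le_rfl⟩ y (mem_closedBall_self hd.le)
  have e1 : u t y - κ / 2 ≤ v t y := hη.ge (h.integrable htI) fun z hz => (hball z (hsubball hz)).1.le
  have e2 : v σ y ≤ u σ y + κ / 2 := hη.le (h.integrable hσ) fun z hz => (hball z (hsubball hz)).2.le
  simp only [sub_self, norm_zero] at hfin
  have : (k + 1) * (t - σ) + 2 * N / d ^ 2 * (0 ^ 2 + 2 * n * (t - σ)) = (k + 1 + 4 * n * N / d ^ 2) * (t - σ) := by
    ring
  rw [this] at hfin
  linarith

end weak
end S14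

namespace S14
open Topology MeasureTheory

section weak2
variable {n : ℕ}
variable {a T R N : ℝ} {x₀ : Ed n} {u : ℝ → (Ed n) → ℝ}

lemma int_supp {B : Set (Ed n)} {F ψ : Ed n → ℝ} (hF : ∀ x ∈ B, ContinuousAt F x) (hψ : Tst B ψ) :
    Integrable (fun x => F x * ψ x) := by
  refine Continuous.integrable_of_hasCompactSupport ?_ hψ.cs.mul_left
  rw [continuous_iff_continuousAt]
  intro x
  by_cases hx : x ∈ tsupport ψ
  · exact (hF x (hψ.sub hx)).mul hψ.cd.continuous.continuousAt
  · have h0 : ψ =ᶠ[𝓝 x] fun _ => 0 := notMem_tsupport_iff_eventuallyEq.1 hx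
    have : (fun x => F x * ψ x) =ᶠ[𝓝 x] fun _ => 0 := by
      filter_upwards [h0] with z hz
      rw [hz, mul_zero]
    exact (continuousAt_const (y := (0:ℝ))).congr this.symm

lemma tst_int {B : Set (Ed n)} {ψ : Ed n → ℝ} (hψ : Tst B ψ) : Integrable ψ :=
  hψ.cd.continuous.integrable_of_hasCompactSupport hψ.cs

lemma test_of_lap_le {B : Set (Ed n)} {f ψ : Ed n → ℝ} {k : ℝ} (hf : ∀ x ∈ B, ContDiffAt ℝ 2 f x)
    (hk : ∀ x ∈ B, lap f x ≤ k) (hψ : Tst B ψ) : ∫ x, f x * lap ψ x ≤ k * ∫ x, ψ x := by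
  rw [ibp hf hψ, ← integral_const_mul]
  refine integral_mono (int_supp (fun x hx => lap_cont (hf x hx)) hψ) ((tst_int hψ).const_mul k) fun x => ?_
  by_cases hx : x ∈ tsupport ψ
  · exact mul_le_mul_of_nonneg_right (hk x (hψ.sub hx)) (hψ.nn x)
  · simp [image_eq_zero_of_notMem_tsupport hx]

lemma lap_le_of_test {B : Set (Ed n)} (hB : IsOpen B) {f : Ed n → ℝ} {k : ℝ} (hf : ∀ x ∈ B, ContDiffAt ℝ 2 f x)
    (hk : ∀ ψ, Tst B ψ → ∫ x, f x * lap ψ x ≤ k * ∫ x, ψ x) {x : Ed n} (hx : x ∈ B) : lap f x ≤ k := by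
  by_contra hcon
  push Not at hcon
  obtain ⟨m, hm1, hm2⟩ := exists_between hcon
  have h1 : ∀ᶠ z in 𝓝 x, m < lap f z := (lap_cont (hf x hx)).eventually (lt_mem_nhds hm2)
  obtain ⟨ε', hε', hball⟩ := Metric.eventually_nhds_iff_ball.1 (h1.and (hB.mem_nhds hx))
  have hsb : closedBall x (ε' / 2) ⊆ ball x ε' := closedBall_subset_ball (by linarith)
  obtain ⟨η, hη⟩ := exists_mol (n := n) (show 0 < ε' / 2 by linarith)
  have hT1 : Tst (closedBall x (ε' / 2)) (fun y => η (x - y)) := hη.tst Subset.rfl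
  have hT : Tst B (fun y => η (x - y)) := hη.tst (fun z hz => (hball z (hsb hz)).2)
  have h2 := hk _ hT
  rw [ibp hf hT, hη.intr] at h2
  have h3 : ∫ y, m * η (x - y) ≤ ∫ y, lap f y * η (x - y) := by
    refine integral_mono ((tst_int hT).const_mul m) (int_supp (fun x hx => lap_cont (hf x hx)) hT) fun y => ?_
    by_cases hy : y ∈ tsupport (fun y => η (x - y))
    · exact mul_le_mul_of_nonneg_right (hball y (hsb (hT1.sub hy))).1.le (hη.nn _)
    · have := image_eq_zero_of_notMem_tsupport hy
      simp [this]
  rw [integral_const_mul, hη.intr] at h3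
  linarith

lemma gapC (h : Reg a T x₀ R N u) {B : Set (Ed n)} (hBR : B ⊆ ball x₀ R) {k σ d : ℝ} (hσ : σ ∈ Ioo a T)
    (hk0 : 0 ≤ k)
    (hk : ∀ ψ, Tst B ψ → ∫ x, u σ x * lap ψ x ≤ k * ∫ x, ψ x)
    {t : ℝ} (ht : σ < t) (htT : t < T)
    (hRD : ∀ τ ∈ Ioo σ t, RD u B τ) {y : Ed n} (hd : 0 < d) (hy : closedBall y (2 * d) ⊆ B) :
    u t y ≤ u σ y + (k + 1 + 4 * n * N / d ^ 2) * (t - σ) := by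
  have htI : t ∈ Ioo a T := ⟨hσ.1.trans ht, htT⟩
  have c1 : Tendsto (fun s => u s y) (𝓝[<] t) (𝓝 (u t y)) := (h.contT htI y).tendsto.mono_left nhdsWithin_le_nhds
  have c2 : Tendsto (fun s => u σ y + (k + 1 + 4 * n * N / d ^ 2) * (s - σ)) (𝓝[<] t)
      (𝓝 (u σ y + (k + 1 + 4 * n * N / d ^ 2) * (t - σ))) := by
    have : Continuous (fun s => u σ y + (k + 1 + 4 * n * N / d ^ 2) * (s - σ)) := by fun_prop
    exact this.continuousAt.tendsto.mono_left nhdsWithin_le_nhds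
  refine le_of_tendsto_of_tendsto c1 c2 ?_
  filter_upwards [Ioo_mem_nhdsLT ht] with s hs
  exact gap h hBR hσ htT.le hk0 hk hRD hd hy hs

lemma ptw (h : Reg a T x₀ R N u) {B G : Set _} (hB : IsOpen B) (hBR : B ⊆ ball x₀ R) {k α β d : ℝ}
    (hk0 : 0 ≤ k) (hαβ : Ioo α β ⊆ Ioo a T) (hG : IsOpen G) (hGR : ∀ τ ∈ G, RD u B τ)
    (hk : ∀ σ ∈ Ioo α β, σ ∉ G → ∀ ψ, Tst B ψ → ∫ x, u σ x * lap ψ x ≤ k * ∫ x, ψ x)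
    {y : Ed n} (hd : 0 < d) (hy : closedBall y (2 * d) ⊆ B) {s t : ℝ} (hs : s ∈ Ioo α β) (hsG : s ∉ G)
    (ht : t ∈ Ioo α β) (hst : s ≤ t) :
    u t y ≤ u s y + (k + 1 + 4 * n * N / d ^ 2) * (t - s) := by
  have hyB : y ∈ B := hy (mem_closedBall_self (by linarith))
  have hN : 0 ≤ N := (abs_nonneg _).trans (h.bd s (hαβ hs) y)
  set C := k + 1 + 4 * n * N / d ^ 2 with hC
  have hCk : k < C := by
    have : 0 ≤ 4 * n * N / d ^ 2 := by positivity
    linarith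
  let g : ℝ → ℝ := fun τ => u τ y - C * τ
  have hIcc : Icc s t ⊆ Ioo α β := fun τ hτ => ⟨hs.1.trans_le hτ.1, hτ.2.trans_lt ht.2⟩
  have hgc : ContinuousOn g (Icc s t) := fun τ hτ =>
    ((h.contT (hαβ (hIcc hτ)) y).sub (continuous_const.mul continuous_id).continuousAt).continuousWithinAt
  have hK1 : IsClosed (Icc s t ∩ g ⁻¹' Iic (g s)) := hgc.preimage_isClosed_of_isClosed isClosed_Icc isClosed_Iic
  have hK2 : IsCompact ((Icc s t ∩ g ⁻¹' Iic (g s)) ∩ Gᶜ) :=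
    (isCompact_Icc.of_isClosed_subset hK1 inter_subset_left).inter_right hG.isClosed_compl
  obtain ⟨σ, ⟨⟨⟨hσI, hσg⟩, hσG⟩, hσmax⟩⟩ := hK2.exists_isGreatest ⟨s, ⟨⟨⟨le_rfl, hst⟩, (show g s ≤ g s from le_rfl)⟩, hsG⟩⟩
  have hσg : g σ ≤ g s := hσg
  suffices g t ≤ g s by simp only [g] at this; linarith
  rcases eq_or_lt_of_le hσI.2 with heq | hlt
  · rw [← heq]; exact hσg
  have hσab := hIcc hσI
  have hσaT := hαβ hσab
  -- gap step
  have hgap : ∀ b, σ < b → b ≤ t → (∀ τ ∈ Ioo σ b, τ ∈ G) → g b ≤ g s := by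
    intro b hb hbt hbG
    have := gapC h hBR hσaT hk0 (hk σ hσab hσG) hb (hαβ (hIcc ⟨hσI.1.trans hb.le, hbt⟩)).2
      (fun τ hτ => hGR τ (hbG τ hτ)) hd hy
    rw [← hC] at this
    simp only [g] at hσg ⊢
    linarith
  by_cases hemp : ∃ τ ∈ Ioc σ t, τ ∉ G
  · exfalso
    have hder : deriv (fun s => u s y) σ ≤ k := (h.ineq σ hσaT y (hBR hyB)).trans
      (lap_le_of_test hB (fun x hx => h.cx σ hσaT x (hBR hx)) (hk σ hσab hσG) hyB)
    have hsl := hasDerivAt_iff_tendsto_slope.1 (h.dt σ hσaT y (hBR hyB)).hasDerivAt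
    have e2 : ∀ᶠ τ in 𝓝[>] σ, slope (fun s => u s y) σ τ < C :=
      (hsl.mono_left (nhdsWithin_mono _ (fun s hs => ne_of_gt hs))).eventually (gt_mem_nhds (by linarith))
    obtain ⟨m, hm, hmI⟩ := (mem_nhdsGT_iff_exists_Ioo_subset).1 e2
    have hm : σ < m := hm
    have hnear : ∀ τ ∈ Ioo σ m, g τ ≤ g s := by
      intro τ hτ
      have h1 : slope (fun s => u s y) σ τ < C := hmI hτ
      rw [slope_def_field, div_lt_iff₀ (by linarith [hτ.1])] at h1
      simp only [g] at hσg ⊢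
      linarith
    have hnoE : ∀ τ ∈ Ioc σ t, g τ ≤ g s → τ ∈ G := by
      intro τ hτ hgτ
      by_contra hτG
      have : τ ≤ σ := hσmax ⟨⟨⟨hσI.1.trans hτ.1.le, hτ.2⟩, hgτ⟩, hτG⟩
      linarith [hτ.1]
    obtain ⟨τz, hemI, hemG⟩ := hemp
    have hemM : m ≤ τz := by
      by_contra hcon
      push Not at hcon
      exact hemG (hnoE τz hemI (hnear τz ⟨hemI.1, hcon⟩))
    have hK3 : IsCompact (Icc m t ∩ Gᶜ) := isCompact_Icc.inter_right hG.isClosed_compl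
    obtain ⟨b, ⟨hbI, hbG⟩, hbmin⟩ := hK3.exists_isLeast ⟨τz, ⟨hemM, hemI.2⟩, hemG⟩
    have hσb : σ < b := hm.trans_le hbI.1
    refine hbG (hnoE b ⟨hσb, hbI.2⟩ (hgap b hσb hbI.2 ?_))
    intro τ hτ
    by_contra hτG
    rcases lt_or_ge τ m with h1 | h1
    · exact hτG (hnoE τ ⟨hτ.1, hτ.2.le.trans hbI.2⟩ (hnear τ ⟨hτ.1, h1⟩))
    · have : b ≤ τ := hbmin ⟨⟨h1, hτ.2.le.trans hbI.2⟩, hτG⟩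
      linarith [hτ.2]
  · push Not at hemp
    exact hgap t hlt le_rfl fun τ hτ => hemp τ ⟨hτ.1, hτ.2.le⟩

lemma lap_meas (f : Ed n → ℝ) : Measurable (lap f) := by
  unfold lap
  exact Finset.measurable_fun_sum _ fun i _ => measurable_fderiv_apply_const ℝ _ _

lemma fatou (h : Reg a T x₀ R N u) {B : Set (Ed n)} (hBR : B ⊆ ball x₀ R) {s β C : ℝ} (hs : s ∈ Ioo a T)
    (hsβ : s < β) (hβ : β ≤ T) {ψ : Ed n → ℝ} (hψ : Tst B ψ)
    (hC : ∀ y ∈ tsupport ψ, ∀ t ∈ Ioo s β, u t y - u s y ≤ C * (t - s)) {c : ℝ}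
    (hc : ∫ x, u s x * lap ψ x < c) :
    ∀ᶠ z in 𝓝[>] s, (∫ x, u z x * ψ x) - (∫ x, u s x * ψ x) ≤ c * (z - s) := by
  have hcd : ∀ x ∈ B, ContDiffAt ℝ 2 (u s) x := fun x hx => h.cx s hs x (hBR hx)
  rw [ibp hcd hψ] at hc
  obtain ⟨L, hL⟩ := hψ.cs.isCompact.exists_bound_of_continuousOn (f := lap (u s))
    (fun x hx => (lap_cont (hcd x (hψ.sub hx))).continuousWithinAt)
  let q : ℝ → Ed n → ℝ := fun z y => max ((u z y - u s y) / (z - s)) (lap (u s) y) * ψ y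
  have hzI : ∀ z ∈ Ioo s β, z ∈ Ioo a T := fun z hz => ⟨hs.1.trans hz.1, hz.2.trans_le hβ⟩
  have hmeas : ∀ z ∈ Ioo s β, AEStronglyMeasurable (q z) := fun z hz =>
    ((Measurable.max (((h.meas (hzI z hz)).sub (h.meas hs)).div_const _) (lap_meas _)).mul
      hψ.cd.continuous.measurable).aestronglyMeasurable
  have hbd : ∀ z ∈ Ioo s β, ∀ y, ‖q z y‖ ≤ (|C| + L) * ψ y := by
    intro z hz y
    by_cases hy : y ∈ tsupport ψ
    · simp only [q]
      rw [norm_mul, Real.norm_of_nonneg (hψ.nn y)]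
      refine mul_le_mul_of_nonneg_right ?_ (hψ.nn y)
      have h1 := hL y hy
      rw [Real.norm_eq_abs] at h1 ⊢
      have h2 : (u z y - u s y) / (z - s) ≤ C := by
        rw [div_le_iff₀ (by linarith [hz.1])]
        exact hC y hy z hz
      have h3 := abs_le.1 h1
      have h4 := le_abs_self C
      have h5 := abs_nonneg C
      have h6 := abs_nonneg (lap (u s) y)
      rw [abs_le]
      constructor
      · linarith [le_max_right ((u z y - u s y) / (z - s)) (lap (u s) y)]
      · exact max_le (by linarith) (by linarith)
    · simp [q, image_eq_zero_of_notMem_tsupport hy]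
  have hev : ∀ᶠ z in 𝓝[>] s, z ∈ Ioo s β := Ioo_mem_nhdsGT hsβ
  have hlim : Tendsto (fun z => ∫ y, q z y) (𝓝[>] s) (𝓝 (∫ y, lap (u s) y * ψ y)) := by
    refine tendsto_integral_filter_of_dominated_convergence (fun y => (|C| + L) * ψ y) ?_ ?_ ?_ ?_
    · filter_upwards [hev] with z hz using hmeas z hz
    · filter_upwards [hev] with z hz using Eventually.of_forall (hbd z hz)
    · exact (tst_int hψ).const_mul _
    · refine Eventually.of_forall fun y => ?_
      by_cases hy : y ∈ tsupport ψ
      · have hyR := hBR (hψ.sub hy)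
        have hsl := (hasDerivAt_iff_tendsto_slope.1 (h.dt s hs y hyR).hasDerivAt).mono_left
          (nhdsWithin_mono s (fun z (hz : z ∈ Ioi s) => ne_of_gt hz))
        have h2 : Tendsto (fun z => (u z y - u s y) / (z - s)) (𝓝[>] s) (𝓝 (deriv (fun s => u s y) s)) := by
          refine hsl.congr fun z => ?_
          rw [slope_def_field]
        have h3 := (h2.max (tendsto_const_nhds (x := lap (u s) y))).mul_const (ψ y)
        rw [max_eq_right (h.ineq s hs y hyR)] at h3
        exact h3
      · simp [q, image_eq_zero_of_notMem_tsupport hy]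
  filter_upwards [hev, hlim.eventually (gt_mem_nhds hc)] with z hz hlt
  have hz0 : 0 < z - s := by linarith [hz.1]
  have i1 := int_mul (h.integrable (hzI z hz)) hψ.cd.continuous hψ.cs
  have i2 := int_mul (h.integrable hs) hψ.cd.continuous hψ.cs
  have i3 : Integrable (q z) := ((tst_int hψ).const_mul (|C| + L)).mono' (hmeas z hz) (Eventually.of_forall (hbd z hz))
  calc (∫ x, u z x * ψ x) - (∫ x, u s x * ψ x) = ∫ x, (u z x * ψ x - u s x * ψ x) := (integral_sub i1 i2).symm
    _ ≤ ∫ x, (z - s) * q z x := by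
        refine integral_mono (i1.sub i2) (i3.const_mul _) fun x => ?_
        have h1 : (u z x - u s x) / (z - s) * ψ x ≤ q z x := mul_le_mul_of_nonneg_right (le_max_left _ _) (hψ.nn x)
        have h2 := mul_le_mul_of_nonneg_left h1 hz0.le
        calc u z x * ψ x - u s x * ψ x = (z - s) * ((u z x - u s x) / (z - s) * ψ x) := by field_simp
          _ ≤ _ := h2
    _ = (z - s) * ∫ x, q z x := integral_const_mul _ _
    _ ≤ c * (z - s) := by nlinarith

lemma baire1 {S : ℕ → Set ℝ} {G : Set ℝ} (hG : IsOpen G) (hS : ∀ k, closure (S k) ∩ Ioo a T ⊆ S k)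
    (hne : (Ioo a T \ G).Nonempty) (hcov : ∀ t ∈ Ioo a T, ∃ k, t ∈ S k) :
    ∃ k : ℕ, ∃ t0 ∈ Ioo a T \ G, ∃ δ > 0, ∀ t ∈ Ioo a T \ G, |t - t0| < δ → t ∈ S k := by
  set E := Ioo a T \ G with hE
  have hgd : IsGδ E := by
    rw [hE, diff_eq]
    exact isOpen_Ioo.isGδ.inter hG.isClosed_compl.isGδ
  haveI : BaireSpace E := hgd.baireSpace_of_t2Space_locallyCompactSpace
  haveI : Nonempty E := hne.to_subtype
  obtain ⟨k, ⟨t0, ht0⟩⟩ := nonempty_interior_of_iUnion_of_closed (X := E)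
    (f := fun k => (Subtype.val ⁻¹' (closure (S k)) : Set E))
    (fun k => isClosed_closure.preimage continuous_subtype_val)
    (by
      rw [eq_univ_iff_forall]
      intro t
      obtain ⟨k, hk⟩ := hcov t t.2.1
      exact mem_iUnion.2 ⟨k, subset_closure hk⟩)
  rw [mem_interior_iff_mem_nhds, Metric.mem_nhds_iff] at ht0
  obtain ⟨δ, hδ, hsub⟩ := ht0
  refine ⟨k, t0, t0.2, δ, hδ, fun t ht htd => hS k ⟨?_, ht.1⟩⟩
  exact hsub (show (⟨t, ht⟩ : E) ∈ ball t0 δ from htd)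

lemma weak_sub (h : Reg a T x₀ R N u) {R' : ℝ} (hR' : R' < R) :
    ∀ t ∈ Ioo a T, RD u (ball x₀ R') t := by
  set B := ball x₀ R' with hBdef
  have hBR : B ⊆ ball x₀ R := ball_subset_ball hR'.le
  have hB : IsOpen B := isOpen_ball
  by_contra hcon
  push Not at hcon
  obtain ⟨t1, ht1, hnot⟩ := hcon
  set G := interior {t | RD u B t} with hGdef
  have hG : IsOpen G := isOpen_interior
  have hGR : ∀ τ ∈ G, RD u B τ := fun τ hτ => interior_subset hτ
  let S : ℕ → Set ℝ := fun k => {t | t ∈ Ioo a T ∧ ∀ ψ, Tst B ψ → ∫ x, u t x * lap ψ x ≤ k * ∫ x, ψ x}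
  have hS : ∀ k, closure (S k) ∩ Ioo a T ⊆ S k := by
    rintro k t ⟨htc, ht⟩
    refine ⟨ht, fun ψ hψ => ?_⟩
    have hJ : ContinuousAt (fun τ => ∫ x, u τ x * lap ψ x) t :=
      (h.tcont (lap_continuous hψ.cd) (lap_cs hψ.cs)).continuousAt (isOpen_Ioo.mem_nhds ht)
    by_contra hlt
    push Not at hlt
    obtain ⟨τ, hτ1, hτ2⟩ := mem_closure_iff_nhds.1 htc _ (hJ.eventually (lt_mem_nhds hlt))
    exact absurd (hτ2.2 ψ hψ) (not_le.2 hτ1)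
  have hcov : ∀ t ∈ Ioo a T, ∃ k, t ∈ S k := by
    intro t ht
    obtain ⟨L, hL⟩ := (isCompact_closedBall x₀ R').exists_bound_of_continuousOn (f := lap (u t))
      (fun x hx => (lap_cont (h.cx t ht x (closedBall_subset_ball hR' hx))).continuousWithinAt)
    obtain ⟨k, hk⟩ := exists_nat_ge L
    refine ⟨k, ht, fun ψ hψ => test_of_lap_le (fun x hx => h.cx t ht x (hBR hx)) (fun x hx => ?_) hψ⟩
    exact (le_abs_self _).trans ((hL x (ball_subset_closedBall hx)).trans hk)
  obtain ⟨k, t0, ht0, δ, hδ, hk⟩ := baire1 hG hS ⟨t1, ht1, fun hx => hnot (hGR t1 hx)⟩ hcov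
  set α := max a (t0 - δ)
  set β := min T (t0 + δ)
  have hαβ : Ioo α β ⊆ Ioo a T := Ioo_subset_Ioo (le_max_left _ _) (min_le_left _ _)
  have hk' : ∀ σ ∈ Ioo α β, σ ∉ G → ∀ ψ, Tst B ψ → ∫ x, u σ x * lap ψ x ≤ k * ∫ x, ψ x := by
    intro σ hσ hσG
    refine (hk σ ⟨hαβ hσ, hσG⟩ ?_).2
    rw [abs_lt]
    have h1 := (le_max_right a (t0 - δ)).trans_lt hσ.1
    have h2 := hσ.2.trans_le (min_le_right T (t0 + δ))
    constructor <;> linarith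
  have hall : Ioo α β ⊆ {t | RD u B t} := by
    intro s hs
    by_cases hsG : s ∈ G
    · exact hGR s hsG
    intro ψ hψ c hc
    obtain ⟨δ', hδ', hth⟩ := hψ.cs.isCompact.exists_cthickening_subset_open hB hψ.sub
    refine fatou h hBR (hαβ hs) hs.2 (min_le_left _ _) hψ (C := k + 1 + 4 * n * N / (δ' / 2) ^ 2) ?_ hc
    intro y hy t ht
    have hcb : closedBall y (2 * (δ' / 2)) ⊆ B := by
      have := closedBall_subset_cthickening hy δ'
      rw [show 2 * (δ' / 2) = δ' by ring]
      exact this.trans hth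
    have := ptw h hB hBR (Nat.cast_nonneg k) hαβ hG hGR hk' (show 0 < δ' / 2 by linarith) hcb hs hsG
      ⟨hs.1.trans ht.1, ht.2⟩ ht.1.le
    linarith
  refine ht0.2 (interior_maximal hall isOpen_Ioo ⟨max_lt ht0.1.1 (by linarith), lt_min ht0.1.2 (by linarith)⟩)

end weak2
end S14

namespace S14
open Topology MeasureTheory

section fin
variable {n : ℕ}
variable {a T R N : ℝ} {x₀ : Ed n} {u : ℝ → (Ed n) → ℝ}

lemma compare (h : Reg a T x₀ R N u) {t1 t2 d : ℝ} (hdR : d < R) (h1 : a < t1) (h2 : t2 < T)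
    {w : ℝ → Ed n → ℝ} {φ : ℝ → ℝ}
    (hw : ContinuousOn (fun q : ℝ × (Ed n) => w q.1 q.2) (Icc t1 t2 ×ˢ closedBall x₀ d))
    (hw2 : ∀ t ∈ Ioc t1 t2, ∀ x ∈ ball x₀ d, ContDiffAt ℝ 2 (w t) x)
    (hsup : ∀ t ∈ Ioc t1 t2, ∀ x ∈ ball x₀ d, ∃ w', HasDerivAt (fun s => w s x) w' t ∧ lap (w t) x < w')
    (hφ : ∀ s ∈ Icc t1 t2, ∀ x, u s x ≤ φ s)
    (hinit : ∀ x ∈ closedBall x₀ d, φ t1 ≤ w t1 x)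
    (hlat : ∀ t ∈ Icc t1 t2, ∀ x ∈ sphere x₀ d, φ t ≤ w t x) :
    ∀ t ∈ Icc t1 t2, ∀ x ∈ closedBall x₀ d, u t x ≤ w t x := by
  intro t ht y hy
  have hIcc : Icc t1 t2 ⊆ Ioo a T := fun s hs => ⟨h1.trans_le hs.1, hs.2.trans_lt h2⟩
  have htI := hIcc ht
  have hyR : y ∈ ball x₀ R := closedBall_subset_ball hdR hy
  have ht12 : t1 ≤ t2 := ht.1.trans ht.2
  refine le_of_forall_pos_le_add fun κ hκ => ?_
  have c1 : ∀ᶠ z in 𝓝 y, u t y - κ < u t z :=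
    (h.cx t htI y hyR).continuousAt.eventually (lt_mem_nhds (by linarith))
  obtain ⟨ε', hε', hball⟩ := Metric.eventually_nhds_iff_ball.1 c1
  set ε := min (ε' / 2) ((R - d) / 3) with hεdef
  have hε : 0 < ε := lt_min (by linarith) (by linarith)
  have hεd : ε ≤ (R - d) / 3 := min_le_right _ _
  have hεε : ε < ε' := lt_of_le_of_lt (min_le_left _ _) (by linarith)
  have hsubball : closedBall y ε ⊆ ball y ε' := closedBall_subset_ball hεε
  obtain ⟨η, hη⟩ := exists_mol (n := n) hε
  let v : ℝ → Ed n → ℝ := fun s x => ∫ z, u s z * η (x - z)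
  have hv2 : ∀ s ∈ Ioo a T, ContDiff ℝ 2 (v s) := fun s hs => mol_contDiff (h.integrable hs) hη.cd hη.cs
  have hvl : ∀ s ∈ Ioo a T, ∀ x, lap (v s) x = ∫ z, u s z * lap (fun z => η (x - z)) z := fun s hs x => by
    simp_rw [lap_refl hη.cd]
    exact mol_lap (h.integrable hs) hη.cd hη.cs x
  have hRD := weak_sub h (R' := (R + d) / 2) (by linarith)
  have htst : ∀ x ∈ ball x₀ d, Tst (ball x₀ ((R + d) / 2)) (fun z => η (x - z)) := fun x hx => hη.tst (by
    refine closedBall_subset_ball' ?_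
    have := mem_ball.1 hx
    linarith)
  have hmp := max_principle (v := v) (w := w) (t1 := t1) (t2 := t2) (d := d) (y := x₀)
    ((h.jcont hη.cd.continuous hη.cs).mono (fun q hq => ⟨hIcc hq.1, mem_univ _⟩))
    hw
    (fun s hs x _ => (hv2 s (hIcc ⟨hs.1.le, hs.2⟩)).contDiffAt)
    hw2
    (fun s hs x hx c hc => by
      have hsI := hIcc ⟨hs.1.le, hs.2⟩
      rw [hvl s hsI x] at hc
      exact left_dini h hs.1 h1.le hsI.2 (fun τ hτ => hRD τ ⟨h1.trans hτ.1, hτ.2.trans hsI.2⟩) (htst x hx) hc)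
    hsup
    (fun x hx => (hη.le (h.integrable (hIcc ⟨le_rfl, ht12⟩)) (fun z _ => hφ t1 ⟨le_rfl, ht12⟩ z)).trans (hinit x hx))
    (fun s hs x hx => (hη.le (h.integrable (hIcc hs)) (fun z _ => hφ s hs z)).trans (hlat s hs x hx))
  have hfin : v t y ≤ w t y := hmp t ht y hy
  have e1 : u t y - κ ≤ v t y := hη.ge (h.integrable htI) fun z hz => (hball z (hsubball hz)).le
  linarith

lemma barrier {β δ d A : ℝ} (hβ : 0 < β) (hδ : 0 < δ) (hA : 0 < A)
    (hδd : δ * d ^ 2 * (16 * (β + 1) + 4 * n) < 1) {t : ℝ} (ht : t < T) {x : Ed n} (hx : x ∈ ball x₀ d) :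
    ContDiffAt ℝ 2 (fun x : Ed n => A * (δ * (d ^ 2 - ‖x - x₀‖ ^ 2) ^ 2 + (T - t)) ^ (-β)) x ∧
    ∃ w', HasDerivAt (fun s => A * (δ * (d ^ 2 - ‖x - x₀‖ ^ 2) ^ 2 + (T - s)) ^ (-β)) w' t ∧
      lap (fun x : Ed n => A * (δ * (d ^ 2 - ‖x - x₀‖ ^ 2) ^ 2 + (T - t)) ^ (-β)) x < w' := by
  have hg : ∀ q : ℝ, 0 < δ * (d ^ 2 - q) ^ 2 + (T - t) := fun q => by
    have : 0 < T - t := by linarith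
    positivity
  have hq : ‖x - x₀‖ ^ 2 ≤ d ^ 2 := by
    have := mem_ball_iff_norm.1 hx
    have h0 := norm_nonneg (x - x₀)
    nlinarith
  have hcd : ContDiffAt ℝ 2 (fun x : Ed n => (δ * (d ^ 2 - ‖x - x₀‖ ^ 2) ^ 2 + (T - t)) ^ (-β)) x := by
    have h1 : ContDiffAt ℝ 2 (fun x : Ed n => ‖x - x₀‖ ^ 2) x := (contDiffAt_id.sub contDiffAt_const).norm_sq ℝ
    exact ((contDiffAt_const.mul ((contDiffAt_const.sub h1).pow 2)).add contDiffAt_const).rpow_const_of_ne (hg _).ne'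
  refine ⟨contDiffAt_const.mul hcd, ?_⟩
  set q := ‖x - x₀‖ ^ 2 with hqd
  have hq0 : 0 ≤ q := by positivity
  set g := δ * (d ^ 2 - q) ^ 2 + (T - t) with hgd
  have hgp : 0 < g := hg q
  set P := g ^ (-β - 1) with hP
  have hPp : 0 < P := Real.rpow_pos_of_pos hgp _
  have hP2 : g ^ (-β - 1 - 1) = P / g := Real.rpow_sub_one hgp.ne' _
  refine ⟨A * (β * P), ?_, ?_⟩
  · have h1 : HasDerivAt (fun s => δ * (d ^ 2 - q) ^ 2 + (T - s)) (-1) t := by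
      simpa using ((hasDerivAt_id t).const_sub T).const_add (δ * (d ^ 2 - q) ^ 2)
    have h2 := (h1.rpow_const (p := -β) (Or.inl (hg q).ne')).const_mul A
    exact h2.congr_deriv (by ring)
  · rw [lap_const_mul A hcd]
    refine mul_lt_mul_of_pos_left ?_ hA
    have hgd1 : ∀ q : ℝ, HasDerivAt (fun q => δ * (d ^ 2 - q) ^ 2 + (T - t)) (-(2 * δ * (d ^ 2 - q))) q := fun q => by
      have := ((((hasDerivAt_id q).const_sub (d ^ 2)).pow 2).const_mul δ).add_const (T - t)
      exact this.congr_deriv (by simp; ring)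
    have hgd2 : HasDerivAt (fun q => -(2 * δ * (d ^ 2 - q))) (2 * δ) q := by
      have := (((hasDerivAt_id q).const_sub (d ^ 2)).const_mul (2 * δ)).neg
      exact this.congr_deriv (by ring)
    rw [lap_radial (f := fun q => (δ * (d ^ 2 - q) ^ 2 + (T - t)) ^ (-β))
      (f' := fun q => -(2 * δ * (d ^ 2 - q)) * (-β) * (δ * (d ^ 2 - q) ^ 2 + (T - t)) ^ (-β - 1))
      (Eventually.of_forall fun q => (hgd1 q).rpow_const (Or.inl (hg q).ne'))
      ((hgd2.mul_const (-β)).mul ((hgd1 q).rpow_const (p := -β - 1) (Or.inl (hg q).ne')))]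
    simp only [← hqd, ← hgd, ← hP, hP2]
    have hkey : 4 * q * ((2 * δ) * (-β) * P + -(2 * δ * (d ^ 2 - q)) * (-β) *
        (-(2 * δ * (d ^ 2 - q)) * (-β - 1) * (P / g))) + 2 * n * (-(2 * δ * (d ^ 2 - q)) * (-β) * P)
        = β * P * (4 * q * ((β + 1) * (4 * δ * (δ * (d ^ 2 - q) ^ 2 / g)) - 2 * δ) + 2 * n * (2 * δ * (d ^ 2 - q))) := by
      field_simp
      ring
    rw [hkey]
    have hD : δ * (d ^ 2 - q) ^ 2 / g ≤ 1 := (div_le_one hgp).2 (by rw [hgd]; linarith)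
    have hb : 4 * q * ((β + 1) * (4 * δ * (δ * (d ^ 2 - q) ^ 2 / g)) - 2 * δ) + 2 * n * (2 * δ * (d ^ 2 - q)) < 1 := by
      refine lt_of_le_of_lt ?_ hδd
      have e1 : (β + 1) * (4 * δ * (δ * (d ^ 2 - q) ^ 2 / g)) ≤ (β + 1) * (4 * δ * 1) := by gcongr
      have e2 : 4 * q * ((β + 1) * (4 * δ * (δ * (d ^ 2 - q) ^ 2 / g)) - 2 * δ) ≤ 4 * q * ((β + 1) * (4 * δ)) :=
        mul_le_mul_of_nonneg_left (by linarith) (by positivity)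
      have e3 : 4 * q * ((β + 1) * (4 * δ)) ≤ 4 * d ^ 2 * ((β + 1) * (4 * δ)) := by gcongr
      have e4 : 2 * n * (2 * δ * (d ^ 2 - q)) ≤ 2 * n * (2 * δ * d ^ 2) := by
        gcongr; linarith
      linarith
    calc _ < β * P * 1 := mul_lt_mul_of_pos_left hb (by positivity)
      _ = _ := by ring

lemma key1 {z : ℝ → Ed n → ℝ} {r M β b : ℝ} (hr : 0 < r) (hβ : 0 < β) (hM : 0 < M) (hab : a < b)
    (h0 : ∀ t ∈ Ioo a T, ∀ x ∈ ball x₀ r, 0 ≤ z t x)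
    (hb : ∀ t ∈ Ioo a T, ∀ x ∈ ball x₀ r, z t x ≤ M * (T - t) ^ (-β))
    (hdt : ∀ t ∈ Ioo a T, ∀ x ∈ ball x₀ r, DifferentiableAt ℝ (fun s => z s x) t)
    (hcx : ∀ t ∈ Ioo a T, ∀ x ∈ ball x₀ r, ContDiffAt ℝ 2 (z t) x)
    (hin : ∀ t ∈ Ioo a T, ∀ x ∈ ball x₀ r, deriv (fun s => z s x) t ≤ lap (z t) x) :
    ∃ K > 0, ∀ t ∈ Ioo b T, ∀ x ∈ ball x₀ (r / 4), z t x ≤ K := by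
  classical
  obtain ⟨δ, hδ, hδd⟩ : ∃ δ > 0, δ * (r / 2) ^ 2 * (16 * (β + 1) + 4 * n) < 1 := by
    have hc : 0 < (r / 2) ^ 2 * (16 * (β + 1) + 4 * n) := by positivity
    refine ⟨1 / (2 * ((r / 2) ^ 2 * (16 * (β + 1) + 4 * n))), by positivity, ?_⟩
    rw [mul_assoc, div_mul_eq_mul_div, div_lt_one (by positivity)]
    linarith
  by_cases hbT : b < T
  swap
  · exact ⟨1, one_pos, fun t ht => absurd (ht.1.trans ht.2) hbT⟩
  have hTb : 0 < T - b := by linarith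
  set d := r / 2 with hd
  have hd0 : 0 < d := by positivity
  have hQ : 0 < δ * (d ^ 2) ^ 2 + (T - b) := by positivity
  set A := max M (M * (T - b) ^ (-β) * (δ * (d ^ 2) ^ 2 + (T - b)) ^ β) with hAd
  have hA : 0 < A := lt_max_of_lt_left hM
  refine ⟨A * (δ * (d ^ 2 - (r / 4) ^ 2) ^ 2) ^ (-β), ?_, ?_⟩
  · have : 0 < d ^ 2 - (r / 4) ^ 2 := by rw [hd]; nlinarith
    positivity
  intro t ht x hx
  set τ := (t + T) / 2 with hτ
  have hτT : τ < T := by rw [hτ]; linarith [ht.2]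
  have htτ : t < τ := by rw [hτ]; linarith [ht.2]
  have hsub : ∀ s ∈ Ioo a τ, s ∈ Ioo a T := fun s hs => ⟨hs.1, hs.2.trans hτT⟩
  let u : ℝ → Ed n → ℝ := fun s y => if y ∈ ball x₀ r then z s y else 0
  have hloc : ∀ s, ∀ y ∈ ball x₀ r, u s =ᶠ[𝓝 y] z s := fun s y hy => by
    filter_upwards [isOpen_ball.mem_nhds hy] with y' hy'
    exact if_pos hy'
  have huz : ∀ s, ∀ y ∈ ball x₀ r, u s y = z s y := fun s y hy => if_pos hy
  have hφ : ∀ s ∈ Ioo a T, ∀ y, u s y ≤ M * (T - s) ^ (-β) := fun s hs y => by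
    by_cases hy : y ∈ ball x₀ r
    · rw [huz s y hy]; exact hb s hs y hy
    · have : 0 < T - s := by linarith [hs.2]
      simp only [u, hy, if_false]; positivity
  have hnn : ∀ s ∈ Ioo a T, ∀ y, 0 ≤ u s y := fun s hs y => by
    by_cases hy : y ∈ ball x₀ r
    · rw [huz s y hy]; exact h0 s hs y hy
    · simp only [u, hy, if_false]; exact le_rfl
  have hReg : Reg a τ x₀ r (M * (T - τ) ^ (-β)) u := by
    refine ⟨fun s y hy => if_neg hy, fun s hs y => ?_, fun s hs y hy => ?_, fun s hs y hy => ?_, fun s hs y hy => ?_⟩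
    · rw [abs_of_nonneg (hnn s (hsub s hs) y)]
      refine (hφ s (hsub s hs) y).trans ?_
      refine mul_le_mul_of_nonneg_left ?_ hM.le
      exact Real.rpow_le_rpow_of_nonpos (by linarith) (by linarith [hs.2]) (by linarith)
    · simp_rw [huz _ y hy]; exact hdt s (hsub s hs) y hy
    · exact (hcx s (hsub s hs) y hy).congr_of_eventuallyEq (hloc s y hy)
    · simp_rw [huz _ y hy]; rw [lap_congr (hloc s y hy)]; exact hin s (hsub s hs) y hy
  have hcmp := compare hReg (t1 := b) (t2 := t) (d := d) (by rw [hd]; linarith) hab htτ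
    (w := fun s x => A * (δ * (d ^ 2 - ‖x - x₀‖ ^ 2) ^ 2 + (T - s)) ^ (-β)) (φ := fun s => M * (T - s) ^ (-β))
    (by
      refine continuousOn_const.mul (ContinuousOn.rpow_const (Continuous.continuousOn (by fun_prop)) ?_)
      intro q hq
      left
      have : 0 < T - q.1 := by linarith [hq.1.2, ht.2]
      positivity)
    (fun s hs y hy => (barrier hβ hδ hA hδd (by linarith [hs.2, ht.2]) hy).1)
    (fun s hs y hy => (barrier hβ hδ hA hδd (by linarith [hs.2, ht.2]) hy).2)
    (fun s hs y => hφ s ⟨hab.trans_le hs.1, hs.2.trans_lt ht.2⟩ y)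
    (fun y hy => by
      have hq : ‖y - x₀‖ ^ 2 ≤ d ^ 2 := by
        have := mem_closedBall_iff_norm.1 hy
        gcongr
      have hq0 : 0 ≤ ‖y - x₀‖ ^ 2 := by positivity
      have e1 : (δ * (d ^ 2) ^ 2 + (T - b)) ^ (-β) ≤ (δ * (d ^ 2 - ‖y - x₀‖ ^ 2) ^ 2 + (T - b)) ^ (-β) := by
        refine Real.rpow_le_rpow_of_nonpos (by positivity) ?_ (by linarith)
        gcongr
        linarith
      have e2 : M * (T - b) ^ (-β) * (δ * (d ^ 2) ^ 2 + (T - b)) ^ β ≤ A := le_max_right _ _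
      have e3 : (δ * (d ^ 2) ^ 2 + (T - b)) ^ β * (δ * (d ^ 2) ^ 2 + (T - b)) ^ (-β) = 1 := by
        rw [← Real.rpow_add hQ]; simp
      calc M * (T - b) ^ (-β) = M * (T - b) ^ (-β) * (δ * (d ^ 2) ^ 2 + (T - b)) ^ β * (δ * (d ^ 2) ^ 2 + (T - b)) ^ (-β) := by
            rw [mul_assoc _ _ ((δ * (d ^ 2) ^ 2 + (T - b)) ^ (-β)), e3, mul_one]
        _ ≤ A * (δ * (d ^ 2) ^ 2 + (T - b)) ^ (-β) := by gcongr
        _ ≤ _ := by gcongr)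
    (fun s hs y hy => by
      have hq : ‖y - x₀‖ = d := mem_sphere_iff_norm.1 hy
      have : 0 < T - s := by linarith [hs.2, ht.2]
      simp only [hq, sub_self]
      norm_num
      have := le_max_left M (M * (T - b) ^ (-β) * (δ * (d ^ 2) ^ 2 + (T - b)) ^ β)
      gcongr)
    t ⟨ht.1.le, le_rfl⟩ x (by
      refine ball_subset_closedBall (ball_subset_ball ?_ hx)
      rw [hd]; linarith)
  have hxr : x ∈ ball x₀ r := ball_subset_ball (by linarith) hx
  rw [huz t x hxr] at hcmp
  refine hcmp.trans ?_
  refine mul_le_mul_of_nonneg_left ?_ hA.le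
  have hdr : 0 < d ^ 2 - (r / 4) ^ 2 := by rw [hd]; nlinarith
  have hq : ‖x - x₀‖ ^ 2 ≤ (r / 4) ^ 2 := by
    have := (mem_ball_iff_norm.1 hx).le
    gcongr
  refine Real.rpow_le_rpow_of_nonpos (by positivity) ?_ (by linarith)
  have : δ * (d ^ 2 - (r / 4) ^ 2) ^ 2 ≤ δ * (d ^ 2 - ‖x - x₀‖ ^ 2) ^ 2 := by gcongr
  linarith [ht.2]

lemma key2 {w : ℝ → Ed n → ℝ} {r M β b G : ℝ} {g c : ℝ → ℝ} (hr : 0 < r) (hβ : 0 < β) (hM : 0 < M) (hab : a < b)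
    (hG : 0 < G) (hg0 : ∀ t ∈ Ioo a T, 0 < g t) (hgG : ∀ t ∈ Ioo a T, g t ≤ G)
    (hgd : ∀ t ∈ Ioo a T, HasDerivAt g (-(c t * g t)) t)
    (h0 : ∀ t ∈ Ioo a T, ∀ x ∈ ball x₀ r, 0 ≤ w t x)
    (hb : ∀ t ∈ Ioo a T, ∀ x ∈ ball x₀ r, w t x ≤ M * (T - t) ^ (-β))
    (hdt : ∀ t ∈ Ioo a T, ∀ x ∈ ball x₀ r, DifferentiableAt ℝ (fun s => w s x) t)
    (hcx : ∀ t ∈ Ioo a T, ∀ x ∈ ball x₀ r, ContDiffAt ℝ 2 (w t) x)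
    (hin : ∀ t ∈ Ioo a T, ∀ x ∈ ball x₀ r, deriv (fun s => w s x) t ≤ lap (w t) x + c t * w t x) :
    ∃ K > 0, ∀ t ∈ Ioo b T, ∀ x ∈ ball x₀ (r / 4), g t * w t x ≤ K := by
  refine key1 (z := fun t x => g t * w t x) (M := G * M) (a := a) hr hβ (by positivity) hab ?_ ?_ ?_ ?_ ?_
  · exact fun t ht x hx => mul_nonneg (hg0 t ht).le (h0 t ht x hx)
  · intro t ht x hx
    rw [mul_assoc]
    exact mul_le_mul (hgG t ht) (hb t ht x hx) (h0 t ht x hx) hG.le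
  · exact fun t ht x hx => (hgd t ht).differentiableAt.mul (hdt t ht x hx)
  · exact fun t ht x hx => contDiffAt_const.mul (hcx t ht x hx)
  · intro t ht x hx
    rw [lap_const_mul _ (hcx t ht x hx)]
    have := ((hgd t ht).mul (hdt t ht x hx).hasDerivAt).deriv
    have e : deriv (fun s => g s * w s x) t = -(c t * g t) * w t x + g t * deriv (fun s => w s x) t := this
    rw [e]
    have := mul_le_mul_of_nonneg_left (hin t ht x hx) (hg0 t ht).le
    linarith

end fin
end S14

theorem stmt14
    (n : ℕ) (p C ρ : ℝ) (hp : 1 < p) (hC : 0 < C) (hρ : 0 < ρ)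
    (x₀ : EuclideanSpace ℝ (Fin n))
    (V : EuclideanSpace ℝ (Fin n) → ℝ)
    (hV_cont : ContinuousOn V (ball x₀ ρ)) (hV_nonneg : ∀ x ∈ ball x₀ ρ, 0 ≤ V x)
    (T : ℝ) (hT : 0 < T)
    (u : ℝ → EuclideanSpace ℝ (Fin n) → ℝ)
    (hu_nonneg : ∀ t ∈ Ioo 0 T, ∀ x ∈ ball x₀ ρ, 0 ≤ u t x)
    (hu_t : ∀ t ∈ Ioo 0 T, ∀ x ∈ ball x₀ ρ, DifferentiableAt ℝ (fun s => u s x) t)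
    (hu_x : ∀ t ∈ Ioo 0 T, ∀ x ∈ ball x₀ ρ, ContDiffAt ℝ 2 (fun y => u t y) x)
    (hineq : ∀ t ∈ Ioo 0 T, ∀ x ∈ ball x₀ ρ,
      deriv (fun s => u s x) t ≤ lap (fun y => u t y) x + C * V x * (1 + u t x) ^ p)
    (M : ℝ) (hM : 0 < M)
    (hTypeI : ∀ t ∈ Ioo 0 T, ∀ x ∈ ball x₀ ρ, u t x ≤ M * (T - t) ^ (-(1 / (p - 1))))
    (hVx₀ : V x₀ = 0) :
    ∃ r : ℝ, 0 < r ∧ r < ρ ∧ ∃ K > 0,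
      ∀ t ∈ Ioo (T / 2) T, ∀ x ∈ ball x₀ r, u t x ≤ K := by
  set α := 1 / (p - 1) with hα
  have hp1 : 0 < p - 1 := by linarith
  have hα0 : 0 < α := by positivity
  have hαp : α * (p - 1) = 1 := by rw [hα]; field_simp
  set M1 := T ^ α + M with hM1
  have hM10 : 0 < M1 := by positivity
  have hsT : ∀ t ∈ Ioo 0 T, 0 < T - t := fun t ht => by linarith [ht.2]
  -- the type I bound for `1 + u`
  have hwb : ∀ t ∈ Ioo 0 T, ∀ x ∈ ball x₀ ρ, 1 + u t x ≤ M1 * (T - t) ^ (-α) := by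
    intro t ht x hx
    have hs := hsT t ht
    have h1 : 1 ≤ T ^ α * (T - t) ^ (-α) := by
      rw [Real.rpow_neg hs.le, ← div_eq_mul_inv, one_le_div (by positivity)]
      exact Real.rpow_le_rpow hs.le (by linarith [ht.1]) hα0.le
    have := hTypeI t ht x hx
    rw [hM1, add_mul]
    linarith
  set η := (α / 2) / (C * M1 ^ (p - 1)) with hη
  have hη0 : 0 < η := by positivity
  obtain ⟨r₁, hr₁, hr₁V⟩ : ∃ r₁ > 0, ∀ x ∈ ball x₀ r₁, V x < η := by
    have hc : ContinuousAt V x₀ := hV_cont.continuousAt (isOpen_ball.mem_nhds (mem_ball_self hρ))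
    exact Metric.eventually_nhds_iff_ball.1 (hc.eventually (gt_mem_nhds (by rw [hVx₀]; exact hη0)))
  set r := min r₁ ρ with hr
  have hr0 : 0 < r := lt_min hr₁ hρ
  have hrρ : ball x₀ r ⊆ ball x₀ ρ := ball_subset_ball (min_le_right _ _)
  have hrV : ∀ x ∈ ball x₀ r, V x ≤ η := fun x hx => (hr₁V x (ball_subset_ball (min_le_left _ _) hx)).le
  -- general bound on the reaction term
  have hreact : ∀ t ∈ Ioo 0 T, ∀ x ∈ ball x₀ r, ∀ L γ : ℝ, 0 < L → 1 + u t x ≤ L * (T - t) ^ (-γ) →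
      C * V x * (1 + u t x) ^ p ≤ C * η * L ^ (p - 1) * (T - t) ^ (-(γ * (p - 1))) * (1 + u t x) := by
    intro t ht x hx L γ hL hle
    have hs := hsT t ht
    have hu0 := hu_nonneg t ht x (hrρ hx)
    have hw0 : 0 < 1 + u t x := by linarith
    have e1 : (1 + u t x) ^ p = (1 + u t x) ^ (p - 1) * (1 + u t x) := by
      rw [← Real.rpow_add_one hw0.ne']; congr 1; ring
    have e2 : (1 + u t x) ^ (p - 1) ≤ L ^ (p - 1) * (T - t) ^ (-(γ * (p - 1))) := by
      refine (Real.rpow_le_rpow hw0.le hle hp1.le).trans (le_of_eq ?_)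
      rw [Real.mul_rpow hL.le (by positivity), ← Real.rpow_mul hs.le]
      congr 2; ring
    have hV0 := hV_nonneg x (hrρ hx)
    have hVη := hrV x hx
    rw [e1]
    calc C * V x * ((1 + u t x) ^ (p - 1) * (1 + u t x))
        ≤ C * η * ((L ^ (p - 1) * (T - t) ^ (-(γ * (p - 1)))) * (1 + u t x)) := by gcongr
      _ = _ := by ring
  have hlapw : ∀ t ∈ Ioo 0 T, ∀ x ∈ ball x₀ ρ, lap (fun y => 1 + u t y) x = lap (fun y => u t y) x := by
    intro t ht x hx
    have := S14.lap_add (f := fun _ => (1 : ℝ)) contDiffAt_const (hu_x t ht x hx)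
    rw [this, S14.lap_const, zero_add]
  have hderw : ∀ t x, deriv (fun s => 1 + u s x) t = deriv (fun s => u s x) t := fun t x =>
    deriv_const_add _
  -- step 1
  obtain ⟨K₁, hK₁, hstep1⟩ := S14.key2 (n := n) (x₀ := x₀) (a := 0) (T := T) (b := T / 4)
    (w := fun t x => 1 + u t x) (r := r) (M := M1) (β := α) (G := T ^ (α / 2))
    (g := fun t => (T - t) ^ (α / 2)) (c := fun t => α / 2 * (T - t)⁻¹) hr0 hα0 hM10 (by linarith)
    (by positivity)
    (fun t ht => Real.rpow_pos_of_pos (hsT t ht) _)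
    (fun t ht => Real.rpow_le_rpow (hsT t ht).le (by linarith [ht.1]) (by positivity))
    (fun t ht => by
      have hs := hsT t ht
      have h1 : HasDerivAt (fun t => T - t) (-1) t := (hasDerivAt_id t).const_sub T
      refine (h1.rpow_const (p := α / 2) (Or.inl hs.ne')).congr_deriv ?_
      rw [Real.rpow_sub_one hs.ne']
      field_simp)
    (fun t ht x hx => by linarith [hu_nonneg t ht x (hrρ hx)])
    (fun t ht x hx => hwb t ht x (hrρ hx))
    (fun t ht x hx => (hu_t t ht x (hrρ hx)).const_add 1)
    (fun t ht x hx => contDiffAt_const.add (hu_x t ht x (hrρ hx)))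
    (fun t ht x hx => by
      rw [hderw, hlapw t ht x (hrρ hx)]
      have h1 := hineq t ht x (hrρ hx)
      have h2 := hreact t ht x hx M1 α hM10 (hwb t ht x (hrρ hx))
      have h3 : C * η * M1 ^ (p - 1) = α / 2 := by
        have : 0 < M1 ^ (p - 1) := by positivity
        rw [hη]; field_simp
      rw [hαp, h3, Real.rpow_neg_one] at h2
      linarith)
  have hsub2 : ∀ t ∈ Ioo (T / 4) T, t ∈ Ioo 0 T := fun t ht => ⟨by linarith [ht.1], ht.2⟩
  have hrr : ball x₀ (r / 4) ⊆ ball x₀ r := ball_subset_ball (by linarith)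
  have hwb2 : ∀ t ∈ Ioo (T / 4) T, ∀ x ∈ ball x₀ (r / 4), 1 + u t x ≤ K₁ * (T - t) ^ (-(α / 2)) := by
    intro t ht x hx
    have hs := hsT t (hsub2 t ht)
    have := hstep1 t ht x hx
    rw [Real.rpow_neg hs.le, ← div_eq_mul_inv, le_div_iff₀ (by positivity), mul_comm]
    exact this
  set K' := C * η * K₁ ^ (p - 1) with hK'
  have hK'0 : 0 < K' := by positivity
  -- step 2
  obtain ⟨K₂, hK₂, hstep2⟩ := S14.key2 (n := n) (x₀ := x₀) (a := T / 4) (T := T) (b := T / 2)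
    (w := fun t x => 1 + u t x) (r := r / 4) (M := K₁) (β := α / 2) (G := Real.exp (2 * K' * T ^ (1 / 2 : ℝ)))
    (g := fun t => Real.exp (2 * K' * (T - t) ^ (1 / 2 : ℝ))) (c := fun t => K' * (T - t) ^ (-(1 / 2) : ℝ))
    (by positivity) (by positivity) hK₁ (by linarith)
    (by positivity)
    (fun t ht => Real.exp_pos _)
    (fun t ht => by
      have hs := hsT t (hsub2 t ht)
      have : T - t ≤ T := by linarith [ht.1]
      gcongr)
    (fun t ht => by
      have hs := hsT t (hsub2 t ht)
      have h1 : HasDerivAt (fun t => T - t) (-1) t := (hasDerivAt_id t).const_sub T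
      refine ((h1.rpow_const (p := (1 / 2 : ℝ)) (Or.inl hs.ne')).const_mul (2 * K')).exp.congr_deriv ?_
      rw [show (1 / 2 : ℝ) - 1 = -(1 / 2) by norm_num]
      ring)
    (fun t ht x hx => by linarith [hu_nonneg t (hsub2 t ht) x (hrρ (hrr hx))])
    hwb2
    (fun t ht x hx => (hu_t t (hsub2 t ht) x (hrρ (hrr hx))).const_add 1)
    (fun t ht x hx => contDiffAt_const.add (hu_x t (hsub2 t ht) x (hrρ (hrr hx))))
    (fun t ht x hx => by
      have ht' := hsub2 t ht
      have hx' := hrr hx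
      rw [hderw, hlapw t ht' x (hrρ hx')]
      have h1 := hineq t ht' x (hrρ hx')
      have h2 := hreact t ht' x hx' K₁ (α / 2) hK₁ (hwb2 t ht x hx)
      rw [show α / 2 * (p - 1) = 1 / 2 by linarith, ← hK'] at h2
      linarith)
  refine ⟨r / 4 / 4, by positivity, ?_, K₂, hK₂, ?_⟩
  · have : r ≤ ρ := min_le_right _ _
    linarith
  · intro t ht x hx
    have ht' : t ∈ Ioo 0 T := ⟨by linarith [ht.1], ht.2⟩
    have hs := hsT t ht'
    have hx' : x ∈ ball x₀ ρ := hrρ (hrr (ball_subset_ball (by linarith) hx))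
    have h1 := hstep2 t ht x hx
    have h2 : 1 ≤ Real.exp (2 * K' * (T - t) ^ (1 / 2 : ℝ)) := Real.one_le_exp (by positivity)
    have h3 := hu_nonneg t ht' x hx'
    have h4 : 1 * (1 + u t x) ≤ Real.exp (2 * K' * (T - t) ^ (1 / 2 : ℝ)) * (1 + u t x) :=
      mul_le_mul_of_nonneg_right h2 (by linarith)
    linarith
end
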